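/- There is θ₀ > 0 such that for every θ ∈ (0,θ₀) there exists a constant C = C(θ) with the following property: for all μ ∈ (0,1], all T > 0, and all u, F : [0,T] → 𝓢(ℝ²) with t ↦ u(t) a C¹ curve in the Schwartz space, F continuous, and i∂_t u − (1/√μ) m_2(√μ D) u = F on [0,T], one has (∫_0^T ‖u(t)‖_{L^∞(ℝ²)}^2 dt)^{1/2} ≤ C [ μ^{−1/6+5θ/36} T^{1/6+5θ/18} ( sup_{t∈[0,T]} ‖J^θ u(t)‖_{L^2} + sup_{t∈[0,T]} ‖|D|^{1/2−θ/3} J^{2θ} J_μ^{3/4} u(t)‖_{L^2} ) + μ^{−1/3+θ/9} T^{1/3+2θ/9} ( ∫_0^T ‖|D|^{−1/2−θ/3} J^θ J_μ^{3/4} F(t)‖_{L^2}^2 dt )^{1/2} ]. -/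

import Mathlib

noncomputable section

open MeasureTheory SchwartzMap
open scoped FourierTransform ENNReal

/-- The plane `ℝ²` as a Euclidean space. -/
abbrev E2 := EuclideanSpace ℝ (Fin 2)

/-- The Japanese bracket `⟨x⟩ = (1 + x²)^{1/2}`. -/
def jap (x : ℝ) : ℝ := (1 + x ^ 2) ^ ((1 : ℝ) / 2)

/-- The symbol `m₂(ξ) = |ξ| (tanh|ξ|/|ξ|)^{1/2}`, with `m₂(0) = 0`. -/
def m2 (ξ : E2) : ℝ :=
  if ‖ξ‖ = 0 then 0 else ‖ξ‖ * Real.sqrt (Real.tanh ‖ξ‖ / ‖ξ‖)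

/-- Generic Fourier multiplier `a(D) g = (a(ξ) ĝ(ξ))^∨` with real symbol `a` on `ℝ²`. -/
def fmul2 (a : E2 → ℝ) (g : E2 → ℂ) : E2 → ℂ :=
  𝓕⁻ (fun ξ : E2 => ((a ξ : ℝ) : ℂ) * 𝓕 g ξ)

/-- The operator `(1/√μ) m₂(√μ D)`. -/
def whithamOp2 (μ : ℝ) (g : E2 → ℂ) : E2 → ℂ :=
  fmul2 (fun ξ => (1 / Real.sqrt μ) * m2 (Real.sqrt μ • ξ)) g



lemma vdc1 {φ φ' φ'' : ℝ → ℝ} {a b l : ℝ} (hab : a ≤ b) (hl : 0 < l)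
    (h1 : ∀ x ∈ Set.Icc a b, HasDerivAt φ (φ' x) x)
    (h2 : ∀ x ∈ Set.Icc a b, HasDerivAt φ' (φ'' x) x)
    (hc : ContinuousOn φ'' (Set.Icc a b))
    (hs : ∀ x ∈ Set.Icc a b, 0 ≤ φ'' x)
    (hb : ∀ x ∈ Set.Icc a b, l ≤ |φ' x|) :
    ‖∫ x in a..b, Complex.exp (Complex.I * (φ x : ℂ))‖ ≤ 4 / l := by
  have hne : ∀ x ∈ Set.Icc a b, φ' x ≠ 0 := fun x hx h => by
    have := hb x hx; rw [h, abs_zero] at this; linarith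
  have hu : Set.uIcc a b = Set.Icc a b := Set.uIcc_of_le hab
  have hcφ' : ContinuousOn φ' (Set.Icc a b) := fun x hx =>
    (h2 x hx).continuousAt.continuousWithinAt
  have hcφ : ContinuousOn φ (Set.Icc a b) := fun x hx =>
    (h1 x hx).continuousAt.continuousWithinAt
  have hw : ContinuousOn (fun x => φ'' x / (φ' x) ^ 2) (Set.Icc a b) :=
    hc.div (hcφ'.pow 2) (fun x hx => pow_ne_zero 2 (hne x hx))
  have hd : ∀ x ∈ Set.uIcc a b, HasDerivAt (fun x => (φ' x)⁻¹) (-(φ'' x) / (φ' x)^2) x := by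
    intro x hx; rw [hu] at hx
    exact (h2 x hx).inv (hne x hx)
  have hdC : ∀ x ∈ Set.uIcc a b, HasDerivAt (fun x => (((φ' x)⁻¹ : ℝ) : ℂ))
      ((-(φ'' x) / (φ' x)^2 : ℝ) : ℂ) x := fun x hx => (hd x hx).ofReal_comp
  have hv : ∀ x ∈ Set.uIcc a b, HasDerivAt (fun x => Complex.exp (Complex.I * (φ x : ℂ)))
      (Complex.exp (Complex.I * (φ x : ℂ)) * (Complex.I * (φ' x : ℂ))) x := by
    intro x hx; rw [hu] at hx
    exact (((h1 x hx).ofReal_comp).const_mul Complex.I).cexp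
  have hce : ContinuousOn (fun x => Complex.exp (Complex.I * (φ x : ℂ))) (Set.Icc a b) := by
    fun_prop
  have hw' : ContinuousOn (fun x => -(φ'' x) / (φ' x) ^ 2) (Set.Icc a b) := by
    have := hw.neg
    refine this.congr fun x hx => by simp [neg_div]
  have key := intervalIntegral.integral_mul_deriv_eq_deriv_mul hdC hv
    (by apply ContinuousOn.intervalIntegrable; rw [hu]
        exact Complex.continuous_ofReal.comp_continuousOn hw')
    (by apply ContinuousOn.intervalIntegrable; rw [hu]; fun_prop)
  have e1 : ∫ x in a..b, (((φ' x)⁻¹ : ℝ) : ℂ) *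
      (Complex.exp (Complex.I * (φ x : ℂ)) * (Complex.I * (φ' x : ℂ)))
      = Complex.I * ∫ x in a..b, Complex.exp (Complex.I * (φ x : ℂ)) := by
    rw [← intervalIntegral.integral_const_mul]
    apply intervalIntegral.integral_congr
    intro x hx; rw [hu] at hx
    have : (φ' x : ℂ) ≠ 0 := by exact_mod_cast hne x hx
    simp only [Complex.ofReal_inv]
    field_simp
  have nrm : ∀ x, ‖Complex.exp (Complex.I * (φ x : ℂ))‖ = 1 := fun x => by
    rw [mul_comm]; exact Complex.norm_exp_ofReal_mul_I _
  have e2 : ‖∫ x in a..b, ((-(φ'' x) / (φ' x)^2 : ℝ) : ℂ) * Complex.exp (Complex.I * (φ x : ℂ))‖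
      ≤ (φ' a)⁻¹ - (φ' b)⁻¹ := by
    calc _ ≤ ∫ x in a..b, φ'' x / (φ' x)^2 := by
          apply intervalIntegral.norm_integral_le_of_norm_le hab
          · refine Filter.Eventually.of_forall fun x hx => ?_
            rw [norm_mul, nrm, mul_one, Complex.norm_real, Real.norm_eq_abs, neg_div, abs_neg,
              abs_of_nonneg]
            exact div_nonneg (hs x ⟨hx.1.le, hx.2⟩) (sq_nonneg _)
          · apply ContinuousOn.intervalIntegrable; rw [hu]; exact hw
      _ = _ := by
          have := intervalIntegral.integral_eq_sub_of_hasDerivAt hd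
            (by apply ContinuousOn.intervalIntegrable; rw [hu]; exact hw')
          have h3 : ∫ x in a..b, φ'' x / (φ' x)^2 = - ∫ x in a..b, -(φ'' x) / (φ' x)^2 := by
            rw [← intervalIntegral.integral_neg]; congr 1; ext x; ring
          rw [h3, this]; ring
  have ia : |(φ' a)⁻¹| ≤ l⁻¹ := by
    rw [abs_inv]; exact inv_anti₀ hl (hb a ⟨le_rfl, hab⟩)
  have ib : |(φ' b)⁻¹| ≤ l⁻¹ := by
    rw [abs_inv]; exact inv_anti₀ hl (hb b ⟨hab, le_rfl⟩)
  rw [e1] at key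
  have : ‖Complex.I * ∫ x in a..b, Complex.exp (Complex.I * (φ x : ℂ))‖ ≤
     l⁻¹ + l⁻¹ + (l⁻¹ + l⁻¹) := by
    rw [key]
    refine (norm_sub_le _ _).trans (add_le_add ((norm_sub_le _ _).trans (add_le_add ?_ ?_)) (e2.trans ?_))
    · rw [norm_mul, nrm, mul_one, Complex.norm_real]; exact ib
    · rw [norm_mul, nrm, mul_one, Complex.norm_real]; exact ia
    · have := abs_le.1 ia; have := abs_le.1 ib; linarith
  rw [norm_mul, Complex.norm_I, one_mul] at this
  refine this.trans (le_of_eq ?_)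
  field_simp; norm_num

lemma norm_int_exp_le {φ : ℝ → ℝ} {a b : ℝ} (hab : a ≤ b) :
    ‖∫ x in a..b, Complex.exp (Complex.I * (φ x : ℂ))‖ ≤ b - a := by
  have := intervalIntegral.norm_integral_le_of_norm_le_const (a := a) (b := b) (C := 1)
    (f := fun x => Complex.exp (Complex.I * (φ x : ℂ))) (fun x _ => by
      rw [mul_comm]; exact (Complex.norm_exp_ofReal_mul_I _).le)
  rwa [one_mul, abs_of_nonneg (by linarith)] at this

lemma vdc2_pos {φ φ' φ'' : ℝ → ℝ} {a b l : ℝ} (hab : a ≤ b) (hl : 0 < l) (hφ : Continuous φ)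
    (h1 : ∀ x ∈ Set.Icc a b, HasDerivAt φ (φ' x) x)
    (h2 : ∀ x ∈ Set.Icc a b, HasDerivAt φ' (φ'' x) x)
    (hc : ContinuousOn φ'' (Set.Icc a b))
    (hs : ∀ x ∈ Set.Icc a b, l ^ 2 ≤ φ'' x)
    (hb : 0 ≤ φ' a ∨ φ' b ≤ 0) :
    ‖∫ x in a..b, Complex.exp (Complex.I * (φ x : ℂ))‖ ≤ 5 / l := by
  have hii : ∀ c d, IntervalIntegrable (fun x => Complex.exp (Complex.I * (φ x : ℂ))) volume c d :=
    fun c d => (by fun_prop : Continuous (fun x => Complex.exp (Complex.I * (φ x : ℂ)))).intervalIntegrable _ _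
  by_cases hba : b - a ≤ 1 / l
  · refine (norm_int_exp_le hab).trans (hba.trans ?_)
    gcongr; norm_num
  push Not at hba
  have hl' : 0 < 1 / l := by positivity
  have mono : ∀ x ∈ Set.Icc a b, ∀ y ∈ Set.Icc a b, x ≤ y → l ^ 2 * (y - x) ≤ φ' y - φ' x := by
    intro x hx y hy hxy
    refine (convex_Icc a b).mul_sub_le_image_sub_of_le_deriv (C := l ^ 2) (f := φ')
      (fun z hz => (h2 z hz).continuousAt.continuousWithinAt)
      (fun z hz => (h2 z (interior_subset hz)).differentiableAt.differentiableWithinAt)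
      (fun z hz => ?_) x hx y hy hxy
    rw [(h2 z (interior_subset hz)).deriv]; exact hs z (interior_subset hz)
  have hll : l ^ 2 * (1 / l) = l := by field_simp
  rcases hb with hb | hb
  · have hm : Set.Icc (a + 1/l) b ⊆ Set.Icc a b := Set.Icc_subset_Icc_left (by linarith)
    have A := vdc1 (φ := φ) (φ' := φ') (φ'' := φ'') (a := a + 1/l) (b := b) (by linarith) hl
      (fun x hx => h1 x (hm hx)) (fun x hx => h2 x (hm hx)) (hc.mono hm)
      (fun x hx => (sq_nonneg l).trans (hs x (hm hx))) (fun x hx => by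
        have := mono a ⟨le_rfl, hab⟩ x (hm hx) (hm hx).1
        have h3 : l ^ 2 * (1 / l) ≤ l ^ 2 * (x - a) :=
          mul_le_mul_of_nonneg_left (by linarith [hx.1]) (sq_nonneg l)
        exact (by linarith : l ≤ φ' x).trans (le_abs_self _))
    rw [← intervalIntegral.integral_add_adjacent_intervals (hii a (a+1/l)) (hii _ b)]
    refine (norm_add_le _ _).trans ((add_le_add (norm_int_exp_le (by linarith)) A).trans (le_of_eq ?_))
    field_simp; ring
  · have hm : Set.Icc a (b - 1/l) ⊆ Set.Icc a b := Set.Icc_subset_Icc_right (by linarith)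
    have A := vdc1 (φ := φ) (φ' := φ') (φ'' := φ'') (a := a) (b := b - 1/l) (by linarith) hl
      (fun x hx => h1 x (hm hx)) (fun x hx => h2 x (hm hx)) (hc.mono hm)
      (fun x hx => (sq_nonneg l).trans (hs x (hm hx))) (fun x hx => by
        have := mono x (hm hx) b ⟨hab, le_rfl⟩ (hm hx).2
        have h3 : l ^ 2 * (1 / l) ≤ l ^ 2 * (b - x) :=
          mul_le_mul_of_nonneg_left (by linarith [hx.2]) (sq_nonneg l)
        exact (by linarith : l ≤ - φ' x).trans (neg_le_abs _))
    rw [← intervalIntegral.integral_add_adjacent_intervals (hii a (b-1/l)) (hii _ b)]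
    refine (norm_add_le _ _).trans ((add_le_add A (norm_int_exp_le (by linarith))).trans (le_of_eq ?_))
    field_simp; ring

lemma vdc2 {φ φ' φ'' : ℝ → ℝ} {a b l : ℝ} (hab : a ≤ b) (hl : 0 < l) (hφ : Continuous φ)
    (h1 : ∀ x ∈ Set.Icc a b, HasDerivAt φ (φ' x) x)
    (h2 : ∀ x ∈ Set.Icc a b, HasDerivAt φ' (φ'' x) x)
    (hc : ContinuousOn φ'' (Set.Icc a b))
    (hs : ∀ x ∈ Set.Icc a b, l ^ 2 ≤ φ'' x) :
    ‖∫ x in a..b, Complex.exp (Complex.I * (φ x : ℂ))‖ ≤ 10 / l := by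
  have hii : ∀ c d, IntervalIntegrable (fun x => Complex.exp (Complex.I * (φ x : ℂ))) volume c d :=
    fun c d => (by fun_prop : Continuous (fun x => Complex.exp (Complex.I * (φ x : ℂ)))).intervalIntegrable _ _
  have h510 : 5 / l ≤ 10 / l := by gcongr; norm_num
  by_cases ha : 0 ≤ φ' a
  · exact (vdc2_pos hab hl hφ h1 h2 hc hs (Or.inl ha)).trans h510
  by_cases hb : φ' b ≤ 0
  · exact (vdc2_pos hab hl hφ h1 h2 hc hs (Or.inr hb)).trans h510
  push Not at ha hb
  have hcφ' : ContinuousOn φ' (Set.Icc a b) := fun x hx =>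
    (h2 x hx).continuousAt.continuousWithinAt
  obtain ⟨c, hcm, hc0⟩ := intermediate_value_Icc hab hcφ' (show (0:ℝ) ∈ Set.Icc (φ' a) (φ' b) from ⟨ha.le, hb.le⟩)
  have m1 : Set.Icc a c ⊆ Set.Icc a b := Set.Icc_subset_Icc_right hcm.2
  have m2 : Set.Icc c b ⊆ Set.Icc a b := Set.Icc_subset_Icc_left hcm.1
  rw [← intervalIntegral.integral_add_adjacent_intervals (hii a c) (hii c b)]
  refine (norm_add_le _ _).trans ((add_le_add
    (vdc2_pos hcm.1 hl hφ (fun x hx => h1 x (m1 hx)) (fun x hx => h2 x (m1 hx)) (hc.mono m1)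
      (fun x hx => hs x (m1 hx)) (Or.inr hc0.le))
    (vdc2_pos hcm.2 hl hφ (fun x hx => h1 x (m2 hx)) (fun x hx => h2 x (m2 hx)) (hc.mono m2)
      (fun x hx => hs x (m2 hx)) (Or.inl hc0.ge))).trans (le_of_eq ?_))
  ring

lemma vdc_amp {φ : ℝ → ℝ} {g g' : ℝ → ℂ} {a b B D₀ D : ℝ} (hab : a ≤ b) (hφ : Continuous φ)
    (hg : ∀ x ∈ Set.Icc a b, HasDerivAt g (g' x) x) (hg' : ContinuousOn g' (Set.Icc a b))
    (hB : ∀ x ∈ Set.Icc a b, ‖∫ y in a..x, Complex.exp (Complex.I * (φ y : ℂ))‖ ≤ B)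
    (h0 : ‖g b‖ ≤ D₀) (hD : ∀ x ∈ Set.Icc a b, ‖g' x‖ ≤ D) :
    ‖∫ x in a..b, g x * Complex.exp (Complex.I * (φ x : ℂ))‖ ≤ B * (D₀ + D * (b - a)) := by
  have hu : Set.uIcc a b = Set.Icc a b := Set.uIcc_of_le hab
  have hce : Continuous (fun x => Complex.exp (Complex.I * (φ x : ℂ))) := by fun_prop
  have hB0 : 0 ≤ B := (norm_nonneg _).trans (hB a ⟨le_rfl, hab⟩)
  have hG : ∀ x ∈ Set.uIcc a b, HasDerivAt (fun x => ∫ y in a..x, Complex.exp (Complex.I * (φ y : ℂ)))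
      (Complex.exp (Complex.I * (φ x : ℂ))) x := fun x _ =>
    intervalIntegral.integral_hasDerivAt_right (hce.intervalIntegrable _ _)
      hce.stronglyMeasurable.stronglyMeasurableAtFilter hce.continuousAt
  have key := intervalIntegral.integral_mul_deriv_eq_deriv_mul
    (fun x hx => hg x (hu ▸ hx)) hG
    (by apply ContinuousOn.intervalIntegrable; rw [hu]; exact hg')
    (hce.intervalIntegrable _ _)
  rw [key]
  simp only [intervalIntegral.integral_same, mul_zero, sub_zero]
  refine (norm_sub_le _ _).trans ?_
  have e1 : ‖g b * ∫ y in a..b, Complex.exp (Complex.I * (φ y : ℂ))‖ ≤ D₀ * B := by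
    rw [norm_mul]
    exact mul_le_mul h0 (hB b ⟨hab, le_rfl⟩) (norm_nonneg _) ((norm_nonneg _).trans h0)
  have e2 : ‖∫ x in a..b, g' x * ∫ y in a..x, Complex.exp (Complex.I * (φ y : ℂ))‖ ≤ D * B * |b - a| := by
    apply intervalIntegral.norm_integral_le_of_norm_le_const
    intro x hx
    rw [Set.uIoc_of_le hab] at hx
    have hx' : x ∈ Set.Icc a b := ⟨hx.1.le, hx.2⟩
    rw [norm_mul]
    exact mul_le_mul (hD x hx') (hB x hx') (norm_nonneg _) ((norm_nonneg _).trans (hD x hx'))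
  rw [abs_of_nonneg (by linarith)] at e2
  nlinarith



def bes (z : ℝ) : ℝ := ∫ θ in (-Real.pi)..Real.pi, Real.cos (z * Real.cos θ)
def bes1 (z : ℝ) : ℝ := ∫ θ in (-Real.pi)..Real.pi, -(Real.sin (z * Real.cos θ) * Real.cos θ)

lemma bes_hasDerivAt (z : ℝ) : HasDerivAt bes (bes1 z) z := by
  refine (intervalIntegral.hasDerivAt_integral_of_dominated_loc_of_deriv_le
    (F := fun z θ => Real.cos (z * Real.cos θ))
    (F' := fun z θ => -(Real.sin (z * Real.cos θ) * Real.cos θ)) (bound := fun _ => 1)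
    (s := Set.univ) Filter.univ_mem
    (Filter.Eventually.of_forall fun x => (by fun_prop : Continuous _).aestronglyMeasurable)
    ((by fun_prop : Continuous _).intervalIntegrable _ _)
    ((by fun_prop : Continuous _).aestronglyMeasurable)
    (Filter.Eventually.of_forall fun θ _ x _ => ?_)
    (continuous_const.intervalIntegrable _ _)
    (Filter.Eventually.of_forall fun θ _ x _ => ?_)).2
  · rw [norm_neg, norm_mul, Real.norm_eq_abs, Real.norm_eq_abs]
    exact mul_le_one₀ (Real.abs_sin_le_one _) (abs_nonneg _) (Real.abs_cos_le_one _)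
  · have := ((hasDerivAt_id x).mul_const (Real.cos θ)).cos
    simpa [neg_mul] using this

def bes2 (z : ℝ) : ℝ := ∫ θ in (-Real.pi)..Real.pi, -(Real.cos (z * Real.cos θ) * Real.cos θ * Real.cos θ)

lemma bes1_hasDerivAt' (z : ℝ) : HasDerivAt bes1 (bes2 z) z := by
  refine (intervalIntegral.hasDerivAt_integral_of_dominated_loc_of_deriv_le
    (F := fun z θ => -(Real.sin (z * Real.cos θ) * Real.cos θ))
    (F' := fun z θ => -(Real.cos (z * Real.cos θ) * Real.cos θ * Real.cos θ)) (bound := fun _ => 1)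
    (s := Set.univ) Filter.univ_mem
    (Filter.Eventually.of_forall fun x => (by fun_prop : Continuous _).aestronglyMeasurable)
    ((by fun_prop : Continuous _).intervalIntegrable _ _)
    ((by fun_prop : Continuous _).aestronglyMeasurable)
    (Filter.Eventually.of_forall fun θ _ x _ => ?_)
    (continuous_const.intervalIntegrable _ _)
    (Filter.Eventually.of_forall fun θ _ x _ => ?_)).2
  · rw [norm_neg, norm_mul, norm_mul, Real.norm_eq_abs, Real.norm_eq_abs]
    exact mul_le_one₀ (mul_le_one₀ (Real.abs_cos_le_one _) (abs_nonneg _) (Real.abs_cos_le_one _)) (abs_nonneg _) (Real.abs_cos_le_one _)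
  · have := (((hasDerivAt_id x).mul_const (Real.cos θ)).sin.mul_const (Real.cos θ)).neg
    refine HasDerivAt.congr_deriv (f := fun x => -(Real.sin (x * Real.cos θ) * Real.cos θ)) this ?_
    simp

lemma bes_ode (z : ℝ) : z * (bes z + bes2 z) = - bes1 z := by
  have h : ∫ θ in (-Real.pi)..Real.pi, (Real.cos θ * Real.sin (z * Real.cos θ) +
      Real.sin θ * (Real.cos (z * Real.cos θ) * (z * - Real.sin θ))) = 0 := by
    have := intervalIntegral.integral_eq_sub_of_hasDerivAt (a := -Real.pi) (b := Real.pi)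
      (f := fun θ => Real.sin θ * Real.sin (z * Real.cos θ))
      (f' := fun θ => Real.cos θ * Real.sin (z * Real.cos θ) +
        Real.sin θ * (Real.cos (z * Real.cos θ) * (z * - Real.sin θ)))
      (fun θ _ => (Real.hasDerivAt_sin θ).mul (((Real.hasDerivAt_cos θ).const_mul z).sin))
      ((by fun_prop : Continuous _).intervalIntegrable _ _)
    rw [this]; simp
  have e : z * (bes z + bes2 z) + bes1 z = - ∫ θ in (-Real.pi)..Real.pi, (Real.cos θ * Real.sin (z * Real.cos θ) +
      Real.sin θ * (Real.cos (z * Real.cos θ) * (z * - Real.sin θ))) := by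
    unfold bes bes1 bes2
    rw [← intervalIntegral.integral_add ((by fun_prop : Continuous _).intervalIntegrable _ _)
       ((by fun_prop : Continuous _).intervalIntegrable _ _),
       ← intervalIntegral.integral_const_mul,
       ← intervalIntegral.integral_add ((by fun_prop : Continuous _).intervalIntegrable _ _)
       ((by fun_prop : Continuous _).intervalIntegrable _ _), ← intervalIntegral.integral_neg]
    congr 1; ext θ
    have := Real.sin_sq θ
    linear_combination (-z * Real.cos (z * Real.cos θ)) * this
  rw [h] at e
  linarith

lemma bes1_hasDerivAt {z : ℝ} (hz : 0 < z) : HasDerivAt bes1 (-(bes z) - bes1 z / z) z := by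
  have := bes1_hasDerivAt' z
  have h := bes_ode z
  convert this using 1
  field_simp
  linarith

lemma abs_bes_le (z : ℝ) : |bes z| ≤ 2 * Real.pi := by
  have := intervalIntegral.norm_integral_le_of_norm_le_const (a := -Real.pi) (b := Real.pi) (C := 1)
    (f := fun θ => Real.cos (z * Real.cos θ)) (fun x _ => Real.abs_cos_le_one _)
  rw [Real.norm_eq_abs, one_mul, abs_of_nonneg (a := Real.pi - -Real.pi) (by linarith [Real.pi_pos])] at this
  unfold bes; linarith

def besw (z : ℝ) : ℝ := Real.sqrt z * bes z
def besw1 (z : ℝ) : ℝ := bes z / (2 * Real.sqrt z) + Real.sqrt z * bes1 z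

lemma besw_hasDerivAt {z : ℝ} (hz : 0 < z) : HasDerivAt besw (besw1 z) z := by
  have := (Real.hasDerivAt_sqrt hz.ne').mul (bes_hasDerivAt z)
  refine HasDerivAt.congr_deriv (f := besw) this ?_
  unfold besw1; ring

lemma besw1_hasDerivAt {z : ℝ} (hz : 0 < z) :
    HasDerivAt besw1 (-(1 + 1 / (4 * z ^ 2)) * besw z) z := by
  have hs : 0 < Real.sqrt z := Real.sqrt_pos.2 hz
  have := ((bes_hasDerivAt z).div ((Real.hasDerivAt_sqrt hz.ne').const_mul 2) (by positivity)).add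
    ((Real.hasDerivAt_sqrt hz.ne').mul (bes1_hasDerivAt hz))
  refine HasDerivAt.congr_deriv (f := besw1) this ?_
  unfold besw
  have h : z = Real.sqrt z ^ 2 := (Real.sq_sqrt hz.le).symm
  set s := Real.sqrt z
  rw [h]
  field_simp
  ring

def besb (z : ℝ) : ℂ := ((besw z : ℂ) - Complex.I * (besw1 z : ℂ)) * Complex.exp (-(Complex.I * (z : ℂ)))
def besb' (z : ℝ) : ℂ := Complex.I * (besw z : ℂ) / (4 * (z : ℂ) ^ 2) * Complex.exp (-(Complex.I * (z : ℂ)))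

lemma besb_hasDerivAt {z : ℝ} (hz : 0 < z) : HasDerivAt besb (besb' z) z := by
  have h1 := (besw_hasDerivAt hz).ofReal_comp
  have h2 := (besw1_hasDerivAt hz).ofReal_comp
  have h3 : HasDerivAt (fun z : ℝ => Complex.exp (-(Complex.I * (z : ℂ))))
      (Complex.exp (-(Complex.I * (z : ℂ))) * (-(Complex.I * 1))) z :=
    ((((hasDerivAt_id z).ofReal_comp).const_mul Complex.I).neg).cexp
  have := (h1.sub (h2.const_mul Complex.I)).mul h3
  refine HasDerivAt.congr_deriv (f := besb) this ?_
  unfold besb'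
  have hz' : (z : ℂ) ≠ 0 := by exact_mod_cast hz.ne'
  push_cast
  field_simp
  simp only [Pi.sub_apply]
  linear_combination (4 * z ^ 2 * (besw1 z : ℂ)) * Complex.I_sq

lemma norm_cexp_neg (z : ℝ) : ‖Complex.exp (-(Complex.I * (z : ℂ)))‖ = 1 := by
  have := Complex.norm_exp_ofReal_mul_I (-z)
  rwa [show ((-z : ℝ) : ℂ) * Complex.I = -(Complex.I * (z : ℂ)) by push_cast; ring] at this

lemma norm_besb' (z : ℝ) : ‖besb' z‖ = |besw z| / (4 * z ^ 2) := by
  unfold besb'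
  rw [norm_mul, norm_cexp_neg, norm_div, norm_mul, Complex.norm_I, Complex.norm_real]
  simp

lemma abs_besw_le_besb (z : ℝ) : |besw z| ≤ ‖besb z‖ := by
  unfold besb
  rw [norm_mul, norm_cexp_neg, mul_one]
  have := Complex.abs_re_le_norm ((besw z : ℂ) - Complex.I * (besw1 z : ℂ))
  simpa using this

lemma besb_bound : ∃ C : ℝ, 0 < C ∧ ∀ z : ℝ, 1 ≤ z → ‖besb z‖ ≤ C := by
  refine ⟨‖besb 1‖ + Real.pi, by have := norm_nonneg (besb 1); linarith [Real.pi_pos], fun z hz => ?_⟩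
  have key := image_norm_le_of_norm_deriv_right_le_deriv_boundary' (a := 1) (b := z)
    (f := besb) (f' := besb') (B := fun y => ‖besb 1‖ + Real.pi - Real.pi * (Real.sqrt y)⁻¹)
    (B' := fun y => Real.pi * ((1 / (2 * Real.sqrt y)) / (Real.sqrt y) ^ 2))
    (fun y hy => (besb_hasDerivAt (by linarith [hy.1])).continuousAt.continuousWithinAt)
    (fun y hy => (besb_hasDerivAt (by linarith [hy.1])).hasDerivWithinAt)
    (by simp)
    (fun y hy => by
      have hy0 : 0 < y := by linarith [hy.1]
      have := (((Real.hasDerivAt_sqrt hy0.ne').inv (Real.sqrt_pos.2 hy0).ne').const_mul Real.pi).const_sub (‖besb 1‖ + Real.pi)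
      exact (HasDerivAt.continuousAt (f := fun y => ‖besb 1‖ + Real.pi - Real.pi * (Real.sqrt y)⁻¹) this).continuousWithinAt)
    (fun y hy => by
      have hy0 : 0 < y := by linarith [hy.1]
      have := (((Real.hasDerivAt_sqrt hy0.ne').inv (Real.sqrt_pos.2 hy0).ne').const_mul Real.pi).const_sub (‖besb 1‖ + Real.pi)
      refine HasDerivAt.hasDerivWithinAt (HasDerivAt.congr_deriv (f := fun y => ‖besb 1‖ + Real.pi - Real.pi * (Real.sqrt y)⁻¹) this ?_)
      ring)
    (fun y hy => by
      have hy0 : 0 < y := by linarith [hy.1]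
      have hs : 0 < Real.sqrt y := Real.sqrt_pos.2 hy0
      rw [norm_besb' y]
      have h1 : |besw y| ≤ Real.sqrt y * (2 * Real.pi) := by
        unfold besw; rw [abs_mul, abs_of_pos hs]
        exact mul_le_mul_of_nonneg_left (abs_bes_le y) hs.le
      have h : y = Real.sqrt y ^ 2 := (Real.sq_sqrt hy0.le).symm
      calc _ ≤ Real.sqrt y * (2 * Real.pi) / (4 * y ^ 2) := by gcongr
        _ = _ := by
          set s := Real.sqrt y
          rw [h]; field_simp; norm_num)
  have := key (x := z) ⟨hz, le_rfl⟩
  have h2 : 0 ≤ Real.pi * (Real.sqrt z)⁻¹ := by positivity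
  linarith

lemma bes_repr {z : ℝ} (hz : 0 < z) : (bes z : ℂ) = ((Real.sqrt z)⁻¹ / 2 : ℝ) *
    (besb z * Complex.exp (Complex.I * (z : ℂ)) +
      (starRingEnd ℂ) (besb z) * Complex.exp (-(Complex.I * (z : ℂ)))) := by
  have hs : (Real.sqrt z : ℂ) ≠ 0 := by exact_mod_cast (Real.sqrt_pos.2 hz).ne'
  unfold besb
  simp only [map_mul, map_sub, Complex.conj_ofReal, Complex.conj_I, ← Complex.exp_conj, map_neg]
  have : Complex.exp (Complex.I * (z : ℂ)) * Complex.exp (-(Complex.I * (z : ℂ))) = 1 := by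
    rw [← Complex.exp_add]; simp
  rw [show -(-Complex.I * (z:ℂ)) = Complex.I * z by ring]
  have e : (besw z : ℂ) = Real.sqrt z * bes z := by unfold besw; push_cast; rfl
  push_cast
  calc (bes z : ℂ) = (Real.sqrt z : ℂ)⁻¹ * besw z := by rw [e]; field_simp
    _ = _ := by linear_combination (-(Real.sqrt z : ℂ)⁻¹ * besw z) * this



def mm (s : ℝ) : ℝ := Real.sqrt (s * Real.tanh s)
def mm1 (s : ℝ) : ℝ := (Real.tanh s + s * (1 - Real.tanh s ^ 2)) / (2 * mm s)
def mm2 (s : ℝ) : ℝ := -((Real.tanh s - s * (1 - Real.tanh s ^ 2)) ^ 2 +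
  4 * s ^ 2 * Real.tanh s ^ 2 * (1 - Real.tanh s ^ 2)) / (4 * mm s ^ 3)

lemma tanh_hasDerivAt (s : ℝ) : HasDerivAt Real.tanh (1 - Real.tanh s ^ 2) s := by
  have hc := (Real.cosh_pos s).ne'
  have := (Real.hasDerivAt_sinh s).div (Real.hasDerivAt_cosh s) hc
  have e : Real.tanh = Real.sinh / Real.cosh := by
    ext x; simp [Real.tanh_eq_sinh_div_cosh]
  rw [e]
  refine this.congr_deriv ?_
  simp only [Pi.div_apply]
  field_simp

lemma sig_eq (s : ℝ) : 1 - Real.tanh s ^ 2 = 1 / Real.cosh s ^ 2 := by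
  have hc := (Real.cosh_pos s).ne'
  rw [Real.tanh_eq_sinh_div_cosh]
  have := Real.cosh_sq s
  field_simp
  linarith

lemma tanh_lower {s : ℝ} (hs : 0 < s) : s / (1 + s) ≤ Real.tanh s := by
  rw [Real.tanh_eq_sinh_div_cosh, div_le_div_iff₀ (by linarith) (Real.cosh_pos s)]
  have h1 : s ≤ Real.sinh s := Real.self_le_sinh_iff.2 hs.le
  have h2 : Real.cosh s - Real.sinh s = Real.exp (-s) := Real.cosh_sub_sinh s
  have h3 : Real.exp (-s) ≤ 1 := Real.exp_le_one_iff.2 (by linarith)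
  nlinarith

lemma tanh_pos' {s : ℝ} (hs : 0 < s) : 0 < Real.tanh s :=
  lt_of_lt_of_le (by positivity) (tanh_lower hs)

lemma tanh_le_one' (s : ℝ) : Real.tanh s ≤ 1 := by
  have := sig_eq s
  have h : 0 < 1 / Real.cosh s ^ 2 := by have := Real.cosh_pos s; positivity
  nlinarith

lemma mm_pos {s : ℝ} (hs : 0 < s) : 0 < mm s := Real.sqrt_pos.2 (mul_pos hs (tanh_pos' hs))

lemma mm_sq {s : ℝ} (hs : 0 < s) : mm s ^ 2 = s * Real.tanh s :=
  Real.sq_sqrt (mul_pos hs (tanh_pos' hs)).le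

lemma continuous_tanh' : Continuous Real.tanh :=
  continuous_iff_continuousAt.2 fun x => (tanh_hasDerivAt x).continuousAt

lemma continuous_mm : Continuous mm := by
  have := continuous_tanh'
  unfold mm; fun_prop

lemma mm_hasDerivAt {s : ℝ} (hs : 0 < s) : HasDerivAt mm (mm1 s) s := by
  have := ((hasDerivAt_id s).mul (tanh_hasDerivAt s)).sqrt (mul_pos hs (tanh_pos' hs)).ne'
  refine HasDerivAt.congr_deriv (f := mm) this ?_
  simp [mm1, mm]

lemma mm1_hasDerivAt {s : ℝ} (hs : 0 < s) : HasDerivAt mm1 (mm2 s) s := by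
  have hm := mm_pos hs
  have hsq := mm_sq hs
  have h1 := ((tanh_hasDerivAt s).add ((hasDerivAt_id s).mul (((tanh_hasDerivAt s).pow 2).const_sub 1))).div
    ((mm_hasDerivAt hs).const_mul 2) (by positivity)
  refine HasDerivAt.congr_deriv (f := mm1) h1 ?_
  simp [mm2, mm1]
  field_simp
  rw [hsq]
  ring

lemma mm1_lower {s : ℝ} (hs : 0 < s) : (1 / 2) / Real.sqrt (1 + s) ≤ mm1 s := by
  have hm := mm_pos hs
  have ht := tanh_lower hs
  have ht0 := tanh_pos' hs
  have hsq := mm_sq hs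
  have hq : 0 < Real.sqrt (1 + s) := Real.sqrt_pos.2 (by linarith)
  have hsg : 0 < 1 - Real.tanh s ^ 2 := by rw [sig_eq]; have := Real.cosh_pos s; positivity
  have h1 : mm s ≤ Real.tanh s * Real.sqrt (1 + s) := by
    unfold mm
    rw [Real.sqrt_le_left (by positivity), mul_pow, Real.sq_sqrt (by linarith)]
    rw [div_le_iff₀ (by linarith)] at ht
    nlinarith
  unfold mm1
  rw [div_le_div_iff₀ hq (by positivity)]
  have : 0 < s * (1 - Real.tanh s ^ 2) * Real.sqrt (1 + s) := by positivity
  nlinarith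

lemma cosh_lower (s : ℝ) : 1 + s ^ 2 / 2 ≤ Real.cosh s := by
  have h := Real.cosh_two_mul (s / 2)
  have h2 := Real.cosh_sq (s / 2)
  rw [mul_div_cancel₀ s (two_ne_zero)] at h
  have h3 : (s / 2) ^ 2 ≤ Real.sinh (s/2) ^ 2 := by
    rw [sq_le_sq, Real.abs_sinh]
    exact Real.self_le_sinh_iff.2 (abs_nonneg _)
  nlinarith

/-- lower bound for the curvature -/
lemma mm2_lower {s : ℝ} (hs : 0 < s) : (1 / 1600) * s / Real.sqrt (1 + s) ^ 5 ≤ - mm2 s := by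
  have hm := mm_pos hs
  have ht := tanh_lower hs
  have ht0 := tanh_pos' hs
  have ht1 := tanh_le_one' s
  have hsq := mm_sq hs
  have hq : 0 < Real.sqrt (1 + s) := Real.sqrt_pos.2 (by linarith)
  have hq1 : 1 ≤ Real.sqrt (1 + s) := Real.one_le_sqrt.2 (by linarith)
  have hqs : Real.sqrt (1 + s) ^ 2 = 1 + s := Real.sq_sqrt (by linarith)
  have hsg : 0 < 1 - Real.tanh s ^ 2 := by rw [sig_eq]; have := Real.cosh_pos s; positivity
  have e : - mm2 s = ((Real.tanh s - s * (1 - Real.tanh s ^ 2)) ^ 2 +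
    4 * s ^ 2 * Real.tanh s ^ 2 * (1 - Real.tanh s ^ 2)) / (4 * mm s ^ 3) := by
    unfold mm2; ring
  rw [e]
  rcases le_total s 1 with h1 | h1
  · -- small s
    have hsig : 1 / 3 ≤ 1 - Real.tanh s ^ 2 := by
      rw [sig_eq]
      have hc := Real.cosh_pos s
      have h2 : Real.cosh s ^ 2 ≤ 3 := by
        have h3 := Real.cosh_le_exp_half_sq s
        have h4 : Real.exp (s ^ 2 / 2) ^ 2 = Real.exp (s ^ 2) := by
          rw [← Real.exp_nat_mul]; congr 1; push_cast; ring
        have h5 : Real.exp (s ^ 2) ≤ Real.exp 1 := Real.exp_le_exp.2 (by nlinarith)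
        have := Real.exp_one_lt_d9
        have h6 : Real.cosh s ^ 2 ≤ Real.exp (s ^ 2 / 2) ^ 2 := pow_le_pow_left₀ hc.le h3 2
        linarith
      exact one_div_le_one_div_of_le (by positivity) h2
    have hms : s / 2 ≤ mm s := by
      apply Real.le_sqrt_of_sq_le
      have : s / 2 ≤ s / (1 + s) := by gcongr; linarith
      nlinarith
    have e2 : 4 * s ^ 2 * Real.tanh s ^ 2 * (1 - Real.tanh s ^ 2) / (4 * mm s ^ 3) =
        mm s * (1 - Real.tanh s ^ 2) := by
      have : s ^ 2 * Real.tanh s ^ 2 = mm s ^ 4 := by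
        rw [show mm s ^ 4 = (mm s ^ 2) ^ 2 by ring, hsq]; ring
      rw [show 4 * s ^ 2 * Real.tanh s ^ 2 * (1 - Real.tanh s ^ 2) =
        4 * (s ^ 2 * Real.tanh s ^ 2) * (1 - Real.tanh s ^ 2) by ring, this]
      field_simp
    calc _ ≤ (1/1600) * s / 1 := by
          gcongr; exact one_le_pow₀ hq1
      _ ≤ mm s * (1 - Real.tanh s ^ 2) := by nlinarith
      _ ≤ _ := by
          rw [← e2]; gcongr; nlinarith [sq_nonneg (Real.tanh s - s * (1 - Real.tanh s ^ 2))]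
  · have hd : 1 / 20 ≤ Real.tanh s - s * (1 - Real.tanh s ^ 2) := by
      have a1 : 1 / 2 ≤ Real.tanh s := by
        refine le_trans ?_ ht
        rw [div_le_div_iff₀ (by norm_num) (by linarith)]; linarith
      have a2 : s * (1 - Real.tanh s ^ 2) ≤ 4 / 9 := by
        rw [sig_eq]
        have hc := cosh_lower s
        have : (1 + s ^ 2 / 2) ^ 2 ≤ Real.cosh s ^ 2 := pow_le_pow_left₀ (by positivity) hc 2
        rw [mul_one_div, div_le_div_iff₀ (by have := Real.cosh_pos s; positivity) (by norm_num)]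
        nlinarith [sq_nonneg (s^2 - 1), sq_nonneg (s - 1)]
      linarith
    have hms : mm s ≤ Real.sqrt (1 + s) := by
      apply Real.sqrt_le_sqrt; nlinarith
    calc _ = (1 / 1600) * s / (Real.sqrt (1 + s) ^ 2 * Real.sqrt (1 + s) ^ 3) := by ring
      _ = (1 / 1600) * (s / (1 + s)) / Real.sqrt (1 + s) ^ 3 := by
          rw [hqs]; field_simp
      _ ≤ (1 / 1600) * 1 / Real.sqrt (1 + s) ^ 3 := by
          gcongr; rw [div_le_one (by linarith)]; linarith
      _ = (1 / 20) ^ 2 / (4 * Real.sqrt (1 + s) ^ 3) := by field_simp; norm_num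
      _ ≤ _ := by
          gcongr
          have : 0 ≤ 4 * s ^ 2 * Real.tanh s ^ 2 * (1 - Real.tanh s ^ 2) := by positivity
          have : (1/20) ^ 2 ≤ (Real.tanh s - s * (1 - Real.tanh s ^ 2)) ^ 2 := pow_le_pow_left₀ (by norm_num) hd 2
          linarith

lemma continuousOn_mm2 : ContinuousOn mm2 (Set.Ioi 0) := by
  have := continuous_tanh'
  have := continuous_mm
  unfold mm2
  apply ContinuousOn.div (by fun_prop) (by fun_prop)
  intro x hx
  have := mm_pos hx
  positivity



def hh (ν r : ℝ) : ℝ := mm (ν * r) / ν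

lemma continuous_hh (ν : ℝ) : Continuous (hh ν) := by
  have := continuous_mm
  unfold hh; fun_prop

lemma hh_hasDerivAt {ν r : ℝ} (hν : 0 < ν) (hr : 0 < r) : HasDerivAt (hh ν) (mm1 (ν * r)) r := by
  have h := (mm_hasDerivAt (mul_pos hν hr)).comp r ((hasDerivAt_id r).const_mul ν)
  refine HasDerivAt.congr_deriv (f := hh ν) (h.div_const ν) ?_
  field_simp

lemma hh1_hasDerivAt {ν r : ℝ} (hν : 0 < ν) (hr : 0 < r) :
    HasDerivAt (fun r => mm1 (ν * r)) (ν * mm2 (ν * r)) r := by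
  have h := (mm1_hasDerivAt (mul_pos hν hr)).comp r ((hasDerivAt_id r).const_mul ν)
  refine HasDerivAt.congr_deriv (f := fun r => mm1 (ν * r)) h ?_
  ring

/-- the phase -/
def ph (ν t z r : ℝ) : ℝ := z * r - t * hh ν r

lemma continuous_ph (ν t z : ℝ) : Continuous (ph ν t z) := by
  have := continuous_hh ν
  unfold ph; fun_prop

lemma ph_hasDerivAt {ν t z r : ℝ} (hν : 0 < ν) (hr : 0 < r) :
    HasDerivAt (ph ν t z) (z - t * mm1 (ν * r)) r := by
  have := ((hasDerivAt_id r).const_mul z).sub ((hh_hasDerivAt hν hr).const_mul t)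
  refine HasDerivAt.congr_deriv (f := ph ν t z) this ?_
  ring

lemma ph1_hasDerivAt {ν t z r : ℝ} (hν : 0 < ν) (hr : 0 < r) :
    HasDerivAt (fun r => z - t * mm1 (ν * r)) (t * (ν * - mm2 (ν * r))) r := by
  have := ((hh1_hasDerivAt hν hr).const_mul t).const_sub z
  refine HasDerivAt.congr_deriv (f := fun r => z - t * mm1 (ν * r)) this ?_
  ring

lemma ph2_continuousOn {ν t N a : ℝ} (hν : 0 < ν) (hN : 0 < N) :
    ContinuousOn (fun r => t * (ν * - mm2 (ν * r))) (Set.Icc N a) := by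
  have : ContinuousOn (fun r => mm2 (ν * r)) (Set.Icc N a) :=
    continuousOn_mm2.comp (by fun_prop) (fun r hr => mul_pos hν (lt_of_lt_of_le hN hr.1))
  fun_prop


lemma sqrt_one_add_le {ν N q : ℝ} (hν : 0 < ν) (hN : 0 < N) (hq : 1 ≤ q) (hM : ν * N ≤ q ^ 2)
    {r : ℝ} (h2 : r ≤ 2 * N) :
    Real.sqrt (1 + ν * r) ≤ Real.sqrt 3 * q := by
  rw [Real.sqrt_le_left (by positivity), mul_pow, Real.sq_sqrt (by norm_num)]
  nlinarith

lemma mm1_low {ν N q : ℝ} (hν : 0 < ν) (hN : 0 < N) (hq : 1 ≤ q) (hM : ν * N ≤ q ^ 2)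
    {r : ℝ} (h1 : N ≤ r) (h2 : r ≤ 2 * N) : 1 / (4 * q) ≤ mm1 (ν * r) := by
  have hr : 0 < r := by linarith
  have := sqrt_one_add_le hν hN hq hM h2
  have h3 : Real.sqrt 3 ≤ 2 := by rw [Real.sqrt_le_left (by norm_num)]; norm_num
  have hs : 0 < Real.sqrt (1 + ν * r) := Real.sqrt_pos.2 (by positivity)
  refine le_trans ?_ (mm1_lower (mul_pos hν hr))
  rw [div_le_div_iff₀ (by positivity) hs]
  nlinarith

lemma mm2_low {ν N q : ℝ} (hν : 0 < ν) (hN : 0 < N) (hq : 1 ≤ q) (hM : ν * N ≤ q ^ 2)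
    {r : ℝ} (h1 : N ≤ r) (h2 : r ≤ 2 * N) :
    (ν * N) / (25600 * q ^ 5) ≤ - mm2 (ν * r) := by
  have hr : 0 < r := by linarith
  have := sqrt_one_add_le hν hN hq hM h2
  have h3 : Real.sqrt 3 ^ 5 ≤ 16 := by
    have : Real.sqrt 3 ^ 2 = 3 := Real.sq_sqrt (by norm_num)
    have h3 : Real.sqrt 3 ≤ 1.75 := by rw [Real.sqrt_le_left (by norm_num)]; norm_num
    calc Real.sqrt 3 ^ 5 = (Real.sqrt 3 ^ 2) ^ 2 * Real.sqrt 3 := by ring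
      _ ≤ 16 := by rw [this]; linarith
  have hs : 0 < Real.sqrt (1 + ν * r) := Real.sqrt_pos.2 (by positivity)
  refine le_trans ?_ (mm2_lower (mul_pos hν hr))
  have h5 : Real.sqrt (1 + ν * r) ^ 5 ≤ 16 * q ^ 5 := by
    calc _ ≤ (Real.sqrt 3 * q) ^ 5 := by gcongr
      _ = Real.sqrt 3 ^ 5 * q ^ 5 := by ring
      _ ≤ _ := by gcongr
  calc (ν * N) / (25600 * q ^ 5) = (1/1600) * (ν * N) / (16 * q ^ 5) := by field_simp; norm_num
    _ ≤ (1/1600) * (ν * r) / Real.sqrt (1 + ν * r) ^ 5 := by gcongr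

lemma caseA {ν N q : ℝ} (hν : 0 < ν) (hN : 0 < N) (hq : 1 ≤ q) (hM : ν * N ≤ q ^ 2)
    {t z : ℝ} (ht : 0 < t) (hz : |z| ≤ t / (8 * q)) :
    ‖∫ r in N..(2*N), (r : ℂ) * Complex.exp (Complex.I * (ph ν t z r : ℂ))‖ ≤ 96 * N * q / t := by
  have hl : 0 < t / (8 * q) := by positivity
  have key := vdc_amp (φ := ph ν t z) (g := fun r => (r : ℂ)) (g' := fun _ => 1) (a := N) (b := 2 * N)
    (B := 4 / (t / (8 * q))) (D₀ := 2 * N) (D := 1) (by linarith) (continuous_ph ν t z)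
    (fun x _ => (hasDerivAt_id x).ofReal_comp) continuousOn_const
    (fun x hx => by
      have hxx : ∀ y ∈ Set.Icc N x, N ≤ y ∧ y ≤ 2 * N := fun y hy => ⟨hy.1, hy.2.trans hx.2⟩
      refine vdc1 hx.1 hl (fun y hy => ph_hasDerivAt hν (by linarith [hy.1]))
        (fun y hy => ph1_hasDerivAt hν (by linarith [hy.1])) (ph2_continuousOn hν hN)
        (fun y hy => ?_) (fun y hy => ?_)
      · have := mm2_low hν hN hq hM (hxx y hy).1 (hxx y hy).2
        have : 0 ≤ - mm2 (ν * y) := le_trans (by positivity) this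
        positivity
      · have h1 := mm1_low hν hN hq hM (hxx y hy).1 (hxx y hy).2
        have h2 : t * (1 / (4 * q)) ≤ t * mm1 (ν * y) := by gcongr
        have h3 : t * (1 / (4 * q)) = t / (8 * q) + t / (8 * q) := by field_simp; norm_num
        have h4 := abs_le.1 hz
        rw [le_abs]; right; linarith [h4.2])
    (by simp [abs_of_pos hN]) (by simp)
  refine key.trans (le_of_eq ?_)
  field_simp; ring

lemma caseB {ν N q : ℝ} (hν : 0 < ν) (hN : 0 < N) (hq : 1 ≤ q) (hM : ν * N ≤ q ^ 2)
    {C : ℝ} (hC0 : 0 < C) (hC : ∀ z : ℝ, 1 ≤ z → ‖besb z‖ ≤ C)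
    {t ρ z : ℝ} (ht : 0 < t) (hρ : t / (8 * q) ≤ ρ) (hρN : 1 ≤ ρ * N)
    {b b' : ℝ → ℂ} (hb : ∀ z, 0 < z → HasDerivAt b (b' z) z)
    (hbn : ∀ z, ‖b z‖ = ‖besb z‖) (hbn' : ∀ z, ‖b' z‖ = ‖besb' z‖)
    (hbc : ContinuousOn b' (Set.Ioi 0)) :
    ‖∫ r in N..(2*N), ((Real.sqrt r / (2 * Real.sqrt ρ) : ℝ) * b (ρ * r))
      * Complex.exp (Complex.I * (ph ν t z r : ℂ))‖ ≤ 10000 * C * q ^ 3 / (ν * t) := by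
  have hρ0 : 0 < ρ := lt_of_lt_of_le (by positivity) hρ
  have hsρ : 0 < Real.sqrt ρ := Real.sqrt_pos.2 hρ0
  have hsN : 0 < Real.sqrt N := Real.sqrt_pos.2 hN
  have hNN : Real.sqrt N ^ 2 = N := Real.sq_sqrt hN.le
  set l : ℝ := Real.sqrt (t * (ν * ((ν * N) / (25600 * q ^ 5)))) with hldef
  have hl2 : l ^ 2 = t * (ν * ((ν * N) / (25600 * q ^ 5))) := Real.sq_sqrt (by positivity)
  have hl : 0 < l := Real.sqrt_pos.2 (by positivity)
  have hder : ∀ x ∈ Set.Icc N (2*N), HasDerivAt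
      (fun r : ℝ => (((Real.sqrt r / (2 * Real.sqrt ρ) : ℝ) : ℂ) * b (ρ * r)))
      ((((1 / (2 * Real.sqrt x)) / (2 * Real.sqrt ρ) : ℝ) : ℂ) * b (ρ * x) +
        ((Real.sqrt x / (2 * Real.sqrt ρ) : ℝ) : ℂ) * (ρ * b' (ρ * x))) x := by
    intro x hx
    have hx0 : 0 < x := by linarith [hx.1]
    have h1 := ((Real.hasDerivAt_sqrt hx0.ne').div_const (2 * Real.sqrt ρ)).ofReal_comp
    have h2 := HasDerivAt.scomp (g₁ := b) x (hb (ρ * x) (by positivity)) ((hasDerivAt_id x).const_mul ρ)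
    have h3 := h1.mul h2
    refine HasDerivAt.congr_deriv (f := fun r : ℝ => (((Real.sqrt r / (2 * Real.sqrt ρ) : ℝ) : ℂ) * b (ρ * r))) h3 ?_
    simp
  have hbcont : ContinuousOn (fun x => b (ρ * x)) (Set.Icc N (2*N)) := fun x hx =>
    ContinuousAt.continuousWithinAt (ContinuousAt.comp (f := fun x => ρ * x) (g := b)
      (hb (ρ * x) (mul_pos hρ0 (by linarith [hx.1]))).continuousAt (by fun_prop))
  have hbcont' : ContinuousOn (fun x => b' (ρ * x)) (Set.Icc N (2*N)) :=
    hbc.comp (by fun_prop) (fun x hx => mul_pos hρ0 (by linarith [hx.1]))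
  have hz1 : ∀ x ∈ Set.Icc N (2*N), 1 ≤ ρ * x := fun x hx => by nlinarith [hx.1]
  have key := vdc_amp (φ := ph ν t z) (a := N) (b := 2 * N) (B := 10 / l)
    (D₀ := C * Real.sqrt N / Real.sqrt ρ) (D := C / (Real.sqrt N * Real.sqrt ρ))
    (by linarith) (continuous_ph ν t z) hder
    (by
      refine ContinuousOn.add (ContinuousOn.mul ?_ hbcont) (ContinuousOn.mul ?_ (continuousOn_const.mul hbcont'))
      · refine Complex.continuous_ofReal.comp_continuousOn ?_
        refine ContinuousOn.div_const (ContinuousOn.div continuousOn_const (by fun_prop) ?_) _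
        intro x hx
        have := Real.sqrt_pos.2 (show 0 < x by linarith [hx.1])
        positivity
      · fun_prop)
    (fun x hx => by
      have hxx : ∀ y ∈ Set.Icc N x, N ≤ y ∧ y ≤ 2 * N := fun y hy => ⟨hy.1, hy.2.trans hx.2⟩
      refine vdc2 hx.1 hl (continuous_ph ν t z) (fun y hy => ph_hasDerivAt hν (by linarith [hy.1]))
        (fun y hy => ph1_hasDerivAt hν (by linarith [hy.1])) (ph2_continuousOn hν hN)
        (fun y hy => ?_)
      have := mm2_low hν hN hq hM (hxx y hy).1 (hxx y hy).2
      rw [hl2]; gcongr)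
    (by
      rw [norm_mul, hbn, Complex.norm_real, Real.norm_eq_abs, abs_of_nonneg (by positivity)]
      have h1 := hC (ρ * (2 * N)) (hz1 _ ⟨by linarith, le_rfl⟩)
      have h2 : Real.sqrt (2 * N) ≤ 2 * Real.sqrt N := by
        rw [Real.sqrt_le_left (by positivity)]; nlinarith
      calc _ ≤ 2 * Real.sqrt N / (2 * Real.sqrt ρ) * C := by gcongr
        _ = _ := by field_simp)
    (fun x hx => by
      have hx0 : 0 < x := by linarith [hx.1]
      have hsx : 0 < Real.sqrt x := Real.sqrt_pos.2 hx0
      have hxx : Real.sqrt x ^ 2 = x := Real.sq_sqrt hx0.le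
      have hNx : Real.sqrt N ≤ Real.sqrt x := Real.sqrt_le_sqrt hx.1
      have h1 := hC (ρ * x) (hz1 x hx)
      have h2 : ‖besb' (ρ * x)‖ ≤ C / (4 * (ρ * x)) := by
        rw [norm_besb']
        calc _ ≤ C / (4 * (ρ * x) ^ 2) := by
              gcongr; exact (abs_besw_le_besb _).trans h1
          _ ≤ _ := by
              gcongr; nlinarith [hz1 x hx]
      refine (norm_add_le _ _).trans ?_
      rw [norm_mul, norm_mul, norm_mul, hbn, hbn', Complex.norm_real, Complex.norm_real, Complex.norm_real,
        Real.norm_eq_abs, Real.norm_eq_abs, Real.norm_eq_abs, abs_of_pos (by positivity),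
        abs_of_pos (by positivity), abs_of_pos hρ0]
      calc _ ≤ 1 / (2 * Real.sqrt x) / (2 * Real.sqrt ρ) * C + Real.sqrt x / (2 * Real.sqrt ρ) * (ρ * (C / (4 * (ρ * x)))) := by gcongr
        _ = 3 / 8 * (C / (Real.sqrt x * Real.sqrt ρ)) := by
            rw [← hxx, Real.sqrt_sq hsx.le]; field_simp; norm_num
        _ ≤ 1 * (C / (Real.sqrt N * Real.sqrt ρ)) := by gcongr; norm_num
        _ = _ := one_mul _)
  refine key.trans ?_
  have e : 10 / l * (C * Real.sqrt N / Real.sqrt ρ + C / (Real.sqrt N * Real.sqrt ρ) * (2 * N - N))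
     = 20 * C * (Real.sqrt N / (l * Real.sqrt ρ)) := by
    have h1 : 2 * N - N = Real.sqrt N ^ 2 := by rw [hNN]; ring
    rw [h1]
    field_simp; ring
  rw [e]
  have f : Real.sqrt N / (l * Real.sqrt ρ) ≤ 500 * q ^ 3 / (ν * t) := by
    refine (pow_le_pow_iff_left₀ (by positivity) (by positivity) two_ne_zero).1 ?_
    rw [div_pow, mul_pow, hNN, hl2, Real.sq_sqrt hρ0.le]
    calc _ ≤ N / (t * (ν * (ν * N / (25600 * q ^ 5))) * (t / (8 * q))) := by gcongr
      _ = 204800 * (q ^ 3 / (ν * t)) ^ 2 := by field_simp; norm_num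
      _ ≤ 250000 * (q ^ 3 / (ν * t)) ^ 2 := by gcongr; norm_num
      _ = _ := by ring
  calc _ ≤ 20 * C * (500 * q ^ 3 / (ν * t)) := by gcongr
    _ = _ := by ring

lemma bes_exp (z : ℝ) : (bes z : ℂ) =
    ∫ θ in (-Real.pi)..Real.pi, Complex.exp (Complex.I * ((z * Real.cos θ : ℝ) : ℂ)) := by
  have h0 : ∫ θ in (-Real.pi)..Real.pi, Real.sin (z * Real.cos θ) = 0 := by
    have hp : Function.Periodic (fun θ => Real.sin (z * Real.cos θ)) (2 * Real.pi) := fun θ => by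
      simp
    have h1 := hp.intervalIntegral_add_eq (-Real.pi) 0
    have h2 := intervalIntegral.integral_comp_add_right (a := -Real.pi) (b := Real.pi)
      (fun θ => Real.sin (z * Real.cos θ)) Real.pi
    simp only [Real.cos_add_pi, mul_neg, Real.sin_neg, intervalIntegral.integral_neg] at h2
    rw [show -Real.pi + 2 * Real.pi = Real.pi by ring, zero_add] at h1
    rw [show -Real.pi + Real.pi = 0 by ring, show Real.pi + Real.pi = 2 * Real.pi by ring] at h2
    linarith
  have h1 : ∀ θ : ℝ, Complex.exp (Complex.I * ((z * Real.cos θ : ℝ) : ℂ)) =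
      ((Real.cos (z * Real.cos θ) : ℝ) : ℂ) + ((Real.sin (z * Real.cos θ) : ℝ) : ℂ) * Complex.I := by
    intro θ
    rw [mul_comm, Complex.exp_mul_I, Complex.ofReal_cos, Complex.ofReal_sin]
  simp_rw [h1]
  rw [intervalIntegral.integral_add, intervalIntegral.integral_mul_const, intervalIntegral.integral_ofReal,
    intervalIntegral.integral_ofReal, h0]
  · simp [bes]
  · exact (by fun_prop : Continuous _).intervalIntegrable _ _
  · exact (by fun_prop : Continuous _).intervalIntegrable _ _

/-- one-dimensional kernel -/
def ker1 (ν t ρ N : ℝ) : ℂ :=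
  ∫ r in N..(2*N), (r : ℂ) * (Complex.exp (-(Complex.I * ((t * hh ν r : ℝ) : ℂ))) * (bes (ρ * r) : ℂ))

lemma continuous_bes : Continuous bes :=
  continuous_iff_continuousAt.2 fun z => (bes_hasDerivAt z).continuousAt

lemma ker1_triv {ν t ρ N : ℝ} (hN : 0 < N) : ‖ker1 ν t ρ N‖ ≤ 4 * Real.pi * N ^ 2 := by
  have := intervalIntegral.norm_integral_le_of_norm_le_const (a := N) (b := 2 * N)
    (C := 2 * N * (2 * Real.pi))
    (f := fun r : ℝ => (r : ℂ) * (Complex.exp (-(Complex.I * ((t * hh ν r : ℝ) : ℂ))) * (bes (ρ * r) : ℂ)))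
    (fun r hr => by
      rw [Set.uIoc_of_le (by linarith)] at hr
      have hr0 : 0 < r := by linarith [hr.1]
      rw [norm_mul, norm_mul, norm_cexp_neg, one_mul, Complex.norm_real, Complex.norm_real,
        Real.norm_eq_abs, Real.norm_eq_abs, abs_of_pos hr0]
      have := abs_bes_le (ρ * r)
      have := hr.2
      gcongr)
  refine this.trans (le_of_eq ?_)
  rw [show 2 * N - N = N by ring, abs_of_pos hN]; ring

lemma ker1_A {ν N q t ρ : ℝ} (hν : 0 < ν) (hN : 0 < N) (hq : 1 ≤ q) (hM : ν * N ≤ q ^ 2) (ht : 0 < t)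
    (hρ : 0 ≤ ρ) (hρ' : ρ ≤ t / (8 * q)) : ‖ker1 ν t ρ N‖ ≤ 1000 * q ^ 3 / (ν * t) := by
  have e : ker1 ν t ρ N = ∫ θ in (-Real.pi)..Real.pi, ∫ r in N..(2*N),
      (r : ℂ) * Complex.exp (Complex.I * (ph ν t (ρ * Real.cos θ) r : ℂ)) := by
    rw [intervalIntegral.integral_of_le (by linarith [Real.pi_pos]), 
      ← intervalIntegral_integral_swap]
    · unfold ker1
      refine intervalIntegral.integral_congr (fun r _ => ?_)
      rw [bes_exp, intervalIntegral.integral_of_le (by linarith [Real.pi_pos]), ← integral_const_mul,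
        ← integral_const_mul]
      refine integral_congr_ae (Filter.Eventually.of_forall fun θ => ?_)
      simp only
      rw [← Complex.exp_add]
      congr 2
      unfold ph; push_cast; ring
    · rw [Measure.prod_restrict]
      rw [Set.uIoc_of_le (by linarith)]
      have hc : Continuous (Function.uncurry fun (r θ : ℝ) => (r : ℂ) * Complex.exp (Complex.I * (ph ν t (ρ * Real.cos θ) r : ℂ))) := by
        have := continuous_hh ν
        unfold ph Function.uncurry; fun_prop
      refine (hc.continuousOn.integrableOn_compact (isCompact_Icc.prod isCompact_Icc)).mono_set
        (Set.prod_mono Set.Ioc_subset_Icc_self Set.Ioc_subset_Icc_self)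
  rw [e]
  have hq0 : 0 < q := by linarith
  have := intervalIntegral.norm_integral_le_of_norm_le_const (a := -Real.pi) (b := Real.pi)
    (C := 96 * N * q / t) (f := fun θ => ∫ r in N..(2*N),
      (r : ℂ) * Complex.exp (Complex.I * (ph ν t (ρ * Real.cos θ) r : ℂ)))
    (fun θ _ => caseA hν hN hq hM ht (by
      rw [abs_mul, abs_of_nonneg hρ]
      nlinarith [Real.abs_cos_le_one θ, abs_nonneg (Real.cos θ)]))
  refine this.trans ?_
  rw [show Real.pi - -Real.pi = 2 * Real.pi by ring, abs_of_pos (by positivity)]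
  have hN' : N ≤ q ^ 2 / ν := by rw [le_div_iff₀ hν]; linarith
  calc 96 * N * q / t * (2 * Real.pi) ≤ 96 * (q ^ 2 / ν) * q / t * (2 * 4) := by
        gcongr; exact Real.pi_le_four
    _ = 768 * q ^ 3 / (ν * t) := by field_simp; norm_num
    _ ≤ _ := by gcongr; norm_num

lemma ker1_B {C : ℝ} (hC0 : 0 < C) (hC : ∀ z : ℝ, 1 ≤ z → ‖besb z‖ ≤ C)
    {ν N q t ρ : ℝ} (hν : 0 < ν) (hN : 0 < N) (hq : 1 ≤ q) (hM : ν * N ≤ q ^ 2) (ht : 0 < t)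
    (hρ : t / (8 * q) ≤ ρ) (hρN : 1 ≤ ρ * N) : ‖ker1 ν t ρ N‖ ≤ 20000 * C * q ^ 3 / (ν * t) := by
  have hρ0 : 0 < ρ := lt_of_lt_of_le (by positivity) hρ
  have hsρ : 0 < Real.sqrt ρ := Real.sqrt_pos.2 hρ0
  have hcw : Continuous besw := by have := continuous_bes; unfold besw; fun_prop
  have hcb' : ContinuousOn besb' (Set.Ioi 0) := by
    unfold besb'
    refine ContinuousOn.mul (ContinuousOn.div (by fun_prop) (by fun_prop) ?_) (by fun_prop)
    intro x hx
    have : (x : ℂ) ≠ 0 := by exact_mod_cast (ne_of_gt hx)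
    simp [this]
  have h1 := caseB hν hN hq hM hC0 hC (z := ρ) ht hρ hρN (b := besb) (b' := besb')
    (fun z hz => besb_hasDerivAt hz) (fun _ => rfl) (fun _ => rfl) hcb'
  have h2 := caseB hν hN hq hM hC0 hC (z := -ρ) ht hρ hρN (b := fun z => (starRingEnd ℂ) (besb z))
    (b' := fun z => (starRingEnd ℂ) (besb' z))
    (fun z hz => (besb_hasDerivAt hz).star) (fun _ => RCLike.norm_conj _) (fun _ => RCLike.norm_conj _)
    (Complex.continuous_conj.comp_continuousOn hcb')
  have hcb : ContinuousOn (fun r => besb (ρ * r)) (Set.Icc N (2*N)) := fun x hx =>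
    ContinuousAt.continuousWithinAt (ContinuousAt.comp (f := fun x => ρ * x) (g := besb)
      (besb_hasDerivAt (mul_pos hρ0 (by linarith [hx.1]))).continuousAt (by fun_prop))
  have hu : Set.uIcc N (2 * N) = Set.Icc N (2 * N) := Set.uIcc_of_le (by linarith)
  have hcp := continuous_ph ν t ρ
  have hcp' := continuous_ph ν t (-ρ)
  have e : ker1 ν t ρ N = (∫ r in N..(2*N), ((Real.sqrt r / (2 * Real.sqrt ρ) : ℝ) * besb (ρ * r))
      * Complex.exp (Complex.I * (ph ν t ρ r : ℂ))) + ∫ r in N..(2*N), ((Real.sqrt r / (2 * Real.sqrt ρ) : ℝ) * (starRingEnd ℂ) (besb (ρ * r)))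
      * Complex.exp (Complex.I * (ph ν t (-ρ) r : ℂ)) := by
    rw [← intervalIntegral.integral_add]
    · unfold ker1
      refine intervalIntegral.integral_congr (fun r hr => ?_)
      rw [hu] at hr
      have hr0 : 0 < r := by linarith [hr.1]
      have hsr : 0 < Real.sqrt r := Real.sqrt_pos.2 hr0
      rw [bes_repr (mul_pos hρ0 hr0)]
      have e1 : Complex.exp (Complex.I * (ph ν t ρ r : ℂ)) =
        Complex.exp (-(Complex.I * ((t * hh ν r : ℝ) : ℂ))) * Complex.exp (Complex.I * ((ρ * r : ℝ) : ℂ)) := by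
        rw [← Complex.exp_add]; congr 1; unfold ph; push_cast; ring
      have e2 : Complex.exp (Complex.I * (ph ν t (-ρ) r : ℂ)) =
        Complex.exp (-(Complex.I * ((t * hh ν r : ℝ) : ℂ))) * Complex.exp (-(Complex.I * ((ρ * r : ℝ) : ℂ))) := by
        rw [← Complex.exp_add]; congr 1; unfold ph; push_cast; ring
      have e3 : r * ((Real.sqrt (ρ * r))⁻¹ / 2) = Real.sqrt r / (2 * Real.sqrt ρ) := by
        rw [Real.sqrt_mul hρ0.le]
        have : r = Real.sqrt r ^ 2 := (Real.sq_sqrt hr0.le).symm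
        field_simp
        linarith
      rw [e1, e2, ← e3]
      push_cast; ring
    · refine ContinuousOn.intervalIntegrable ?_
      rw [hu]; fun_prop
    · refine ContinuousOn.intervalIntegrable ?_
      rw [hu]
      have := Complex.continuous_conj.comp_continuousOn hcb
      simp only [Function.comp_def] at this
      fun_prop
  rw [e]
  calc _ ≤ _ := norm_add_le _ _
    _ ≤ _ := add_le_add h1 h2
    _ = _ := by ring

lemma ker1_bound : ∃ C : ℝ, 0 < C ∧ ∀ ν N q t ρ : ℝ, 0 < ν → 0 < N → 1 ≤ q → ν * N ≤ q ^ 2 → 0 < t → 0 ≤ ρ →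
    ‖ker1 ν t ρ N‖ ≤ C * q ^ 3 / (ν * t) := by
  obtain ⟨C, hC0, hC⟩ := besb_bound
  refine ⟨1000 + 20000 * C, by positivity, fun ν N q t ρ hν hN hq hM ht hρ => ?_⟩
  have hq0 : 0 < q := by linarith
  by_cases h1 : ρ ≤ t / (8 * q)
  · refine (ker1_A hν hN hq hM ht hρ h1).trans ?_
    gcongr; linarith
  push Not at h1
  by_cases h2 : 1 ≤ ρ * N
  · refine (ker1_B hC0 hC hν hN hq hM ht h1.le h2).trans ?_
    gcongr; linarith
  push Not at h2
  refine (ker1_triv hN).trans ?_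
  have hN' : N ≤ q ^ 2 / ν := by rw [le_div_iff₀ hν]; linarith
  have hN2 : N ≤ 8 * q / t := by
    rw [le_div_iff₀ ht]
    rw [div_lt_iff₀ (by positivity)] at h1
    nlinarith [mul_pos hN ht]
  calc 4 * Real.pi * N ^ 2 = 4 * Real.pi * (N * N) := by ring
    _ ≤ 4 * 4 * ((q ^ 2 / ν) * (8 * q / t)) := by gcongr; exact Real.pi_le_four
    _ = 128 * q ^ 3 / (ν * t) := by field_simp; norm_num
    _ ≤ _ := by gcongr; linarith

lemma m2_eq (ξ : E2) : m2 ξ = mm ‖ξ‖ := by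
  unfold m2 mm
  split_ifs with h
  · simp [h]
  · have h0 : 0 < ‖ξ‖ := lt_of_le_of_ne (norm_nonneg _) (Ne.symm h)
    rw [show ‖ξ‖ * Real.tanh ‖ξ‖ = ‖ξ‖ ^ 2 * (Real.tanh ‖ξ‖ / ‖ξ‖) by field_simp,
      Real.sqrt_mul (by positivity), Real.sqrt_sq h0.le]

lemma symb_eq {μ : ℝ} (ξ : E2) :
    (1 / Real.sqrt μ) * m2 (Real.sqrt μ • ξ) = hh (Real.sqrt μ) ‖ξ‖ := by
  rw [m2_eq, hh, norm_smul, Real.norm_eq_abs, abs_of_nonneg (Real.sqrt_nonneg _)]; ring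

/-- dyadic annulus -/
def ann (N : ℝ) : Set E2 := {ξ | N ≤ ‖ξ‖ ∧ ‖ξ‖ < 2 * N}

lemma measurableSet_ann (N : ℝ) : MeasurableSet (ann N) :=
  (measurableSet_le measurable_const measurable_norm).inter
    (measurableSet_lt measurable_norm measurable_const)

def ker2 (ν t N : ℝ) (x : E2) : ℂ :=
  ∫ ξ in ann N, Complex.exp (Complex.I * ((2 * Real.pi * inner ℝ ξ x - t * hh ν ‖ξ‖ : ℝ) : ℂ))

lemma ker2_eq {ν t N : ℝ} (hN : 0 < N) (x : E2) :
    ker2 ν t N x = ker1 ν t (2 * Real.pi * ‖x‖) N := by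
  let L : ℂ ≃ₗᵢ[ℝ] E2 := Complex.orthonormalBasisOneI.repr
  set f : E2 → ℂ := fun ξ =>
    Complex.exp (Complex.I * ((2 * Real.pi * inner ℝ ξ x - t * hh ν ‖ξ‖ : ℝ) : ℂ)) with hf
  set y : ℂ := L.symm x with hy
  have hxy : L y = x := L.apply_symm_apply x
  have hny : ‖y‖ = ‖x‖ := L.symm.norm_map x
  set α := Complex.arg y with hα
  have hyy : y = ‖x‖ * (Real.cos α + Real.sin α * Complex.I) := by
    rw [← hny]
    have := Complex.norm_mul_cos_add_sin_mul_I y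
    push_cast
    exact this.symm
  set g : ℝ × ℝ → ℂ := fun p => (p.1 : ℂ) * Complex.exp (Complex.I *
    ((2 * Real.pi * ‖x‖ * p.1 * Real.cos (p.2 - α) - t * hh ν p.1 : ℝ) : ℂ)) with hg
  have hgc : Continuous g := by
    have := continuous_hh ν
    rw [hg]; fun_prop
  have e1 : ker2 ν t N x = ∫ p in Set.Ico N (2*N) ×ˢ Set.Ioo (-Real.pi) Real.pi, g p := by
    unfold ker2
    rw [← integral_indicator (measurableSet_ann N), ← L.measurePreserving.integral_comp
      L.toHomeomorph.measurableEmbedding, ← Complex.integral_comp_polarCoord_symm]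
    rw [← integral_indicator (by exact measurableSet_Ioi.prod measurableSet_Ioo),
      ← integral_indicator (by exact measurableSet_Ico.prod measurableSet_Ioo)]
    refine integral_congr_ae (Filter.Eventually.of_forall fun p => ?_)
    by_cases hp : p ∈ polarCoord.target
    · rw [Set.indicator_of_mem hp]
      have hp1 : 0 < p.1 := hp.1
      have hnorm : ‖L (Complex.polarCoord.symm p)‖ = p.1 := by
        rw [L.norm_map, Complex.norm_polarCoord_symm, abs_of_pos hp1]
      by_cases hA : N ≤ p.1 ∧ p.1 < 2 * N
      · rw [Set.indicator_of_mem (show L (Complex.polarCoord.symm p) ∈ ann N by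
          simp only [ann, Set.mem_ofPred_eq, hnorm]; exact hA),
          Set.indicator_of_mem (show p ∈ Set.Ico N (2*N) ×ˢ Set.Ioo (-Real.pi) Real.pi from ⟨hA, hp.2⟩)]
        have hin : inner ℝ (L (Complex.polarCoord.symm p)) x = ‖x‖ * p.1 * Real.cos (p.2 - α) := by
          rw [← hxy, L.inner_map_map, Complex.inner, hxy, hyy, Complex.polarCoord_symm_apply, Real.cos_sub]
          simp [← Complex.ofReal_cos, ← Complex.ofReal_sin, -Complex.ofReal_cos, -Complex.ofReal_sin]
          ring
        rw [hg]
        simp only [hnorm, hin, Complex.real_smul]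
        congr 5
        ring
      · rw [Set.indicator_of_notMem (show L (Complex.polarCoord.symm p) ∉ ann N by
          simp only [ann, Set.mem_ofPred_eq, hnorm]; exact hA),
          Set.indicator_of_notMem (show p ∉ Set.Ico N (2*N) ×ˢ Set.Ioo (-Real.pi) Real.pi from fun h => hA h.1)]
        simp
    · rw [Set.indicator_of_notMem hp, Set.indicator_of_notMem]
      intro h
      exact hp ⟨lt_of_lt_of_le hN h.1.1, h.2⟩
  rw [e1, Measure.volume_eq_prod, setIntegral_prod]
  · rw [integral_Ico_eq_integral_Ioc, ← intervalIntegral.integral_of_le (by linarith)]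
    unfold ker1
    refine intervalIntegral.integral_congr (fun r _ => ?_)
    rw [← integral_Ioc_eq_integral_Ioo, ← intervalIntegral.integral_of_le (by linarith [Real.pi_pos])]
    have : ∀ θ, g (r, θ) = (r * Complex.exp (-(Complex.I * ((t * hh ν r : ℝ) : ℂ)))) *
        Complex.exp (Complex.I * (((2 * Real.pi * ‖x‖ * r) * Real.cos (θ - α) : ℝ) : ℂ)) := by
      intro θ
      rw [hg, mul_assoc (r : ℂ), ← Complex.exp_add]
      simp only
      congr 2
      push_cast; ring
    simp_rw [this]
    rw [intervalIntegral.integral_const_mul, mul_assoc, bes_exp]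
    congr 2
    have h1 := intervalIntegral.integral_comp_sub_right (a := -Real.pi) (b := Real.pi)
      (fun θ => Complex.exp (Complex.I * (((2 * Real.pi * ‖x‖ * r) * Real.cos θ : ℝ) : ℂ))) α
    rw [h1]
    have hp : Function.Periodic (fun θ => Complex.exp (Complex.I *
      (((2 * Real.pi * ‖x‖ * r) * Real.cos θ : ℝ) : ℂ))) (2 * Real.pi) := fun θ => by
      simp only [Real.cos_add_two_pi]
    have h2 := hp.intervalIntegral_add_eq (-Real.pi) (-Real.pi - α)
    rw [show -Real.pi + 2 * Real.pi = Real.pi by ring,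
      show -Real.pi - α + 2 * Real.pi = Real.pi - α by ring] at h2
    exact h2.symm
  · refine (hgc.continuousOn.integrableOn_compact (isCompact_Icc.prod isCompact_Icc)).mono_set
        (Set.prod_mono Set.Ico_subset_Icc_self Set.Ioo_subset_Icc_self)

lemma ker2_neg (ν t N : ℝ) (x : E2) : ker2 ν (-t) N (-x) = (starRingEnd ℂ) (ker2 ν t N x) := by
  unfold ker2
  rw [← integral_conj]
  refine integral_congr_ae (Filter.Eventually.of_forall fun ξ => ?_)
  simp only
  rw [← Complex.exp_conj, map_mul, Complex.conj_I, Complex.conj_ofReal, inner_neg_right]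
  congr 1
  push_cast; ring

lemma ker2_triv {ν t N : ℝ} (hN : 0 < N) (x : E2) : ‖ker2 ν t N x‖ ≤ 4 * Real.pi * N ^ 2 := by
  rw [ker2_eq hN]; exact ker1_triv hN

lemma ker2_bound : ∃ C : ℝ, 0 < C ∧ ∀ ν N q t : ℝ, 0 < ν → 0 < N → 1 ≤ q → ν * N ≤ q ^ 2 → t ≠ 0 → ∀ x : E2,
    ‖ker2 ν t N x‖ ≤ C * q ^ 3 / (ν * |t|) := by
  obtain ⟨C, hC, h⟩ := ker1_bound
  refine ⟨C, hC, fun ν N q t hν hN hq hM ht x => ?_⟩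
  rcases lt_or_gt_of_ne ht with h1 | h1
  · have := ker2_neg ν (-t) N (-x)
    rw [neg_neg, neg_neg] at this
    rw [this, RCLike.norm_conj, ker2_eq hN, abs_of_neg h1]
    exact h ν N q (-t) _ hν hN hq hM (by linarith) (by positivity)
  · rw [ker2_eq hN, abs_of_pos h1]
    exact h ν N q t _ hν hN hq hM h1 (by positivity)

/-- volume of the annulus -/
lemma ann_volume {N : ℝ} (hN : 0 < N) : volume.real (ann N) ≤ 4 * Real.pi * N ^ 2 := by
  have := ker2_triv (ν := 1) (t := 0) hN (0 : E2)
  unfold ker2 at this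
  simpa [abs_of_nonneg] using this

lemma ann_volume_lt_top (N : ℝ) : volume (ann N) < ⊤ := by
  refine lt_of_le_of_lt (measure_mono (t := Metric.ball 0 (2 * N)) fun ξ hξ => ?_) measure_ball_lt_top
  simpa using hξ.2

lemma tt_star {Ω X : Type*} [MeasurableSpace Ω] [MeasurableSpace X] (τ : Measure Ω) (m : Measure X)
    [IsFiniteMeasure τ] [IsFiniteMeasure m] {e : Ω → X → ℂ}
    (he : StronglyMeasurable (Function.uncurry e)) (hb : ∀ t ξ, ‖e t ξ‖ ≤ 1)
    {g : X → ℂ} (hg : StronglyMeasurable g) {G : ℝ} (hG : ∀ ξ, ‖g ξ‖ ≤ G) {κ : ℝ} (hκ : 0 < κ)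
    (hK : ∀ᵐ t ∂τ, ∫ t', ‖∫ ξ, e t ξ * (starRingEnd ℂ) (e t' ξ) ∂m‖ ∂τ ≤ κ) :
    ∫ t, ‖∫ ξ, e t ξ * g ξ ∂m‖ ^ 2 ∂τ ≤ κ * ∫ ξ, ‖g ξ‖ ^ 2 ∂m := by
  rcases isEmpty_or_nonempty X with hX | ⟨⟨ξ₀⟩⟩
  · simp [Subsingleton.elim m 0]
  have hG0 : 0 ≤ G := (norm_nonneg _).trans (hG ξ₀)
  set V : Ω → ℂ := fun t => ∫ ξ, e t ξ * g ξ ∂m with hV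
  have hconj : Measurable (starRingEnd ℂ : ℂ → ℂ) := Complex.continuous_conj.measurable
  have heg : StronglyMeasurable (Function.uncurry fun t ξ => e t ξ * g ξ) :=
    he.mul (hg.comp_measurable measurable_snd)
  have hVm : StronglyMeasurable V := heg.integral_prod_right
  set M : ℝ := m.real Set.univ with hM
  have hM0 : 0 ≤ M := measureReal_nonneg
  have hVb : ∀ t, ‖V t‖ ≤ G * M := fun t => by
    refine norm_integral_le_of_norm_le_const (Filter.Eventually.of_forall fun ξ => ?_)
    rw [norm_mul]
    calc _ ≤ 1 * G := mul_le_mul (hb t ξ) (hG ξ) (norm_nonneg _) zero_le_one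
      _ = G := one_mul _
  set Φ : X → ℂ := fun ξ => ∫ t, (starRingEnd ℂ) (V t) * e t ξ ∂τ with hΦ
  have hconjV : StronglyMeasurable (fun t => (starRingEnd ℂ) (V t)) :=
    Complex.continuous_conj.comp_stronglyMeasurable hVm
  have hVe : StronglyMeasurable (Function.uncurry fun t ξ => (starRingEnd ℂ) (V t) * e t ξ) :=
    (hconjV.comp_measurable measurable_fst).mul he
  have hVeb : ∀ t ξ, ‖(starRingEnd ℂ) (V t) * e t ξ‖ ≤ G * M := fun t ξ => by
    rw [norm_mul, RCLike.norm_conj]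
    calc _ ≤ (G * M) * 1 := mul_le_mul (hVb t) (hb t ξ) (norm_nonneg _) (by positivity)
      _ = _ := mul_one _
  have hΦm : StronglyMeasurable Φ := hVe.integral_prod_left
  set S : ℝ := τ.real Set.univ with hS
  have hΦb : ∀ ξ, ‖Φ ξ‖ ≤ G * M * S := fun ξ =>
    norm_integral_le_of_norm_le_const (Filter.Eventually.of_forall fun t => hVeb t ξ)
  have hconjΦ : StronglyMeasurable (fun t => (starRingEnd ℂ) (Φ t)) :=
    Complex.continuous_conj.comp_stronglyMeasurable hΦm
  -- the quadratic form
  set Q : ℝ := ∫ t, ‖V t‖ ^ 2 ∂τ with hQ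
  have e1 : ∫ ξ, g ξ * Φ ξ ∂m = (Q : ℂ) := by
    have h1 : ∀ ξ, g ξ * Φ ξ = ∫ t, (starRingEnd ℂ) (V t) * e t ξ * g ξ ∂τ := fun ξ => by
      rw [hΦ, mul_comm, ← integral_mul_const]
    simp_rw [h1]
    rw [← integral_integral_swap]
    · rw [hQ, ← integral_complex_ofReal]
      refine integral_congr_ae (Filter.Eventually.of_forall fun t => ?_)
      simp only [mul_assoc]
      rw [integral_const_mul]
      change (starRingEnd ℂ) (V t) * V t = _
      rw [mul_comm, Complex.mul_conj, Complex.normSq_eq_norm_sq]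
    · refine Integrable.of_bound (C := G * M * G) ?_ (Filter.Eventually.of_forall fun p => ?_)
      · exact (hVe.mul (hg.comp_measurable measurable_snd)).aestronglyMeasurable
      · simp only [Function.uncurry]
        rw [norm_mul]
        exact mul_le_mul (hVeb _ _) (hG _) (norm_nonneg _) (by positivity)
  -- the kernel
  set K : Ω → Ω → ℂ := fun t t' => ∫ ξ, e t ξ * (starRingEnd ℂ) (e t' ξ) ∂m with hKdef
  have hKm : StronglyMeasurable (Function.uncurry K) := by
    have : StronglyMeasurable (Function.uncurry fun (p : Ω × Ω) (ξ : X) =>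
        e p.1 ξ * (starRingEnd ℂ) (e p.2 ξ)) := by
      refine StronglyMeasurable.mul (f := fun q : (Ω × Ω) × X => e q.1.1 q.2) (g := fun q : (Ω × Ω) × X => (starRingEnd ℂ) (e q.1.2 q.2)) ?_ ?_
      · exact he.comp_measurable (g := fun q : (Ω × Ω) × X => (q.1.1, q.2)) (by fun_prop)
      · exact Complex.continuous_conj.comp_stronglyMeasurable
          (he.comp_measurable (g := fun q : (Ω × Ω) × X => (q.1.2, q.2)) (by fun_prop))
    exact this.integral_prod_right
  have hKb : ∀ t t', ‖K t t'‖ ≤ M := fun t t' => by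
    have := norm_integral_le_of_norm_le_const (μ := m) (C := 1)
      (f := fun ξ => e t ξ * (starRingEnd ℂ) (e t' ξ)) (Filter.Eventually.of_forall fun ξ => by
        rw [norm_mul, RCLike.norm_conj]
        calc _ ≤ (1 : ℝ) * 1 := mul_le_mul (hb t ξ) (hb t' ξ) (norm_nonneg _) zero_le_one
          _ = 1 := one_mul _)
    simpa using this
  have hKs : ∀ t t', ‖K t t'‖ = ‖K t' t‖ := fun t t' => by
    rw [← RCLike.norm_conj]
    simp only [hKdef]
    rw [← integral_conj]
    congr 2
    ext ξ
    simp [mul_comm]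
  have e2 : ((∫ ξ, ‖Φ ξ‖ ^ 2 ∂m : ℝ) : ℂ) =
      ∫ t, (starRingEnd ℂ) (V t) * ∫ t', V t' * K t t' ∂τ ∂τ := by
    have h1 : ∀ ξ, ((‖Φ ξ‖ ^ 2 : ℝ) : ℂ) = ∫ t, (starRingEnd ℂ) (V t) * e t ξ * (starRingEnd ℂ) (Φ ξ) ∂τ := fun ξ => by
      rw [integral_mul_const]
      change _ = Φ ξ * _
      rw [Complex.mul_conj, Complex.normSq_eq_norm_sq]
    rw [← integral_complex_ofReal]
    simp_rw [h1]
    rw [← integral_integral_swap]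
    · refine integral_congr_ae (Filter.Eventually.of_forall fun t => ?_)
      simp only [mul_assoc]
      rw [integral_const_mul]
      congr 1
      have h2 : ∀ ξ, e t ξ * (starRingEnd ℂ) (Φ ξ) = ∫ t', V t' * (e t ξ * (starRingEnd ℂ) (e t' ξ)) ∂τ := fun ξ => by
        rw [hΦ, ← integral_conj, ← integral_const_mul]
        refine integral_congr_ae (Filter.Eventually.of_forall fun t' => ?_)
        simp only [map_mul, Complex.conj_conj]; ring
      simp_rw [h2]
      rw [← integral_integral_swap]
      · refine integral_congr_ae (Filter.Eventually.of_forall fun t' => ?_)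
        simp only
        rw [integral_const_mul]
      · refine Integrable.of_bound (C := G * M * (1 * 1)) ?_ (Filter.Eventually.of_forall fun p => ?_)
        · refine StronglyMeasurable.aestronglyMeasurable ?_
          refine (hVm.comp_measurable measurable_fst).mul (StronglyMeasurable.mul
            (f := fun p : Ω × X => e t p.2) (g := fun p : Ω × X => (starRingEnd ℂ) (e p.1 p.2)) ?_ ?_)
          · exact he.comp_measurable (g := fun p : Ω × X => (t, p.2)) (by fun_prop)
          · exact Complex.continuous_conj.comp_stronglyMeasurable he
        · simp only [Function.uncurry]
          rw [norm_mul, norm_mul, RCLike.norm_conj]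
          exact mul_le_mul (hVb _) (mul_le_mul (hb _ _) (hb _ _) (norm_nonneg _) zero_le_one)
            (by positivity) (by positivity)
    · refine Integrable.of_bound (C := G * M * (G * M * S)) ?_ (Filter.Eventually.of_forall fun p => ?_)
      · exact (hVe.mul (hconjΦ.comp_measurable measurable_snd)).aestronglyMeasurable
      · simp only [Function.uncurry]
        rw [norm_mul, RCLike.norm_conj]
        exact mul_le_mul (hVeb _ _) (hΦb _) (norm_nonneg _) (by positivity)
  -- bound
  have hV2 : Integrable (fun t => ‖V t‖ ^ 2) τ :=
    Integrable.of_bound (C := (G * M) ^ 2) (hVm.norm.pow 2).aestronglyMeasurable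
      (Filter.Eventually.of_forall fun t => by
        rw [Real.norm_eq_abs, abs_of_nonneg (by positivity)]
        exact pow_le_pow_left₀ (norm_nonneg _) (hVb t) 2)
  have hK1 : ∀ t, Integrable (fun t' => ‖K t t'‖) τ := fun t =>
    Integrable.of_bound (C := M) ((hKm.comp_measurable (g := fun t' => (t, t')) (by fun_prop)).norm).aestronglyMeasurable
      (Filter.Eventually.of_forall fun t' => by rw [norm_norm]; exact hKb t t')
  have hVK : Integrable (Function.uncurry fun t t' => ‖V t'‖ ^ 2 * ‖K t t'‖) (τ.prod τ) := by
    refine Integrable.of_bound (C := (G * M) ^ 2 * M) ?_ (Filter.Eventually.of_forall fun p => ?_)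
    · exact (((hVm.norm.pow 2).comp_measurable measurable_snd).mul hKm.norm).aestronglyMeasurable
    · simp only [Function.uncurry]
      rw [Real.norm_eq_abs, abs_of_nonneg (by positivity)]
      exact mul_le_mul (pow_le_pow_left₀ (norm_nonneg _) (hVb _) 2) (hKb _ _) (norm_nonneg _) (by positivity)
  have hVK' : ∀ t, Integrable (fun t' => ‖V t'‖ ^ 2 * ‖K t t'‖) τ := fun t =>
    Integrable.of_bound (C := (G * M) ^ 2 * M)
      ((hVm.norm.pow 2).mul (hKm.comp_measurable (g := fun t' => (t, t')) (by fun_prop)).norm).aestronglyMeasurable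
      (Filter.Eventually.of_forall fun t' => by
        rw [Real.norm_eq_abs, abs_of_nonneg (by positivity)]
        exact mul_le_mul (pow_le_pow_left₀ (norm_nonneg _) (hVb _) 2) (hKb _ _) (norm_nonneg _) (by positivity))
  have e3 : ∫ t, ∫ t', ‖V t'‖ ^ 2 * ‖K t t'‖ ∂τ ∂τ ≤ κ * Q := by
    rw [integral_integral_swap hVK, hQ, ← integral_const_mul]
    refine integral_mono_ae hVK.integral_prod_right (hV2.const_mul κ) ?_
    filter_upwards [hK] with t' ht'
    rw [integral_const_mul]
    simp_rw [hKs _ t']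
    nlinarith [sq_nonneg ‖V t'‖]
  have e4 : ∫ t, ∫ t', ‖V t‖ ^ 2 * ‖K t t'‖ ∂τ ∂τ ≤ κ * Q := by
    simp_rw [integral_const_mul]
    rw [hQ, ← integral_const_mul]
    refine integral_mono_of_nonneg (Filter.Eventually.of_forall fun t => ?_) (hV2.const_mul κ) ?_
    · have : 0 ≤ ∫ t', ‖K t t'‖ ∂τ := integral_nonneg fun _ => norm_nonneg _
      positivity
    filter_upwards [hK] with t' ht'
    nlinarith [sq_nonneg ‖V t'‖]
  have hVKa : Integrable (Function.uncurry fun t t' => ‖V t‖ ^ 2 * ‖K t t'‖) (τ.prod τ) := by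
    refine Integrable.of_bound (C := (G * M) ^ 2 * M) ?_ (Filter.Eventually.of_forall fun p => ?_)
    · exact (((hVm.norm.pow 2).comp_measurable measurable_fst).mul hKm.norm).aestronglyMeasurable
    · simp only [Function.uncurry]
      rw [Real.norm_eq_abs, abs_of_nonneg (by positivity)]
      exact mul_le_mul (pow_le_pow_left₀ (norm_nonneg _) (hVb _) 2) (hKb _ _) (norm_nonneg _) (by positivity)
  have hI1 : Integrable (fun t => 1 / 2 * (∫ t', ‖V t‖ ^ 2 * ‖K t t'‖ ∂τ)) τ := hVKa.integral_prod_left.const_mul _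
  have hI2 : Integrable (fun t => 1 / 2 * (∫ t', ‖V t'‖ ^ 2 * ‖K t t'‖ ∂τ)) τ := hVK.integral_prod_left.const_mul _
  have e5 : ∫ ξ, ‖Φ ξ‖ ^ 2 ∂m ≤ κ * Q := by
    have h0 : 0 ≤ ∫ ξ, ‖Φ ξ‖ ^ 2 ∂m := integral_nonneg fun _ => by positivity
    have h1 : ∫ ξ, ‖Φ ξ‖ ^ 2 ∂m = ‖((∫ ξ, ‖Φ ξ‖ ^ 2 ∂m : ℝ) : ℂ)‖ := by
      rw [Complex.norm_real, Real.norm_eq_abs, abs_of_nonneg h0]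
    rw [h1, e2]
    have h2 : ∀ t, ‖(starRingEnd ℂ) (V t) * ∫ t', V t' * K t t' ∂τ‖ ≤
        1 / 2 * (∫ t', ‖V t‖ ^ 2 * ‖K t t'‖ ∂τ) + 1 / 2 * ∫ t', ‖V t'‖ ^ 2 * ‖K t t'‖ ∂τ := fun t => by
      rw [norm_mul, RCLike.norm_conj, ← integral_const_mul, ← integral_const_mul,
        ← integral_add (((hK1 t).const_mul _).const_mul _) ((hVK' t).const_mul _)]
      calc _ ≤ ‖V t‖ * ∫ t', ‖V t' * K t t'‖ ∂τ := by gcongr; exact norm_integral_le_integral_norm _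
        _ = ∫ t', ‖V t‖ * ‖V t' * K t t'‖ ∂τ := by rw [integral_const_mul]
        _ ≤ _ := by
          refine integral_mono_of_nonneg (Filter.Eventually.of_forall fun t' => by positivity)
            ((((hK1 t).const_mul _).const_mul _).add ((hVK' t).const_mul _))
            (Filter.Eventually.of_forall fun t' => ?_)
          simp only [norm_mul]
          nlinarith [mul_nonneg (sq_nonneg (‖V t‖ - ‖V t'‖)) (norm_nonneg (K t t'))]
    calc _ ≤ ∫ t, ‖(starRingEnd ℂ) (V t) * ∫ t', V t' * K t t' ∂τ‖ ∂τ := norm_integral_le_integral_norm _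
      _ ≤ ∫ t, (1 / 2 * (∫ t', ‖V t‖ ^ 2 * ‖K t t'‖ ∂τ) + 1 / 2 * ∫ t', ‖V t'‖ ^ 2 * ‖K t t'‖ ∂τ) ∂τ := by
          refine integral_mono_of_nonneg (Filter.Eventually.of_forall fun t' => by positivity)
            (hI1.add hI2) (Filter.Eventually.of_forall h2)
      _ ≤ κ * Q := by
          rw [integral_add hI1 hI2, integral_const_mul, integral_const_mul]
          linarith
  -- conclusion
  have hg2 : Integrable (fun ξ => ‖g ξ‖ ^ 2) m :=
    Integrable.of_bound (C := G ^ 2) (hg.norm.pow 2).aestronglyMeasurable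
      (Filter.Eventually.of_forall fun t => by
        rw [Real.norm_eq_abs, abs_of_nonneg (by positivity)]
        exact pow_le_pow_left₀ (norm_nonneg _) (hG t) 2)
  have hΦ2 : Integrable (fun ξ => ‖Φ ξ‖ ^ 2) m :=
    Integrable.of_bound (C := (G * M * S) ^ 2) (hΦm.norm.pow 2).aestronglyMeasurable
      (Filter.Eventually.of_forall fun t => by
        rw [Real.norm_eq_abs, abs_of_nonneg (by positivity)]
        exact pow_le_pow_left₀ (norm_nonneg _) (hΦb t) 2)
  have e6 : Q ≤ ∫ ξ, (κ / 2 * ‖g ξ‖ ^ 2 + 1 / (2 * κ) * ‖Φ ξ‖ ^ 2) ∂m := by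
    have hQ0 : 0 ≤ Q := integral_nonneg fun _ => by positivity
    have h1 : Q = ‖(Q : ℂ)‖ := by rw [Complex.norm_real, Real.norm_eq_abs, abs_of_nonneg hQ0]
    rw [h1, ← e1]
    refine (norm_integral_le_integral_norm _).trans ?_
    refine integral_mono_of_nonneg (Filter.Eventually.of_forall fun t' => by positivity)
            ((hg2.const_mul _).add (hΦ2.const_mul _)) (Filter.Eventually.of_forall fun ξ => ?_)
    simp only [norm_mul]
    have : 0 ≤ 1 / (2 * κ) * (κ * ‖g ξ‖ - ‖Φ ξ‖) ^ 2 := by positivity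
    have h2 : 1 / (2 * κ) * (κ * ‖g ξ‖ - ‖Φ ξ‖) ^ 2 = κ / 2 * ‖g ξ‖ ^ 2 + 1 / (2 * κ) * ‖Φ ξ‖ ^ 2 - ‖g ξ‖ * ‖Φ ξ‖ := by
      field_simp; ring
    linarith
  rw [integral_add (hg2.const_mul _) (hΦ2.const_mul _), integral_const_mul, integral_const_mul] at e6
  have e7 : 1 / (2 * κ) * ∫ ξ, ‖Φ ξ‖ ^ 2 ∂m ≤ Q / 2 := by
    calc _ ≤ 1 / (2 * κ) * (κ * Q) := by gcongr
      _ = Q / 2 := by field_simp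
  linarith

lemma int_abs_rpow {s a b t : ℝ} (hs : 0 < s) (ht : t ∈ Set.Icc a b) :
    IntervalIntegrable (fun t' => |t - t'| ^ (s - 1)) volume a b ∧
    ∫ t' in a..b, |t - t'| ^ (s - 1) ≤ 2 / s * (b - a) ^ s := by
  have hr : ∀ c, IntervalIntegrable (fun x : ℝ => x ^ (s - 1)) volume 0 c := fun c =>
    intervalIntegral.intervalIntegrable_rpow' (by linarith)
  have h1 : IntervalIntegrable (fun t' => (t - t') ^ (s - 1)) volume a t := by
    have := (hr (t - a)).comp_sub_left t
    simp only [sub_zero, sub_sub_cancel] at this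
    exact this.symm
  have h2 : IntervalIntegrable (fun t' => (t' - t) ^ (s - 1)) volume t b := by
    have := (hr (b - t)).comp_sub_right t
    simpa using this
  have c1 : Set.EqOn (fun t' => (t - t') ^ (s - 1)) (fun t' => |t - t'| ^ (s - 1)) (Set.uIoc a t) := by
    intro x hx
    rw [Set.uIoc_of_le ht.1] at hx
    simp only
    rw [abs_of_nonneg (by linarith [hx.2])]
  have c2 : Set.EqOn (fun t' => (t' - t) ^ (s - 1)) (fun t' => |t - t'| ^ (s - 1)) (Set.uIoc t b) := by
    intro x hx
    rw [Set.uIoc_of_le ht.2] at hx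
    simp only
    rw [abs_sub_comm, abs_of_nonneg (by linarith [hx.1])]
  have i1 := h1.congr c1
  have i2 := h2.congr c2
  refine ⟨i1.trans i2, ?_⟩
  have j1 := intervalIntegral.integral_congr_ae (μ := volume) (Filter.Eventually.of_forall fun x hx => c1 hx)
  have j2 := intervalIntegral.integral_congr_ae (μ := volume) (Filter.Eventually.of_forall fun x hx => c2 hx)
  rw [← intervalIntegral.integral_add_adjacent_intervals i1 i2,
    ← j1, ← j2,
    intervalIntegral.integral_comp_sub_left (fun x => x ^ (s - 1)),
    intervalIntegral.integral_comp_sub_right (fun x => x ^ (s - 1)), sub_self,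
    integral_rpow (Or.inl (by linarith)), integral_rpow (Or.inl (by linarith))]
  simp only [sub_add_cancel, Real.zero_rpow hs.ne', sub_zero]
  have e1 : (t - a) ^ s ≤ (b - a) ^ s := Real.rpow_le_rpow (by linarith [ht.1]) (by linarith [ht.2]) hs.le
  have e2 : (b - t) ^ s ≤ (b - a) ^ s := Real.rpow_le_rpow (by linarith [ht.2]) (by linarith [ht.1]) hs.le
  calc _ ≤ (b - a) ^ s / s + (b - a) ^ s / s := by gcongr
    _ = _ := by ring

lemma min_interp {a b c s : ℝ} (hs : 0 ≤ s) (hs1 : s ≤ 1) (hc : 0 ≤ c) (h1 : c ≤ a) (h2 : c ≤ b) :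
    c ≤ a ^ s * b ^ (1 - s) := by
  calc c = c ^ s * c ^ (1 - s) := by
        rw [← Real.rpow_add_of_nonneg hc hs (by linarith)]; simp
    _ ≤ _ := by
      have : 0 ≤ 1 - s := by linarith
      have := hc.trans h1
      gcongr

/-- the propagated characters -/
def ee (ν a : ℝ) (x : ℝ → E2) (t : ℝ) (ξ : E2) : ℂ :=
  Complex.exp (Complex.I * ((2 * Real.pi * inner ℝ ξ (x t) - (t - a) * hh ν ‖ξ‖ : ℝ) : ℂ))

lemma norm_exp_I_mul (r : ℝ) : ‖Complex.exp (Complex.I * (r : ℂ))‖ = 1 := by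
  rw [mul_comm]; exact Complex.norm_exp_ofReal_mul_I r

lemma ee_meas (ν a : ℝ) {x : ℝ → E2} (hx : Measurable x) :
    StronglyMeasurable (Function.uncurry (ee ν a x)) := by
  refine Measurable.stronglyMeasurable ?_
  have := (continuous_hh ν).measurable
  unfold ee Function.uncurry
  fun_prop

lemma ee_ker (ν a N : ℝ) (x : ℝ → E2) (t t' : ℝ) :
    ∫ ξ in ann N, ee ν a x t ξ * (starRingEnd ℂ) (ee ν a x t' ξ) = ker2 ν (t - t') N (x t - x t') := by
  unfold ker2
  refine integral_congr_ae (Filter.Eventually.of_forall fun ξ => ?_)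
  simp only [ee]
  rw [← Complex.exp_conj, ← Complex.exp_add, map_mul, Complex.conj_I, Complex.conj_ofReal, inner_sub_right]
  congr 1
  push_cast; ring

lemma str_hom {s : ℝ} (hs : 0 < s) (hs1 : s < 1) : ∃ C : ℝ, 0 < C ∧ ∀ ν N q a b : ℝ, 0 < ν → 0 < N → 1 ≤ q →
    ν * N ≤ q ^ 2 → a < b → ∀ x : ℝ → E2, Measurable x → ∀ g : E2 → ℂ, StronglyMeasurable g → ∀ G : ℝ,
    (∀ ξ, ‖g ξ‖ ≤ G) → 
    ∫ t in Set.Ioc a b, ‖∫ ξ in ann N, ee ν a x t ξ * g ξ‖ ^ 2 ≤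
      (C * N ^ (2 * s) * (q ^ 3 / ν) ^ (1 - s) * (b - a) ^ s) * ∫ ξ in ann N, ‖g ξ‖ ^ 2 := by
  obtain ⟨C, hC, hker⟩ := ker2_bound
  refine ⟨(4 * Real.pi) ^ s * C ^ (1 - s) * (2 / s), by positivity, ?_⟩
  intro ν N q a b hν hN hq hM hab x hx g hg G hG
  have hba : 0 < b - a := by linarith
  have : IsFiniteMeasure (volume.restrict (ann N)) := ⟨by simpa using ann_volume_lt_top N⟩
  refine tt_star (volume.restrict (Set.Ioc a b)) (volume.restrict (ann N)) (ee_meas ν a hx)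
    (fun t ξ => (norm_exp_I_mul _).le) hg hG (by positivity) ?_
  refine ae_restrict_of_forall_mem measurableSet_Ioc fun t ht => ?_
  simp_rw [ee_ker]
  obtain ⟨hi, hle⟩ := int_abs_rpow hs (Set.Ioc_subset_Icc_self ht)
  rw [intervalIntegral.integral_of_le hab.le] at hle
  rw [intervalIntegrable_iff_integrableOn_Ioc_of_le hab.le] at hi
  have hD : 0 ≤ (4 * Real.pi * N ^ 2) ^ s * (C * q ^ 3 / ν) ^ (1 - s) := by positivity
  calc ∫ t' in Set.Ioc a b, ‖ker2 ν (t - t') N (x t - x t')‖ 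
      ≤ ∫ t' in Set.Ioc a b, ((4 * Real.pi * N ^ 2) ^ s * (C * q ^ 3 / ν) ^ (1 - s)) * |t - t'| ^ (s - 1) := by
        refine integral_mono_of_nonneg (Filter.Eventually.of_forall fun _ => norm_nonneg _) (hi.const_mul _) ?_
        have hne : ∀ᵐ t' ∂(volume.restrict (Set.Ioc a b)), t' ≠ t :=
          ae_restrict_of_ae (by simp [ae_iff])
        filter_upwards [hne] with t' ht'
        have htt : 0 < |t - t'| := abs_pos.2 (sub_ne_zero.2 (Ne.symm ht'))
        refine (min_interp hs.le hs1.le (norm_nonneg _) (ker2_triv hN _)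
          (hker ν N q (t - t') hν hN hq hM (sub_ne_zero.2 (Ne.symm ht')) _)).trans (le_of_eq ?_)
        rw [show C * q ^ 3 / (ν * |t - t'|) = (C * q ^ 3 / ν) * |t - t'|⁻¹ by field_simp,
          Real.mul_rpow (x := C * q ^ 3 / ν) (by positivity) (by positivity), Real.inv_rpow htt.le,
          ← Real.rpow_neg htt.le, neg_sub]
        ring
    _ ≤ ((4 * Real.pi * N ^ 2) ^ s * (C * q ^ 3 / ν) ^ (1 - s)) * (2 / s * (b - a) ^ s) := by
        rw [integral_const_mul]; gcongr
    _ = _ := by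
        rw [Real.mul_rpow (by positivity) (by positivity), mul_div_assoc, Real.mul_rpow hC.le (by positivity),
          ← Real.rpow_natCast N 2, ← Real.rpow_mul hN.le]
        push_cast; ring

lemma sq_integral_le {a b : ℝ} {f : ℝ → ℝ} (hab : a ≤ b) (hf : IntegrableOn (fun s => f s ^ 2) (Set.Ioc a b))
    (hf1 : IntegrableOn f (Set.Ioc a b)) :
    (∫ s in Set.Ioc a b, f s) ^ 2 ≤ (b - a) * ∫ s in Set.Ioc a b, f s ^ 2 := by
  rcases eq_or_lt_of_le hab with rfl | hab
  · simp
  set c := ∫ s in Set.Ioc a b, f s with hc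
  have hba : 0 < b - a := by linarith
  set d := c / (b - a) with hd
  have h0 : 0 ≤ ∫ s in Set.Ioc a b, (f s - d) ^ 2 := integral_nonneg fun _ => sq_nonneg _
  have h1 : ∫ s in Set.Ioc a b, (f s - d) ^ 2 = (∫ s in Set.Ioc a b, f s ^ 2) - 2 * d * c + d ^ 2 * (b - a) := by
    have : ∀ s, (f s - d) ^ 2 = f s ^ 2 - 2 * d * f s + d ^ 2 := fun s => by ring
    simp_rw [this]
    have i1 : IntegrableOn (fun s => 2 * d * f s) (Set.Ioc a b) := hf1.const_mul _
    have i2 : IntegrableOn (fun s => f s ^ 2 - 2 * d * f s) (Set.Ioc a b) := hf.sub i1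
    rw [integral_add i2 (integrable_const _), integral_sub hf i1, integral_const_mul]
    simp [hab.le]
    ring
  rw [h1] at h0
  have h2 : d * (b - a) = c := by rw [hd]; field_simp
  nlinarith

lemma str_inh {s : ℝ} (hs : 0 < s) (hs1 : s < 1) : ∃ C : ℝ, 0 < C ∧ ∀ ν N q a b : ℝ, 0 < ν → 0 < N → 1 ≤ q →
    ν * N ≤ q ^ 2 → a < b → ∀ x : ℝ → E2, Measurable x → ∀ U F : ℝ → E2 → ℂ, Continuous (Function.uncurry U) →
    Continuous (Function.uncurry F) → ∀ G : ℝ,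
    (∀ t ∈ Set.Icc a b, ∀ ξ, ‖U t ξ‖ ≤ G) → (∀ t ∈ Set.Icc a b, ∀ ξ, ‖F t ξ‖ ≤ G) → 
    (∀ t ∈ Set.Icc a b, ∀ ξ, U t ξ = Complex.exp (-(Complex.I * (((t - a) * hh ν ‖ξ‖ : ℝ) : ℂ))) *
      (U a ξ - Complex.I * ∫ τ in a..t, Complex.exp (Complex.I * (((τ - a) * hh ν ‖ξ‖ : ℝ) : ℂ)) * F τ ξ)) →
    ∫ t in Set.Ioc a b, ‖∫ ξ in ann N, Complex.exp (Complex.I * ((2 * Real.pi * inner ℝ ξ (x t) : ℝ) : ℂ)) * U t ξ‖ ^ 2 ≤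
      (C * N ^ (2 * s) * (q ^ 3 / ν) ^ (1 - s) * (b - a) ^ s) * ((∫ ξ in ann N, ‖U a ξ‖ ^ 2) +
        (b - a) * ∫ t in Set.Ioc a b, ∫ ξ in ann N, ‖F t ξ‖ ^ 2) := by
  obtain ⟨C, hC, hom⟩ := str_hom hs hs1
  refine ⟨2 * C, by positivity, ?_⟩
  intro ν N q a b hν hN hq hM hab x hx U F hU hF G hUG hFG hduh
  have hba : 0 < b - a := by linarith
  have hG0 : 0 ≤ G := (norm_nonneg _).trans (hUG a ⟨le_rfl, hab.le⟩ 0)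
  have : IsFiniteMeasure (volume.restrict (ann N)) := ⟨by simpa using ann_volume_lt_top N⟩
  set κ := C * N ^ (2 * s) * (q ^ 3 / ν) ^ (1 - s) * (b - a) ^ s with hκ
  have hκ0 : 0 ≤ κ := by positivity
  set f : ℝ → E2 → ℂ := fun τ ξ => Complex.exp (Complex.I * (((τ - a) * hh ν ‖ξ‖ : ℝ) : ℂ)) * F τ ξ with hf
  have hhc := continuous_hh ν
  have hfc : Continuous (Function.uncurry f) := by
    have : Function.uncurry f = fun p : ℝ × E2 => Complex.exp (Complex.I * (((p.1 - a) * hh ν ‖p.2‖ : ℝ) : ℂ)) * Function.uncurry F p := rfl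
    rw [this]; fun_prop
  have hfn : ∀ τ ξ, ‖f τ ξ‖ = ‖F τ ξ‖ := fun τ ξ => by
    simp only [hf]; rw [norm_mul, norm_exp_I_mul, one_mul]
  have hUa : StronglyMeasurable (U a) := (hU.comp (by fun_prop : Continuous fun ξ : E2 => (a, ξ))).stronglyMeasurable
  have hfs : ∀ τ, StronglyMeasurable (f τ) := fun τ =>
    (hfc.comp (by fun_prop : Continuous fun ξ : E2 => (τ, ξ))).stronglyMeasurable
  have hft : ∀ ξ, Continuous (fun τ => f τ ξ) := fun ξ =>
    (hfc.comp (by fun_prop : Continuous fun τ : ℝ => (τ, ξ)))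
  set V : ℝ → ℂ := fun t => ∫ ξ in ann N, ee ν a x t ξ * U a ξ with hV
  set W : ℝ → ℝ → ℂ := fun t τ => ∫ ξ in ann N, ee ν a x t ξ * f τ ξ with hW
  have heem := ee_meas ν a hx
  set M : ℝ := (volume.restrict (ann N)).real Set.univ with hMM
  have hM0 : 0 ≤ M := measureReal_nonneg
  have hen : ∀ t ξ, ‖ee ν a x t ξ‖ = 1 := fun t ξ => norm_exp_I_mul _
  have hVb : ∀ t, ‖V t‖ ≤ G * M := fun t => by
    refine norm_integral_le_of_norm_le_const (Filter.Eventually.of_forall fun ξ => ?_)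
    rw [norm_mul, hen, one_mul]; exact hUG a ⟨le_rfl, hab.le⟩ ξ
  have hWb : ∀ t, ∀ τ ∈ Set.Icc a b, ‖W t τ‖ ≤ G * M := fun t τ hτ => by
    refine norm_integral_le_of_norm_le_const (Filter.Eventually.of_forall fun ξ => ?_)
    rw [norm_mul, hen, one_mul, hfn]; exact hFG τ hτ ξ
  have hVm : StronglyMeasurable V := by
    have : StronglyMeasurable (Function.uncurry fun t ξ => ee ν a x t ξ * U a ξ) :=
      heem.mul (hUa.comp_measurable measurable_snd)
    exact this.integral_prod_right
  have hWm : StronglyMeasurable (Function.uncurry W) := by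
    have : StronglyMeasurable (Function.uncurry fun (p : ℝ × ℝ) (ξ : E2) => ee ν a x p.1 ξ * f p.2 ξ) := by
      refine StronglyMeasurable.mul (f := fun q : (ℝ × ℝ) × E2 => ee ν a x q.1.1 q.2)
        (g := fun q : (ℝ × ℝ) × E2 => f q.1.2 q.2) ?_ ?_
      · exact heem.comp_measurable (g := fun q : (ℝ × ℝ) × E2 => (q.1.1, q.2)) (by fun_prop)
      · exact hfc.stronglyMeasurable.comp_measurable (g := fun q : (ℝ × ℝ) × E2 => (q.1.2, q.2)) (by fun_prop)
    exact this.integral_prod_right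
  have hWt : ∀ t, StronglyMeasurable (W t) := fun t =>
    hWm.comp_measurable (g := fun τ => (t, τ)) (by fun_prop)
  have hW2p : IntegrableOn (fun p : ℝ × ℝ => ‖W p.1 p.2‖ ^ 2) (Set.Ioc a b ×ˢ Set.Ioc a b) (volume.prod volume) := by
    refine IntegrableOn.of_bound (by rw [Measure.prod_prod]; simp; finiteness) (hWm.norm.pow 2).aestronglyMeasurable ((G * M) ^ 2) ?_
    refine ae_restrict_of_forall_mem (measurableSet_Ioc.prod measurableSet_Ioc) fun p hp => ?_
    rw [Real.norm_eq_abs, abs_of_nonneg (by positivity)]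
    exact pow_le_pow_left₀ (norm_nonneg _) (hWb _ _ (Set.Ioc_subset_Icc_self hp.2)) 2
  have hW2 : ∀ t, IntegrableOn (fun τ => ‖W t τ‖ ^ 2) (Set.Ioc a b) := fun t => by
    refine IntegrableOn.of_bound (by simp) ((hWt t).norm.pow 2).aestronglyMeasurable ((G * M) ^ 2) ?_
    refine ae_restrict_of_forall_mem measurableSet_Ioc fun p hp => ?_
    rw [Real.norm_eq_abs, abs_of_nonneg (by positivity)]
    exact pow_le_pow_left₀ (norm_nonneg _) (hWb _ _ (Set.Ioc_subset_Icc_self hp)) 2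
  have hW1 : ∀ t, IntegrableOn (fun τ => ‖W t τ‖) (Set.Ioc a b) := fun t => by
    refine IntegrableOn.of_bound (by simp) ((hWt t).norm).aestronglyMeasurable (G * M) ?_
    refine ae_restrict_of_forall_mem measurableSet_Ioc fun p hp => ?_
    rw [norm_norm]
    exact (hWb _ _ (Set.Ioc_subset_Icc_self hp))
  have hV2 : IntegrableOn (fun τ => ‖V τ‖ ^ 2) (Set.Ioc a b) := by
    refine IntegrableOn.of_bound (by simp) (hVm.norm.pow 2).aestronglyMeasurable ((G * M) ^ 2) ?_
    refine ae_restrict_of_forall_mem measurableSet_Ioc fun p hp => ?_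
    rw [Real.norm_eq_abs, abs_of_nonneg (by positivity)]
    exact pow_le_pow_left₀ (norm_nonneg _) (hVb _) 2
  -- pointwise decomposition
  have hpt : ∀ t ∈ Set.Ioc a b, ‖∫ ξ in ann N, Complex.exp (Complex.I * ((2 * Real.pi * inner ℝ ξ (x t) : ℝ) : ℂ)) * U t ξ‖ ^ 2 ≤
      2 * ‖V t‖ ^ 2 + 2 * (b - a) * ∫ τ in Set.Ioc a b, ‖W t τ‖ ^ 2 := by
    intro t ht
    have ht' := Set.Ioc_subset_Icc_self ht
    have : IsFiniteMeasure (volume.restrict (Set.uIoc a t)) := ⟨by simp⟩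
    have hprod : Integrable (Function.uncurry fun (τ : ℝ) (ξ : E2) => ee ν a x t ξ * f τ ξ)
        ((volume.restrict (Set.uIoc a t)).prod (volume.restrict (ann N))) := by
      refine Integrable.of_bound (C := G) ?_ ?_
      · refine StronglyMeasurable.aestronglyMeasurable ?_
        exact (heem.comp_measurable (g := fun p : ℝ × E2 => (t, p.2)) (by fun_prop)).mul hfc.stronglyMeasurable
      · rw [Measure.prod_restrict]
        refine ae_restrict_of_forall_mem (measurableSet_uIoc.prod (measurableSet_ann N)) fun p hp => ?_
        have h1 := hp.1
        rw [Set.uIoc_of_le ht.1.le] at h1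
        simp only [Function.uncurry]
        rw [norm_mul, hen, one_mul, hfn]
        exact hFG _ ⟨h1.1.le, h1.2.trans ht.2⟩ _
    have e1 : ∫ ξ in ann N, Complex.exp (Complex.I * ((2 * Real.pi * inner ℝ ξ (x t) : ℝ) : ℂ)) * U t ξ
        = V t - Complex.I * ∫ τ in a..t, W t τ := by
      have h1 : ∀ ξ, Complex.exp (Complex.I * ((2 * Real.pi * inner ℝ ξ (x t) : ℝ) : ℂ)) * U t ξ =
          ee ν a x t ξ * U a ξ - Complex.I * ∫ τ in a..t, ee ν a x t ξ * f τ ξ := fun ξ => by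
        rw [hduh t ht' ξ, intervalIntegral.integral_const_mul]
        have : ee ν a x t ξ = Complex.exp (Complex.I * ((2 * Real.pi * inner ℝ ξ (x t) : ℝ) : ℂ)) *
          Complex.exp (-(Complex.I * (((t - a) * hh ν ‖ξ‖ : ℝ) : ℂ))) := by
          rw [← Complex.exp_add, ee]; congr 1; push_cast; ring
        rw [this]; ring
      simp_rw [h1]
      rw [integral_sub, integral_const_mul, ← intervalIntegral_integral_swap hprod]
      · refine Integrable.of_bound (C := G) ?_ (Filter.Eventually.of_forall fun ξ => ?_)
        · exact ((heem.comp_measurable (g := fun ξ : E2 => (t, ξ)) (by fun_prop)).mul hUa).aestronglyMeasurable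
        · rw [norm_mul, hen, one_mul]; exact hUG a ⟨le_rfl, hab.le⟩ ξ
      · refine Integrable.const_mul ?_ _
        simp_rw [intervalIntegral.integral_of_le ht.1.le]
        rw [Set.uIoc_of_le ht.1.le] at hprod
        exact hprod.integral_prod_right
    have e2 : ‖∫ τ in a..t, W t τ‖ ≤ ∫ τ in Set.Ioc a b, ‖W t τ‖ := by
      rw [intervalIntegral.integral_of_le ht.1.le]
      refine (norm_integral_le_integral_norm _).trans ?_
      exact setIntegral_mono_set (hW1 t) (Filter.Eventually.of_forall fun _ => norm_nonneg _)
        (Filter.Eventually.of_forall (Set.Ioc_subset_Ioc_right ht.2))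
    have e3 := sq_integral_le hab.le (hW2 t) (hW1 t)
    rw [e1]
    have e4 : ‖V t - Complex.I * ∫ τ in a..t, W t τ‖ ≤ ‖V t‖ + ∫ τ in Set.Ioc a b, ‖W t τ‖ := by
      refine (norm_sub_le _ _).trans ?_
      rw [norm_mul, Complex.norm_I, one_mul]; gcongr
    have e5 := pow_le_pow_left₀ (norm_nonneg _) e4 2
    nlinarith [sq_nonneg (‖V t‖ - ∫ τ in Set.Ioc a b, ‖W t τ‖)]
  have hWint : IntegrableOn (fun t => ∫ τ in Set.Ioc a b, ‖W t τ‖ ^ 2) (Set.Ioc a b) := by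
    rw [IntegrableOn, ← Measure.prod_restrict] at hW2p
    exact hW2p.integral_prod_left
  have hF2 : IntegrableOn (fun τ => ∫ ξ in ann N, ‖F τ ξ‖ ^ 2) (Set.Ioc a b) := by
    refine IntegrableOn.of_bound (by simp) ?_ (G ^ 2 * M) ?_
    · exact ((hF.stronglyMeasurable.norm.pow 2).integral_prod_right).aestronglyMeasurable
    · refine ae_restrict_of_forall_mem measurableSet_Ioc fun τ hτ => ?_
      refine norm_integral_le_of_norm_le_const (Filter.Eventually.of_forall fun ξ => ?_)
      rw [Real.norm_eq_abs, abs_of_nonneg (by positivity)]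
      exact pow_le_pow_left₀ (norm_nonneg _) (hFG _ (Set.Ioc_subset_Icc_self hτ) _) 2
  calc _ ≤ ∫ t in Set.Ioc a b, (2 * ‖V t‖ ^ 2 + 2 * (b - a) * ∫ τ in Set.Ioc a b, ‖W t τ‖ ^ 2) := by
        refine integral_mono_of_nonneg (Filter.Eventually.of_forall fun _ => by positivity)
          ((hV2.const_mul _).add (hWint.const_mul _)) ?_
        exact ae_restrict_of_forall_mem measurableSet_Ioc hpt
    _ = 2 * (∫ t in Set.Ioc a b, ‖V t‖ ^ 2) + 2 * (b - a) * ∫ τ in Set.Ioc a b, ∫ t in Set.Ioc a b, ‖W t τ‖ ^ 2 := by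
        rw [integral_add (hV2.const_mul _) (hWint.const_mul _), integral_const_mul, integral_const_mul,
          integral_integral_swap]
        rw [IntegrableOn, ← Measure.prod_restrict] at hW2p
        exact hW2p
    _ ≤ 2 * (κ * ∫ ξ in ann N, ‖U a ξ‖ ^ 2) + 2 * (b - a) * ∫ τ in Set.Ioc a b, κ * ∫ ξ in ann N, ‖F τ ξ‖ ^ 2 := by
        have h1 := hom ν N q a b hν hN hq hM hab x hx (U a) hUa G (hUG a ⟨le_rfl, hab.le⟩)
        have h2 : ∫ τ in Set.Ioc a b, ∫ t in Set.Ioc a b, ‖W t τ‖ ^ 2 ≤ ∫ τ in Set.Ioc a b, κ * ∫ ξ in ann N, ‖F τ ξ‖ ^ 2 := by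
          refine integral_mono_of_nonneg (Filter.Eventually.of_forall fun _ => integral_nonneg fun _ => by positivity)
            (hF2.const_mul _) (ae_restrict_of_forall_mem measurableSet_Ioc fun τ hτ => ?_)
          have := hom ν N q a b hν hN hq hM hab x hx (f τ) (hfs τ) G (fun ξ => by
            rw [hfn]; exact hFG τ (Set.Ioc_subset_Icc_self hτ) ξ)
          simp_rw [hfn] at this
          exact this
        gcongr
    _ = _ := by rw [integral_const_mul]; ring

/-- measurable selection of a maximizer among the first points -/
def selx (H : ℝ → E2 → ℂ) (y : ℕ → E2) : ℕ → ℝ → E2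
  | 0 => fun _ => y 0
  | (n + 1) => fun t => if ‖H t (selx H y n t)‖ < ‖H t (y (n + 1))‖ then y (n + 1) else selx H y n t

lemma selx_meas {H : ℝ → E2 → ℂ} (hH : Measurable (Function.uncurry H)) (y : ℕ → E2) (n : ℕ) :
    Measurable (selx H y n) := by
  induction n with
  | zero => exact measurable_const
  | succ n ih =>
    unfold selx
    refine Measurable.ite (measurableSet_lt ?_ ?_) measurable_const ih
    · exact (hH.comp (measurable_id.prodMk ih)).norm
    · exact (hH.comp (measurable_id.prodMk measurable_const)).norm

lemma selx_succ (H : ℝ → E2 → ℂ) (y : ℕ → E2) (n : ℕ) (t : ℝ) :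
    ‖H t (selx H y n t)‖ ≤ ‖H t (selx H y (n+1) t)‖ ∧ ‖H t (y n)‖ ≤ ‖H t (selx H y n t)‖ := by
  constructor
  · simp only [selx]
    split_ifs with h
    · exact h.le
    · exact le_rfl
  · cases n with
    | zero => exact le_rfl
    | succ n =>
      simp only [selx]
      split_ifs with h
      · exact le_rfl
      · exact not_lt.1 h

lemma sup_bound {H : ℝ → E2 → ℂ} (hH : Measurable (Function.uncurry H)) (hHc : ∀ t, Continuous (H t))
    (τ : Measure ℝ) {B : ℝ≥0∞} (hB : ∀ x : ℝ → E2, Measurable x → ∫⁻ t, ‖H t (x t)‖ₑ ^ 2 ∂τ ≤ B) :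
    ∫⁻ t, (⨆ x, ‖H t x‖ₑ) ^ 2 ∂τ ≤ B ∧ Measurable (fun t => ⨆ x, ‖H t x‖ₑ) := by
  let y := TopologicalSpace.denseSeq E2
  have hm : ∀ n, Measurable (fun t => ‖H t (selx H y n t)‖ₑ) := fun n =>
    (hH.comp (measurable_id.prodMk (selx_meas hH y n))).enorm
  have hmono : Monotone (fun n t => ‖H t (selx H y n t)‖ₑ) := by
    refine monotone_nat_of_le_succ fun n t => ?_
    simp only [← ofReal_norm_eq_enorm]
    exact ENNReal.ofReal_le_ofReal (selx_succ H y n t).1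
  have hsup : ∀ t, (⨆ x, ‖H t x‖ₑ) = ⨆ n, ‖H t (selx H y n t)‖ₑ := by
    intro t
    refine le_antisymm (iSup_le fun x => ?_) (iSup_le fun n => le_iSup (fun x => ‖H t x‖ₑ) _)
    have hcl : IsClosed {x | ‖H t x‖ₑ ≤ ⨆ n, ‖H t (selx H y n t)‖ₑ} :=
      isClosed_le (hHc t).enorm continuous_const
    have hsub : Set.range y ⊆ {x | ‖H t x‖ₑ ≤ ⨆ n, ‖H t (selx H y n t)‖ₑ} := by
      rintro _ ⟨n, rfl⟩
      refine le_trans ?_ (le_iSup (fun n => ‖H t (selx H y n t)‖ₑ) n)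
      simp only [← ofReal_norm_eq_enorm]
      exact ENNReal.ofReal_le_ofReal (selx_succ H y n t).2
    exact hcl.closure_subset_iff.2 hsub ((TopologicalSpace.denseRange_denseSeq E2).closure_range ▸ Set.mem_univ x)
  simp_rw [hsup]
  refine ⟨?_, Measurable.iSup hm⟩
  have h2 : ∀ t, (⨆ n, ‖H t (selx H y n t)‖ₑ) ^ 2 = ⨆ n, ‖H t (selx H y n t)‖ₑ ^ 2 := fun t => by
    rw [ENNReal.iSup_pow_of_ne_zero two_ne_zero]
  simp_rw [h2]
  rw [lintegral_iSup (fun n => (hm n).pow_const 2) (fun i j hij t => pow_le_pow_left₀ zero_le (hmono hij t) 2)]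
  exact iSup_le fun n => hB _ (selx_meas hH y n)

/-- frequency-localized inverse Fourier transform -/
def pn (N : ℝ) (U : ℝ → E2 → ℂ) (t : ℝ) (x : E2) : ℂ :=
  ∫ ξ in ann N, Complex.exp (Complex.I * ((2 * Real.pi * inner ℝ ξ x : ℝ) : ℂ)) * U t ξ

lemma pn_meas (N : ℝ) {U : ℝ → E2 → ℂ} (hU : Continuous (Function.uncurry U)) :
    Measurable (Function.uncurry (pn N U)) := by
  have : StronglyMeasurable (Function.uncurry fun (p : ℝ × E2) (ξ : E2) =>
      Complex.exp (Complex.I * ((2 * Real.pi * inner ℝ ξ p.2 : ℝ) : ℂ)) * U p.1 ξ) := by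
    have h1 : Continuous (fun q : (ℝ × E2) × E2 => U q.1.1 q.2) :=
      hU.comp (by fun_prop : Continuous fun q : (ℝ × E2) × E2 => (q.1.1, q.2))
    have : Continuous (fun q : (ℝ × E2) × E2 => 
      Complex.exp (Complex.I * ((2 * Real.pi * inner ℝ q.2 q.1.2 : ℝ) : ℂ)) * U q.1.1 q.2) := by fun_prop
    exact this.stronglyMeasurable
  exact (this.integral_prod_right (ν := volume.restrict (ann N))).measurable

lemma ann_sub (N : ℝ) : ann N ⊆ Metric.closedBall 0 (2 * N) := fun ξ hξ => by
  simpa using hξ.2.le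

lemma pn_cont (N : ℝ) {U : ℝ → E2 → ℂ} (hU : Continuous (Function.uncurry U)) (t : ℝ) :
    Continuous (pn N U t) := by
  have hUt : Continuous (U t) := hU.comp (by fun_prop : Continuous fun ξ : E2 => (t, ξ))
  refine continuous_of_dominated (bound := fun ξ => ‖U t ξ‖) (fun x => ?_) (fun x => ?_) ?_ ?_
  · exact (by fun_prop : Continuous _).aestronglyMeasurable
  · refine Filter.Eventually.of_forall fun ξ => ?_
    rw [norm_mul, norm_exp_I_mul, one_mul]
  · exact (hUt.norm.continuousOn.integrableOn_compact (isCompact_closedBall 0 (2 * N))).mono_set (ann_sub N)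
  · refine Filter.Eventually.of_forall fun ξ => ?_
    fun_prop

lemma str_part {s : ℝ} (hs : 0 < s) (hs1 : s < 1) : ∃ C : ℝ, 0 < C ∧ ∀ ν N q T : ℝ, 0 < ν → 0 < N → 1 ≤ q →
    ν * N ≤ q ^ 2 → 0 < T → ∀ U F : ℝ → E2 → ℂ, Continuous (Function.uncurry U) →
    Continuous (Function.uncurry F) → ∀ G : ℝ,
    (∀ t ∈ Set.Icc 0 T, ∀ ξ, ‖U t ξ‖ ≤ G) → (∀ t ∈ Set.Icc 0 T, ∀ ξ, ‖F t ξ‖ ≤ G) → 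
    (∀ a t, 0 ≤ a → a ≤ t → t ≤ T → ∀ ξ, U t ξ = Complex.exp (-(Complex.I * (((t - a) * hh ν ‖ξ‖ : ℝ) : ℂ))) *
      (U a ξ - Complex.I * ∫ τ in a..t, Complex.exp (Complex.I * (((τ - a) * hh ν ‖ξ‖ : ℝ) : ℂ)) * F τ ξ)) →
    ∀ Su : ℝ, (∀ t ∈ Set.Icc 0 T, ∫ ξ in ann N, ‖U t ξ‖ ^ 2 ≤ Su) → ∀ J : ℕ, 0 < J →
    ∫⁻ t in Set.Ioc 0 T, (⨆ x, ‖pn N U t x‖ₑ) ^ 2 ≤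
      ENNReal.ofReal ((C * N ^ (2 * s) * (q ^ 3 / ν) ^ (1 - s) * (T / J) ^ s) * (J * Su +
        (T / J) * ∫ t in Set.Ioc 0 T, ∫ ξ in ann N, ‖F t ξ‖ ^ 2)) := by
  obtain ⟨C, hC, hin⟩ := str_inh hs hs1
  refine ⟨C, hC, ?_⟩
  intro ν N q T hν hN hq hM hT U F hU hF G hUG hFG hduh Su hSu J hJ
  have hJ0 : (0 : ℝ) < J := by exact_mod_cast hJ
  have : IsFiniteMeasure (volume.restrict (ann N)) := ⟨by simpa using ann_volume_lt_top N⟩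
  have hG0 : 0 ≤ G := (norm_nonneg _).trans (hUG 0 ⟨le_rfl, hT.le⟩ 0)
  set δ := T / J with hδ
  have hδ0 : 0 < δ := by positivity
  set κ := C * N ^ (2 * s) * (q ^ 3 / ν) ^ (1 - s) * δ ^ s with hκ
  have hκ0 : 0 ≤ κ := by positivity
  have hSu0 : 0 ≤ Su := (integral_nonneg fun _ => by positivity).trans (hSu 0 ⟨le_rfl, hT.le⟩)
  set φ : ℝ → ℝ := fun t => ∫ ξ in ann N, ‖F t ξ‖ ^ 2 with hφ
  have hφ0 : ∀ t, 0 ≤ φ t := fun t => integral_nonneg fun _ => by positivity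
  have hFi : IntegrableOn φ (Set.Ioc 0 T) := by
    refine IntegrableOn.of_bound (by simp) ?_ (G ^ 2 * (volume.restrict (ann N)).real Set.univ) ?_
    · exact ((hF.stronglyMeasurable.norm.pow 2).integral_prod_right).aestronglyMeasurable
    · refine ae_restrict_of_forall_mem measurableSet_Ioc fun τ hτ => ?_
      refine norm_integral_le_of_norm_le_const (Filter.Eventually.of_forall fun ξ => ?_)
      rw [Real.norm_eq_abs, abs_of_nonneg (by positivity)]
      exact pow_le_pow_left₀ (norm_nonneg _) (hFG _ (Set.Ioc_subset_Icc_self hτ) _) 2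
  have hUG' : ∀ t ∈ Set.Icc 0 T, ∀ x, ‖pn N U t x‖ ≤ G * (volume.restrict (ann N)).real Set.univ := fun t ht x => by
    refine norm_integral_le_of_norm_le_const (Filter.Eventually.of_forall fun ξ => ?_)
    rw [norm_mul, norm_exp_I_mul, one_mul]; exact hUG t ht ξ
  -- one interval
  have one : ∀ a b, 0 ≤ a → b ≤ T → b - a = δ → ∫⁻ t in Set.Ioc a b, (⨆ x, ‖pn N U t x‖ₑ) ^ 2 ≤
      ENNReal.ofReal (κ * (Su + δ * ∫ t in Set.Ioc a b, φ t)) := by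
    intro a b ha hb hab
    have hsub : Set.Icc a b ⊆ Set.Icc 0 T := Set.Icc_subset_Icc ha hb
    refine (sup_bound (pn_meas N hU) (pn_cont N hU) _ fun x hx => ?_).1
    have h1 := hin ν N q a b hν hN hq hM (by linarith) x hx U F hU hF G (fun t ht => hUG t (hsub ht))
      (fun t ht => hFG t (hsub ht)) (fun t ht => hduh a t ha ht.1 (ht.2.trans hb))
    rw [hab] at h1
    have h_itg : IntegrableOn (fun t => ‖pn N U t (x t)‖ ^ 2) (Set.Ioc a b) := by
      refine IntegrableOn.of_bound (by simp) ?_ ((G * (volume.restrict (ann N)).real Set.univ) ^ 2) ?_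
      · exact (((pn_meas N hU).comp (measurable_id.prodMk hx)).norm.pow_const 2).aestronglyMeasurable
      · refine ae_restrict_of_forall_mem measurableSet_Ioc fun t ht => ?_
        rw [Real.norm_eq_abs, abs_of_nonneg (by positivity)]
        exact pow_le_pow_left₀ (norm_nonneg _) (hUG' t (hsub (Set.Ioc_subset_Icc_self ht)) _) 2
    have h2 : ∫⁻ t in Set.Ioc a b, ‖pn N U t (x t)‖ₑ ^ 2 = ENNReal.ofReal (∫ t in Set.Ioc a b, ‖pn N U t (x t)‖ ^ 2) := by
      rw [ofReal_integral_eq_lintegral_ofReal h_itg (Filter.Eventually.of_forall fun _ => by positivity)]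
      refine lintegral_congr fun t => ?_
      rw [ENNReal.ofReal_pow (norm_nonneg _), ofReal_norm_eq_enorm]
    rw [h2]
    refine ENNReal.ofReal_le_ofReal (h1.trans ?_)
    have := hSu a (hsub ⟨le_rfl, by linarith⟩)
    gcongr
  -- induction
  have ind : ∀ j : ℕ, j ≤ J → ∫⁻ t in Set.Ioc 0 (j * δ), (⨆ x, ‖pn N U t x‖ₑ) ^ 2 ≤
      ENNReal.ofReal (κ * (j * Su + δ * ∫ t in Set.Ioc 0 (j * δ), φ t)) := by
    intro j
    induction j with
    | zero => intro _; simp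
    | succ j ih =>
      intro hj
      have h1 := ih (by omega)
      have hjT : ((j + 1 : ℕ) : ℝ) * δ ≤ T := by
        have : ((j + 1 : ℕ) : ℝ) ≤ J := by exact_mod_cast hj
        calc _ ≤ (J : ℝ) * δ := by gcongr
          _ = T := by rw [hδ]; field_simp
      have h2 := one (j * δ) ((j + 1 : ℕ) * δ) (by positivity) hjT (by push_cast; ring)
      have hle : (j : ℝ) * δ ≤ ((j + 1 : ℕ) : ℝ) * δ := by push_cast; nlinarith
      have hun : Set.Ioc 0 (((j + 1 : ℕ) : ℝ) * δ) = Set.Ioc 0 (j * δ) ∪ Set.Ioc (j * δ) (((j + 1 : ℕ) : ℝ) * δ) :=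
        (Set.Ioc_union_Ioc_eq_Ioc (by positivity) hle).symm
      have i1 : IntegrableOn φ (Set.Ioc 0 (j * δ)) := hFi.mono_set (Set.Ioc_subset_Ioc_right (hle.trans hjT))
      have i2 : IntegrableOn φ (Set.Ioc (j * δ) (((j + 1 : ℕ) : ℝ) * δ)) := hFi.mono_set (Set.Ioc_subset_Ioc (by positivity) hjT)
      have n1 : 0 ≤ ∫ t in Set.Ioc 0 (j * δ), φ t := integral_nonneg hφ0
      have n2 : 0 ≤ ∫ t in Set.Ioc (j * δ) (((j + 1 : ℕ) : ℝ) * δ), φ t := integral_nonneg hφ0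
      rw [hun]
      refine (lintegral_union_le _ _ _).trans ((add_le_add h1 h2).trans ?_)
      rw [← ENNReal.ofReal_add (by positivity) (by positivity),
        setIntegral_union (Set.Ioc_disjoint_Ioc_of_le le_rfl) measurableSet_Ioc i1 i2]
      refine ENNReal.ofReal_le_ofReal (le_of_eq ?_)
      push_cast; ring
  have := ind J le_rfl
  rwa [show (J : ℝ) * δ = T by rw [hδ]; field_simp] at this

lemma fourier_self_adj (f g : E2 → ℂ) (hf : Integrable f) (hg : Integrable g) :
    ∫ ξ, 𝓕 f ξ * g ξ = ∫ x, f x * 𝓕 g x := by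
  have := VectorFourier.integral_fourierIntegral_smul_eq_flip (L := innerₗ E2) (μ := volume)
    (ν := volume) (f := f) (g := g) Real.continuous_fourierChar
    continuous_inner hf hg
  simp only [flip_innerₗ, smul_eq_mul] at this
  exact this

lemma planch_aux (g : E2 → ℂ) (hg : Integrable g) (hm : MemLp (𝓕 g) 2) :
    eLpNorm g 2 volume ≤ eLpNorm (𝓕 g) 2 volume := by
  set G : Lp (α := E2) ℂ 2 volume := hm.toLp (𝓕 g) with hG
  have h1 : ∀ φ : 𝓢(E2, ℂ), ∫ x, φ x * (𝓕⁻ G : Lp (α := E2) ℂ 2 volume) x = ∫ x, φ x * g x := by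
    intro φ
    have e1 := Lp.toTemperedDistribution_apply (𝓕⁻ G : Lp (α := E2) ℂ 2 volume) φ
    rw [← Lp.fourierInv_toTemperedDistribution_eq, TemperedDistribution.fourierInv_apply,
      Lp.toTemperedDistribution_apply] at e1
    simp only [smul_eq_mul] at e1
    rw [← e1]
    have e2 : ∫ x, (𝓕⁻ φ : 𝓢(E2, ℂ)) x * G x = ∫ x, (𝓕⁻ φ : 𝓢(E2, ℂ)) x * 𝓕 g x := by
      apply integral_congr_ae
      filter_upwards [hm.coeFn_toLp] with x hx
      rw [hG, hx]
    rw [e2, ← fourier_self_adj _ _ (𝓕⁻ φ : 𝓢(E2, ℂ)).integrable hg, ← SchwartzMap.fourier_coe,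
      FourierTransform.fourier_fourierInv_eq]
  have h2 : ∀ᵐ x, (𝓕⁻ G : Lp (α := E2) ℂ 2 volume) x = g x := by
    apply ae_eq_of_integral_contDiff_smul_eq
    · exact (Lp.memLp (𝓕⁻ G : Lp (α := E2) ℂ 2 volume)).locallyIntegrable (by norm_num)
    · exact hg.locallyIntegrable
    · intro φ hφ hc
      have hc2 : HasCompactSupport (fun x => (φ x : ℂ)) := hc.comp_left (g := fun r : ℝ => (r:ℂ)) (by simp)
      have hs2 : ContDiff ℝ ((⊤ : ℕ∞) : WithTop ℕ∞) (fun x => (φ x : ℂ)) := Complex.ofRealCLM.contDiff.comp hφ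
      have := h1 (hc2.toSchwartzMap hs2)
      simpa using this
  have h3 : ‖(𝓕⁻ G : Lp (α := E2) ℂ 2 volume)‖ = ‖G‖ := by
    rw [← Lp.norm_fourier_eq (𝓕⁻ G : Lp (α := E2) ℂ 2 volume), FourierTransform.fourier_fourierInv_eq]
  have h4 : eLpNorm g 2 volume = eLpNorm (𝓕⁻ G : Lp (α := E2) ℂ 2 volume) 2 volume :=
    (eLpNorm_congr_ae h2).symm
  rw [h4, ← eLpNorm_congr_ae hm.coeFn_toLp]
  rw [Lp.norm_def, Lp.norm_def] at h3
  exact ((ENNReal.toReal_eq_toReal_iff' (Lp.eLpNorm_ne_top _) (Lp.eLpNorm_ne_top _)).1 h3).le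

lemma planch (g : E2 → ℂ) (hg : Integrable g) :
    eLpNorm g 2 volume ≤ eLpNorm (𝓕⁻ g) 2 volume := by
  have hc : Continuous (𝓕 g) :=
    VectorFourier.fourierIntegral_continuous Real.continuous_fourierChar continuous_inner hg
  have e : eLpNorm (𝓕⁻ g) 2 volume = eLpNorm (𝓕 g) 2 volume := by
    have : 𝓕⁻ g = 𝓕 g ∘ (fun x => -x) := by
      funext x; exact Real.fourierInv_eq_fourier_neg g x
    rw [this]
    exact eLpNorm_comp_measurePreserving hc.aestronglyMeasurable (Measure.measurePreserving_neg volume)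
  rw [e]
  by_cases h : eLpNorm (𝓕 g) 2 volume = ⊤
  · rw [h]; exact le_top
  · exact planch_aux g hg ⟨hc.aestronglyMeasurable, lt_top_iff_ne_top.2 h⟩

lemma sch_cont {v : ℝ → 𝓢(E2, ℂ)} (hv : Continuous v) :
    Continuous (Function.uncurry (fun t ξ => v t ξ)) := by
  have h1 : Continuous (fun t => toBoundedContinuousFunctionCLM ℂ E2 ℂ (v t)) :=
    (toBoundedContinuousFunctionCLM ℂ E2 ℂ).continuous.comp hv
  have h2 : Continuous (fun p : ℝ × E2 => (toBoundedContinuousFunctionCLM ℂ E2 ℂ (v p.1)) p.2) :=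
    (h1.comp continuous_fst).eval continuous_snd
  exact h2

lemma sch_bound {v : ℝ → 𝓢(E2, ℂ)} (hv : Continuous v) (k : ℕ) (T : ℝ) :
    ∃ G : ℝ, 0 < G ∧ ∀ t ∈ Set.Icc (0:ℝ) T, ∀ ξ, (1 + ‖ξ‖) ^ k * ‖v t ξ‖ ≤ G := by
  set p : Seminorm ℂ 𝓢(E2, ℂ) := (Finset.Iic (k, 0)).sup (schwartzSeminormFamily ℂ E2 ℂ) with hp
  have hpc : Continuous p :=
    Seminorm.continuous_finsetSup (fun i _ => (schwartz_withSeminorms ℂ E2 ℂ).continuous_seminorm i)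
  obtain ⟨B, hB⟩ := (isCompact_Icc (a := (0:ℝ)) (b := T)).exists_bound_of_continuousOn
    (f := fun t => p (v t)) (hpc.comp hv).continuousOn
  refine ⟨2 ^ k * (|B| + 1), by positivity, fun t ht ξ => ?_⟩
  have h1 := one_add_le_sup_seminorm_apply (𝕜 := ℂ) (m := (k, 0)) (k := k) (n := 0) le_rfl le_rfl (v t) ξ
  rw [norm_iteratedFDeriv_zero] at h1
  refine h1.trans ?_
  have h2 := hB t ht
  have h3 : p (v t) ≤ |B| + 1 := by
    have := (le_abs_self _).trans (h2.trans (le_abs_self B)); linarith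
  exact mul_le_mul_of_nonneg_left h3 (by positivity)

lemma hh_bound {ν r : ℝ} (hν : 0 < ν) (hr : 0 ≤ r) : |hh ν r| ≤ (1 / ν + 1) * (1 + r) := by
  unfold hh mm
  rw [abs_div, abs_of_nonneg (Real.sqrt_nonneg _), abs_of_pos hν, div_le_iff₀ hν]
  have h0 : 0 ≤ ν * r := by positivity
  have h1 : Real.sqrt (ν * r * Real.tanh (ν * r)) ≤ 1 + ν * r := by
    rw [Real.sqrt_le_left (by positivity)]
    nlinarith [mul_le_mul_of_nonneg_left (tanh_le_one' (ν * r)) h0]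
  refine h1.trans ?_
  have : (1 / ν + 1) * (1 + r) * ν = (1 + ν) * (1 + r) := by field_simp
  rw [this]; nlinarith

lemma duh_ode (h : ℝ) (y f : ℝ → ℂ) (hy : Continuous y) (hf : Continuous f) (a b : ℝ) (hab : a ≤ b)
    (H : ∀ t ∈ Set.Icc a b, y t = y a - Complex.I * ∫ τ in a..t, ((h:ℂ) * y τ + f τ)) :
    y b = Complex.exp (-(Complex.I * (((b - a) * h : ℝ) : ℂ))) *
      (y a - Complex.I * ∫ τ in a..b, Complex.exp (Complex.I * (((τ - a) * h : ℝ) : ℂ)) * f τ) := by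
  set Y : ℝ → ℂ := fun t => y a - Complex.I * ∫ τ in a..t, ((h:ℂ) * y τ + f τ) with hY
  have hYd : ∀ t, HasDerivAt Y (-(Complex.I * ((h:ℂ) * y t + f t))) t := by
    intro t
    have hc : Continuous (fun τ => (h:ℂ) * y τ + f τ) := by fun_prop
    have := (intervalIntegral.integral_hasDerivAt_right (hc.intervalIntegrable a t)
      (hc.stronglyMeasurableAtFilter _ _) hc.continuousAt)
    have h2 := (this.const_mul Complex.I).const_sub (y a)
    exact h2
  have hed : ∀ t : ℝ, HasDerivAt (fun t : ℝ => Complex.exp (Complex.I * (((t - a) * h : ℝ) : ℂ)))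
      (Complex.exp (Complex.I * (((t - a) * h : ℝ) : ℂ)) * (Complex.I * (h:ℂ))) t := by
    intro t
    have h1 : HasDerivAt (fun t : ℝ => (t - a) * h) h t := by
      simpa using ((hasDerivAt_id t).sub_const a).mul_const h
    exact ((h1.ofReal_comp).const_mul Complex.I).cexp
  have hEd : ∀ t ∈ Set.uIcc a b, HasDerivAt (fun t : ℝ => Complex.exp (Complex.I * (((t - a) * h : ℝ) : ℂ)) * Y t)
      (-Complex.I * (Complex.exp (Complex.I * (((t - a) * h : ℝ) : ℂ)) * f t)) t := by
    intro t ht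
    rw [Set.uIcc_of_le hab] at ht
    refine ((hed t).mul (hYd t)).congr_deriv ?_
    have : Y t = y t := (H t ht).symm
    rw [this]; ring
  have hci : Continuous (fun t : ℝ => -Complex.I * (Complex.exp (Complex.I * (((t - a) * h : ℝ) : ℂ)) * f t)) := by
    fun_prop
  have key := intervalIntegral.integral_eq_sub_of_hasDerivAt hEd (hci.intervalIntegrable a b)
  rw [intervalIntegral.integral_const_mul] at key
  have hYa : Y a = y a := by simp [hY]
  have hYb : Y b = y b := (H b ⟨hab, le_rfl⟩).symm
  rw [hYa, hYb] at key
  simp only [sub_self, zero_mul, Complex.ofReal_zero, mul_zero, Complex.exp_zero, one_mul] at key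
  have e1 : Complex.exp (-(Complex.I * (((b - a) * h : ℝ) : ℂ))) * Complex.exp (Complex.I * (((b - a) * h : ℝ) : ℂ)) = 1 := by
    rw [← Complex.exp_add]; simp
  have e2 : y a - Complex.I * ∫ τ in a..b, Complex.exp (Complex.I * (((τ - a) * h : ℝ) : ℂ)) * f τ
      = Complex.exp (Complex.I * (((b - a) * h : ℝ) : ℂ)) * y b := by
    linear_combination key
  rw [e2, ← mul_assoc, e1, one_mul]

lemma int_dec : Integrable (fun ξ : E2 => (1 + ‖ξ‖) ^ (-(3:ℝ))) := by
  apply integrable_one_add_norm; rw [finrank_euclideanSpace_fin]; norm_num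

lemma fub (R : ℝ → E2 → ℂ) (hR : Continuous (Function.uncurry R)) {a b : ℝ} (hab : a ≤ b) (G : ℝ)
    (bd : ∀ τ ∈ Set.Icc a b, ∀ ξ, ‖R τ ξ‖ ≤ G * (1 + ‖ξ‖) ^ (-(3:ℝ))) :
    Integrable (fun ξ => ∫ τ in a..b, R τ ξ) ∧ ∀ x, 
    IntervalIntegrable (fun τ => 𝓕⁻ (R τ) x) volume a b ∧
      ∫ τ in a..b, 𝓕⁻ (R τ) x = 𝓕⁻ (fun ξ => ∫ τ in a..b, R τ ξ) x := by
  have hI : ∀ (c : E2 → ℂ), Continuous c → (∀ ξ, ‖c ξ‖ = 1) →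
      Integrable (Function.uncurry (fun τ ξ => c ξ * R τ ξ)) ((volume.restrict (Set.Ioc a b)).prod volume) := by
    intro c hc hc1
    have hb : Integrable (fun p : ℝ × E2 => G * (1 + ‖p.2‖) ^ (-(3:ℝ))) ((volume.restrict (Set.Ioc a b)).prod volume) := by
      have := (integrable_const (μ := volume.restrict (Set.Ioc a b)) G).mul_prod int_dec
      exact this
    refine hb.mono' ?_ ?_
    · apply Continuous.aestronglyMeasurable
      have : Continuous (fun p : ℝ × E2 => c p.2 * Function.uncurry R p) := by fun_prop
      exact this
    · have e : (volume.restrict (Set.Ioc a b)).prod (volume : Measure E2) = (volume.prod volume).restrict (Set.Ioc a b ×ˢ Set.univ) := by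
        rw [← Measure.prod_restrict, Measure.restrict_univ]
      rw [e]
      refine (ae_restrict_iff' (measurableSet_Ioc.prod MeasurableSet.univ)).2 (Filter.Eventually.of_forall ?_)
      rintro ⟨τ, ξ⟩ hp
      simp only [Function.uncurry_apply_pair, norm_mul, hc1, one_mul]
      exact bd τ ⟨hp.1.1.le, hp.1.2⟩ ξ
  refine ⟨?_, fun x => ?_⟩
  · have := (hI (fun _ => 1) continuous_const (by simp)).integral_prod_right
    simpa [intervalIntegral.integral_of_le hab, Function.uncurry] using this
  · set c : E2 → ℂ := fun ξ => Complex.exp (((2 * Real.pi * inner ℝ ξ x : ℝ) : ℂ) * Complex.I) with hc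
    have hcc : Continuous c := by fun_prop
    have hc1 : ∀ ξ, ‖c ξ‖ = 1 := fun ξ => Complex.norm_exp_ofReal_mul_I _
    have hJ := hI c hcc hc1
    have e1 : ∀ g : E2 → ℂ, 𝓕⁻ g x = ∫ ξ, c ξ * g ξ := by
      intro g; rw [Real.fourierInv_eq']; rfl
    constructor
    · rw [intervalIntegrable_iff_integrableOn_Ioc_of_le hab]
      have := hJ.integral_prod_left
      refine this.congr (Filter.Eventually.of_forall fun τ => ?_)
      simp only [e1, Function.uncurry_apply_pair]
    · simp only [e1]
      rw [intervalIntegral.integral_of_le hab, integral_integral_swap hJ]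
      congr 1; funext ξ
      rw [intervalIntegral.integral_of_le hab, integral_const_mul]

def chr (x ξ : E2) : ℂ := Complex.exp (((2 * Real.pi * inner ℝ ξ x : ℝ) : ℂ) * Complex.I)

lemma chr_norm (x ξ : E2) : ‖chr x ξ‖ = 1 := Complex.norm_exp_ofReal_mul_I _

lemma chr_cont (x : E2) : Continuous (chr x) := by unfold chr; fun_prop

lemma finv_eq (g : E2 → ℂ) (x : E2) : 𝓕⁻ g x = ∫ ξ, chr x ξ * g ξ := by
  rw [Real.fourierInv_eq']; rfl

lemma chr_int {g : E2 → ℂ} (hg : Integrable g) (x : E2) : Integrable (fun ξ => chr x ξ * g ξ) :=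
  hg.bdd_mul (chr_cont x).aestronglyMeasurable (Filter.Eventually.of_forall fun ξ => (chr_norm x ξ).le)

lemma finv_add {f g : E2 → ℂ} (hf : Integrable f) (hg : Integrable g) (x : E2) :
    𝓕⁻ (fun ξ => f ξ + g ξ) x = 𝓕⁻ f x + 𝓕⁻ g x := by
  simp only [finv_eq]
  rw [← integral_add (chr_int hf x) (chr_int hg x)]
  congr 1; funext ξ; ring

lemma finv_mul (c : ℂ) (f : E2 → ℂ) (x : E2) :
    𝓕⁻ (fun ξ => c * f ξ) x = c * 𝓕⁻ f x := by
  simp only [finv_eq]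
  rw [← integral_const_mul]
  congr 1; funext ξ; ring

lemma finv_inj {D : E2 → ℂ} (hD : Continuous D) (hi : Integrable D) (h0 : ∀ x, 𝓕⁻ D x = 0) (ξ : E2) :
    D ξ = 0 := by
  have e : 𝓕⁻ D = fun _ => 0 := funext h0
  have e2 : 𝓕 D = fun _ => 0 := by
    funext x
    have := h0 (-x)
    rwa [Real.fourierInv_eq_fourier_neg, neg_neg] at this
  have := hD.fourier_fourierInv_eq hi (by rw [e2]; exact integrable_zero _ _ _)
  rw [← this, e, Real.fourier_eq']; simp

lemma sch_inv (f : 𝓢(E2, ℂ)) (x : E2) : 𝓕⁻ (⇑(𝓕 f : 𝓢(E2, ℂ))) x = f x := by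
  rw [← SchwartzMap.fourierInv_coe, FourierTransform.fourierInv_fourier_eq]

lemma four_cont {u : ℝ → 𝓢(E2, ℂ)} (hu : Continuous u) : Continuous (fun t => 𝓕 (u t)) :=
  (FourierTransform.fourierCLM ℂ 𝓢(E2, ℂ)).continuous.comp hu

lemma dec_bound {v G ρ : ℝ} (hρ : 0 ≤ ρ) (h : (1 + ρ) ^ 4 * v ≤ G) : (1 + ρ) * v ≤ G * (1 + ρ) ^ (-(3:ℝ)) := by
  have h1 : 0 < 1 + ρ := by linarith
  rw [Real.rpow_neg h1.le, ← div_eq_mul_inv, le_div_iff₀ (by positivity)]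
  have : (1 + ρ) ^ (3:ℝ) = (1 + ρ) ^ 3 := by norm_cast
  rw [this]; nlinarith

lemma par_cont (R : ℝ → E2 → ℂ) (hR : Continuous (Function.uncurry R)) (a b : ℝ) :
    Continuous (fun ξ => ∫ τ in a..b, R τ ξ) := by
  refine intervalIntegral.continuous_parametric_intervalIntegral_of_continuous' ?_ a b
  exact hR.comp (continuous_snd.prodMk continuous_fst)

set_option maxHeartbeats 1000000 in
lemma integ_eq {μ T : ℝ} (hμ : 0 < μ) {u F : ℝ → 𝓢(E2, ℂ)} (hu : Continuous u) (hF : Continuous F)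
    (heq : ∀ t ∈ Set.Icc (0 : ℝ) T, ∀ x : E2, HasDerivAt (fun τ => (u τ) x)
      (-Complex.I * (whithamOp2 μ (⇑(u t)) x + (F t) x)) t)
    {a t : ℝ} (ha : 0 ≤ a) (hat : a ≤ t) (ht : t ≤ T) (ξ : E2) :
    (𝓕 (u t) : 𝓢(E2, ℂ)) ξ = (𝓕 (u a) : 𝓢(E2, ℂ)) ξ - Complex.I * ∫ τ in a..t,
      (((hh (Real.sqrt μ) ‖ξ‖ : ℝ) : ℂ) * (𝓕 (u τ) : 𝓢(E2, ℂ)) ξ + (𝓕 (F τ) : 𝓢(E2, ℂ)) ξ) := by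
  have hν : 0 < Real.sqrt μ := Real.sqrt_pos.2 hμ
  set ν := Real.sqrt μ with hνd
  have hUc := sch_cont (four_cont hu)
  have hFc := sch_cont (four_cont hF)
  obtain ⟨G1, hG1, hb1⟩ := sch_bound (four_cont hu) 4 T
  obtain ⟨G2, hG2, hb2⟩ := sch_bound (four_cont hF) 4 T
  set R1 : ℝ → E2 → ℂ := fun τ ξ => ((hh ν ‖ξ‖ : ℝ) : ℂ) * (𝓕 (u τ) : 𝓢(E2, ℂ)) ξ with hR1
  set R : ℝ → E2 → ℂ := fun τ ξ => R1 τ ξ + (𝓕 (F τ) : 𝓢(E2, ℂ)) ξ with hR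
  have hhc : Continuous (fun p : ℝ × E2 => ((hh ν ‖p.2‖ : ℝ) : ℂ)) :=
    Complex.continuous_ofReal.comp ((continuous_hh ν).comp (continuous_norm.comp continuous_snd))
  have hR1c : Continuous (Function.uncurry R1) := hhc.mul hUc
  have hRc : Continuous (Function.uncurry R) := hR1c.add hFc
  have hdec : ∀ τ ∈ Set.Icc (0:ℝ) T, ∀ η : E2, ‖R1 τ η‖ ≤ ((1 / ν + 1) * G1) * (1 + ‖η‖) ^ (-(3:ℝ)) := by
    intro τ hτ η
    have := dec_bound (norm_nonneg η) (hb1 τ hτ η)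
    rw [hR1]; simp only [norm_mul, Complex.norm_real, Real.norm_eq_abs]
    calc |hh ν ‖η‖| * ‖(𝓕 (u τ) : 𝓢(E2, ℂ)) η‖
        ≤ ((1 / ν + 1) * (1 + ‖η‖)) * ‖(𝓕 (u τ) : 𝓢(E2, ℂ)) η‖ :=
          mul_le_mul_of_nonneg_right (hh_bound hν (norm_nonneg η)) (norm_nonneg _)
      _ = (1 / ν + 1) * ((1 + ‖η‖) * ‖(𝓕 (u τ) : 𝓢(E2, ℂ)) η‖) := by ring
      _ ≤ (1 / ν + 1) * (G1 * (1 + ‖η‖) ^ (-(3:ℝ))) :=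
          mul_le_mul_of_nonneg_left this (by positivity)
      _ = _ := by ring
  have hbd : ∀ τ ∈ Set.Icc (0:ℝ) T, ∀ η : E2, ‖R τ η‖ ≤ ((1 / ν + 1) * G1 + G2) * (1 + ‖η‖) ^ (-(3:ℝ)) := by
    intro τ hτ η
    have h2 := dec_bound (norm_nonneg η) (hb2 τ hτ η)
    have h3 : ‖(𝓕 (F τ) : 𝓢(E2, ℂ)) η‖ ≤ G2 * (1 + ‖η‖) ^ (-(3:ℝ)) := by
      refine le_trans ?_ h2
      nlinarith [norm_nonneg η, norm_nonneg ((𝓕 (F τ) : 𝓢(E2, ℂ)) η), mul_nonneg (norm_nonneg η) (norm_nonneg ((𝓕 (F τ) : 𝓢(E2, ℂ)) η))]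
    calc ‖R τ η‖ ≤ ‖R1 τ η‖ + ‖(𝓕 (F τ) : 𝓢(E2, ℂ)) η‖ := norm_add_le _ _
      _ ≤ _ := by have := hdec τ hτ η; linarith
  have hR1i : ∀ τ ∈ Set.Icc (0:ℝ) T, Integrable (R1 τ) := by
    intro τ hτ
    refine (int_dec.const_mul ((1 / ν + 1) * G1)).mono' ?_ (Filter.Eventually.of_forall (hdec τ hτ))
    exact (hR1c.comp (Continuous.prodMk_right τ)).aestronglyMeasurable
  have hsub : Set.Icc a t ⊆ Set.Icc 0 T := Set.Icc_subset_Icc ha ht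
  obtain ⟨hi, hx⟩ := fub R hRc hat _ (fun τ hτ => hbd τ (hsub hτ))
  have hder : ∀ x, ∀ τ ∈ Set.Icc (0:ℝ) T, HasDerivAt (fun τ => (u τ) x) (-Complex.I * 𝓕⁻ (R τ) x) τ := by
    intro x τ hτ
    refine (heq τ hτ x).congr_deriv ?_
    congr 1
    rw [hR, finv_add (hR1i τ hτ) (𝓕 (F τ) : 𝓢(E2, ℂ)).integrable, sch_inv]
    congr 1
    unfold whithamOp2 fmul2
    refine congrArg (fun g : E2 → ℂ => 𝓕⁻ g x) ?_
    funext η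
    have e3 := symb_eq (μ := μ) η
    beta_reduce
    rw [e3]; rfl
  have h_itg : ∀ x, u t x - u a x = -Complex.I * 𝓕⁻ (fun ξ => ∫ τ in a..t, R τ ξ) x := by
    intro x
    obtain ⟨h1, h2⟩ := hx x
    rw [← h2, ← intervalIntegral.integral_const_mul]
    refine (intervalIntegral.integral_eq_sub_of_hasDerivAt (fun τ hτ => hder x τ ?_) (h1.const_mul _)).symm
    rw [Set.uIcc_of_le hat] at hτ; exact hsub hτ
  set D : E2 → ℂ := fun ξ => ((𝓕 (u t) : 𝓢(E2, ℂ)) ξ + (-1) * (𝓕 (u a) : 𝓢(E2, ℂ)) ξ) + Complex.I * ∫ τ in a..t, R τ ξ with hD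
  have hDc : Continuous D := by
    have : Continuous (fun ξ => ∫ τ in a..t, R τ ξ) :=
      par_cont R hRc a t
    have h1 := (𝓕 (u t) : 𝓢(E2, ℂ)).continuous
    have h2 := (𝓕 (u a) : 𝓢(E2, ℂ)).continuous
    fun_prop
  have i1 := (𝓕 (u t) : 𝓢(E2, ℂ)).integrable (μ := volume)
  have i2 := ((𝓕 (u a) : 𝓢(E2, ℂ)).integrable (μ := volume)).const_mul (-1)
  have i3 := hi.const_mul Complex.I
  have i12 : Integrable (fun ξ => (𝓕 (u t) : 𝓢(E2, ℂ)) ξ + (-1) * (𝓕 (u a) : 𝓢(E2, ℂ)) ξ) := i1.add i2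
  have h0 : ∀ x, 𝓕⁻ D x = 0 := by
    intro x
    rw [hD, finv_add i12 i3, finv_add i1 i2, finv_mul, finv_mul, sch_inv, sch_inv]
    linear_combination h_itg x
  have := finv_inj hDc (i12.add i3) h0 ξ
  rw [hD] at this
  linear_combination this

lemma duhamel {μ T : ℝ} (hμ : 0 < μ) {u F : ℝ → 𝓢(E2, ℂ)} (hu : Continuous u) (hF : Continuous F)
    (heq : ∀ t ∈ Set.Icc (0 : ℝ) T, ∀ x : E2, HasDerivAt (fun τ => (u τ) x)
      (-Complex.I * (whithamOp2 μ (⇑(u t)) x + (F t) x)) t)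
    (a t : ℝ) (ha : 0 ≤ a) (hat : a ≤ t) (ht : t ≤ T) (ξ : E2) :
    (𝓕 (u t) : 𝓢(E2, ℂ)) ξ = Complex.exp (-(Complex.I * (((t - a) * hh (Real.sqrt μ) ‖ξ‖ : ℝ) : ℂ))) *
      ((𝓕 (u a) : 𝓢(E2, ℂ)) ξ - Complex.I * ∫ τ in a..t,
        Complex.exp (Complex.I * (((τ - a) * hh (Real.sqrt μ) ‖ξ‖ : ℝ) : ℂ)) * (𝓕 (F τ) : 𝓢(E2, ℂ)) ξ) := by
  have hUc := (sch_cont (four_cont hu)).comp (Continuous.prodMk_left ξ)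
  have hFc := (sch_cont (four_cont hF)).comp (Continuous.prodMk_left ξ)
  exact duh_ode (hh (Real.sqrt μ) ‖ξ‖) (fun t => (𝓕 (u t) : 𝓢(E2, ℂ)) ξ) (fun t => (𝓕 (F t) : 𝓢(E2, ℂ)) ξ)
    hUc hFc a t hat (fun τ hτ => integ_eq hμ hu hF heq ha hτ.1 (hτ.2.trans ht) ξ)

lemma int_sing : Integrable (fun ξ : E2 => ‖ξ‖⁻¹ * (1 + ‖ξ‖) ^ (-(3:ℝ))) := by
  rw [integrable_fun_norm_addHaar volume (f := fun r : ℝ => r⁻¹ * (1 + r) ^ (-(3:ℝ)))]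
  have h := integrableOn_add_rpow_Ioi_of_lt (a := -(3:ℝ)) (c := 0) (m := 1) (by norm_num) (by norm_num)
  refine h.congr_fun (fun y hy => ?_) measurableSet_Ioi
  have hy : 0 < y := hy
  simp only [finrank_euclideanSpace_fin, smul_eq_mul]
  rw [add_comm y 1, show (2 - 1 : ℕ) = 1 from rfl, pow_one]
  field_simp

lemma symb_int (v : 𝓢(E2, ℂ)) (a : E2 → ℝ) (ha : Measurable a) (K : ℝ) (hK : 0 ≤ K)
    (hb : ∀ ξ, |a ξ| ≤ K * (‖ξ‖⁻¹ + (1 + ‖ξ‖)) * (1 + ‖ξ‖) ^ 2) :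
    Integrable (fun ξ => ((a ξ : ℝ) : ℂ) * v ξ) := by
  obtain ⟨G, hG, hGb⟩ := sch_bound (v := fun _ => v) continuous_const 6 1
  have hGb := hGb 0 (by simp)
  have h := (int_sing.add int_dec).const_mul (K * G)
  refine h.mono' ((Complex.measurable_ofReal.comp ha).aestronglyMeasurable.mul v.continuous.aestronglyMeasurable)
    (Filter.Eventually.of_forall fun ξ => ?_)
  rw [norm_mul, Complex.norm_real, Real.norm_eq_abs]
  have hr := norm_nonneg ξ
  set r := ‖ξ‖ with hrr
  have h1 : 0 < 1 + r := by linarith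
  have e : (1 + r) ^ (-(3:ℝ)) = ((1 + r) ^ 3)⁻¹ := by
    rw [Real.rpow_neg h1.le]; norm_cast
  simp only [Pi.add_apply, ← hrr]
  rw [e]
  have hv := hGb ξ
  rw [← hrr] at hv
  have hv2 : (1 + r) ^ 3 * ((1 + r) ^ 3 * ‖v ξ‖) ≤ G := by
    calc _ = (1 + r) ^ 6 * ‖v ξ‖ := by ring
      _ ≤ G := hv
  have hv3 : (1 + r) ^ 3 * ‖v ξ‖ ≤ G * ((1 + r) ^ 3)⁻¹ := by
    rw [← div_eq_mul_inv, le_div_iff₀ (by positivity)]; linarith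
  have hi : 0 ≤ r⁻¹ := by positivity
  have hx : r⁻¹ + (1 + r) ≤ (r⁻¹ + 1) * (1 + r) := by nlinarith
  calc |a ξ| * ‖v ξ‖ ≤ (K * (r⁻¹ + (1 + r)) * (1 + r) ^ 2) * ‖v ξ‖ :=
        mul_le_mul_of_nonneg_right (hb ξ) (norm_nonneg _)
    _ ≤ (K * ((r⁻¹ + 1) * (1 + r)) * (1 + r) ^ 2) * ‖v ξ‖ := by gcongr
    _ = K * (r⁻¹ + 1) * ((1 + r) ^ 3 * ‖v ξ‖) := by ring
    _ ≤ K * (r⁻¹ + 1) * (G * ((1 + r) ^ 3)⁻¹) := by gcongr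
    _ = _ := by ring

lemma jap_ge_one (x : ℝ) : 1 ≤ jap x := by
  unfold jap; exact Real.one_le_rpow (by nlinarith [sq_nonneg x]) (by norm_num)

lemma jap_ge {x : ℝ} (hx : 0 ≤ x) : x ≤ jap x := by
  unfold jap; rw [← Real.sqrt_eq_rpow]; exact Real.le_sqrt_of_sq_le (by linarith)

lemma jap_le {x : ℝ} (hx : 0 ≤ x) : jap x ≤ 1 + x := by
  unfold jap; rw [← Real.sqrt_eq_rpow, Real.sqrt_le_left (by positivity)]; nlinarith

lemma jap_meas : Measurable jap := by unfold jap; fun_prop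

lemma jap_pow_le {x β : ℝ} (hx : 0 ≤ x) (h0 : 0 ≤ β) (h1 : β ≤ 1) : jap x ^ β ≤ 1 + x :=
  (Real.rpow_le_self_of_one_le (jap_ge_one x) h1).trans (jap_le hx)

lemma rpow_sing {r α : ℝ} (hr : 0 ≤ r) (h0 : -1 ≤ α) (h1 : α ≤ 1) : r ^ α ≤ r⁻¹ + (1 + r) := by
  rcases hr.eq_or_lt with h | h
  · subst h; simpa using Real.zero_rpow_le_one α
  · have hi : 0 < r⁻¹ := by positivity
    rcases le_total r 1 with hl | hl
    · have : r ^ α ≤ r ^ (-1:ℝ) := Real.rpow_le_rpow_of_exponent_ge h hl h0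
      rw [Real.rpow_neg_one] at this; linarith
    · have : r ^ α ≤ r ^ (1:ℝ) := Real.rpow_le_rpow_of_exponent_le hl h1
      rw [Real.rpow_one] at this; linarith

/-- the general symbol -/
def sy (ν α β γ : ℝ) (ξ : E2) : ℝ := ‖ξ‖ ^ α * jap ‖ξ‖ ^ β * jap (ν * ‖ξ‖) ^ γ

lemma sy_int (v : 𝓢(E2, ℂ)) {ν α β γ : ℝ} (hν : 0 ≤ ν) (ha : -1 ≤ α) (ha1 : α ≤ 1) (hb : 0 ≤ β) (hb1 : β ≤ 1)
    (hg : 0 ≤ γ) (hg1 : γ ≤ 1) : Integrable (fun ξ => ((sy ν α β γ ξ : ℝ) : ℂ) * v ξ) := by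
  refine symb_int v _ ?_ (1 + ν) (by linarith) fun ξ => ?_
  · have := jap_meas
    unfold sy
    fun_prop
  · have hr := norm_nonneg ξ
    have p1 : 0 ≤ jap ‖ξ‖ := zero_le_one.trans (jap_ge_one _)
    have p2 : 0 ≤ jap (ν * ‖ξ‖) := zero_le_one.trans (jap_ge_one _)
    unfold sy
    rw [abs_of_nonneg (by positivity)]
    have h1 := rpow_sing hr ha ha1
    have h2 := jap_pow_le hr hb hb1
    have h3 := jap_pow_le (mul_nonneg hν hr) hg hg1
    have h4 : 1 + ν * ‖ξ‖ ≤ (1 + ν) * (1 + ‖ξ‖) := by nlinarith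
    calc ‖ξ‖ ^ α * jap ‖ξ‖ ^ β * jap (ν * ‖ξ‖) ^ γ
        ≤ (‖ξ‖⁻¹ + (1 + ‖ξ‖)) * (1 + ‖ξ‖) * ((1 + ν) * (1 + ‖ξ‖)) := by
          gcongr; exact h3.trans h4
      _ = _ := by ring

lemma ann_low (v : 𝓢(E2, ℂ)) {ν α β γ N c : ℝ} (hν : 0 ≤ ν) (ha : -1 ≤ α) (ha1 : α ≤ 1) (hb : 0 ≤ β) (hb1 : β ≤ 1)
    (hg : 0 ≤ γ) (hg1 : γ ≤ 1) (hc : 0 ≤ c) (hcl : ∀ ξ ∈ ann N, c ≤ sy ν α β γ ξ) :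
    ENNReal.ofReal (c ^ 2 * ∫ ξ in ann N, ‖(𝓕 v : 𝓢(E2, ℂ)) ξ‖ ^ 2) ≤
      eLpNorm (fmul2 (sy ν α β γ) ⇑v) 2 volume ^ 2 := by
  set w : 𝓢(E2, ℂ) := 𝓕 v with hw
  have h1 := planch _ (sy_int w hν ha ha1 hb hb1 hg hg1)
  have e : fmul2 (sy ν α β γ) ⇑v = 𝓕⁻ (fun ξ => ((sy ν α β γ ξ : ℝ) : ℂ) * w ξ) := rfl
  rw [e]
  refine le_trans ?_ (pow_le_pow_left₀ zero_le h1 2)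
  have h2 := eLpNorm_nnreal_pow_eq_lintegral (f := fun ξ => ((sy ν α β γ ξ : ℝ) : ℂ) * w ξ) (μ := volume) (p := 2) (by norm_num)
  have h3 : eLpNorm (fun ξ => ((sy ν α β γ ξ : ℝ) : ℂ) * w ξ) 2 volume ^ 2 = ∫⁻ ξ, ‖((sy ν α β γ ξ : ℝ) : ℂ) * w ξ‖ₑ ^ 2 := by
    simpa using h2
  rw [h3]
  refine le_trans ?_ (setLIntegral_le_lintegral (ann N) _)
  have h_itg : IntegrableOn (fun ξ => c ^ 2 * ‖w ξ‖ ^ 2) (ann N) := by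
    have hcw : Continuous (fun ξ => c ^ 2 * ‖w ξ‖ ^ 2) := by have := w.continuous; fun_prop
    exact (hcw.continuousOn.integrableOn_compact (isCompact_closedBall 0 (2 * N))).mono_set (ann_sub N)
  rw [← integral_const_mul, ofReal_integral_eq_lintegral_ofReal h_itg (Filter.Eventually.of_forall fun ξ => by positivity)]
  refine setLIntegral_mono' (measurableSet_ann N) fun ξ hξ => ?_
  rw [← ofReal_norm_eq_enorm, ← ENNReal.ofReal_pow (norm_nonneg _)]
  refine ENNReal.ofReal_le_ofReal ?_
  rw [norm_mul, Complex.norm_real, Real.norm_eq_abs, mul_pow, sq_abs]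
  have := hcl ξ hξ
  gcongr

lemma sy_low {ν α β γ N : ℝ} (hν : 0 < ν) (hN : 0 < N) (ha : -1 ≤ α) (hb : 0 ≤ β)
    (hg : 0 ≤ γ) : ∀ ξ ∈ ann N, (1 / 2) * (N ^ α * (max 1 N) ^ β * (max 1 (ν * N)) ^ γ) ≤ sy ν α β γ ξ := by
  intro ξ hξ
  obtain ⟨h1, h2⟩ := hξ
  have hr : 0 < ‖ξ‖ := hN.trans_le h1
  have m1 : max 1 N ≤ jap ‖ξ‖ := max_le (jap_ge_one _) (h1.trans (jap_ge hr.le))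
  have m2 : max 1 (ν * N) ≤ jap (ν * ‖ξ‖) := max_le (jap_ge_one _)
    ((mul_le_mul_of_nonneg_left h1 hν.le).trans (jap_ge (by positivity)))
  have m3 : (1 / 2) * N ^ α ≤ ‖ξ‖ ^ α := by
    rcases le_total 0 α with h | h
    · have : N ^ α ≤ ‖ξ‖ ^ α := Real.rpow_le_rpow hN.le h1 h
      have : 0 ≤ N ^ α := by positivity
      linarith
    · have k1 : (2 * N) ^ α ≤ ‖ξ‖ ^ α := Real.rpow_le_rpow_of_nonpos hr h2.le h
      have k2 : (2:ℝ) ^ (-1:ℝ) ≤ 2 ^ α := Real.rpow_le_rpow_of_exponent_le (by norm_num) ha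
      rw [Real.mul_rpow (by norm_num) hN.le] at k1
      rw [Real.rpow_neg_one] at k2
      refine le_trans ?_ k1
      have : 0 ≤ N ^ α := by positivity
      gcongr; linarith
  unfold sy
  calc (1 / 2) * (N ^ α * (max 1 N) ^ β * (max 1 (ν * N)) ^ γ)
      = ((1 / 2) * N ^ α) * (max 1 N) ^ β * (max 1 (ν * N)) ^ γ := by ring
    _ ≤ _ := by
      have p1 : 0 ≤ jap ‖ξ‖ := zero_le_one.trans (jap_ge_one _)
      have p2 : 0 ≤ max 1 N := zero_le_one.trans (le_max_left _ _)
      have p3 : 0 ≤ max 1 (ν * N) := zero_le_one.trans (le_max_left _ _)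
      gcongr

lemma cs_fin {m : Measure E2} [IsFiniteMeasure m] {f : E2 → ℝ} (hf : Integrable f m)
    (hf2 : Integrable (fun x => f x ^ 2) m) : (∫ x, f x ∂m) ^ 2 ≤ m.real Set.univ * ∫ x, f x ^ 2 ∂m := by
  set c := ∫ x, f x ∂m with hc
  set V := m.real Set.univ with hV
  have hV0 : 0 ≤ V := measureReal_nonneg
  rcases hV0.eq_or_lt with h | h
  · have : m = 0 := by
      have := (measureReal_eq_zero_iff (μ := m) (s := Set.univ)).1 (by rw [← hV, h])
      exact Measure.measure_univ_eq_zero.1 this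
    rw [hc, this]; simp
  · have h1 : 0 ≤ ∫ x, (f x ^ 2 + ((-(2 * (c / V))) * f x + (c / V) ^ 2)) ∂m :=
      integral_nonneg fun x => by
        have : f x ^ 2 + ((-(2 * (c / V))) * f x + (c / V) ^ 2) = (f x - c / V) ^ 2 := by ring
        simp only [this]; positivity
    have i1 : Integrable (fun x => (-(2 * (c / V))) * f x) m := hf.const_mul _
    have i2 : Integrable (fun _ : E2 => (c / V) ^ 2) m := integrable_const _
    have i3 : Integrable (fun x => (-(2 * (c / V))) * f x + (c / V) ^ 2) m := i1.add i2
    rw [integral_add hf2 i3, integral_add i1 i2, integral_const_mul, integral_const, ← hc, ← hV,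
      smul_eq_mul] at h1
    have e : V * (-(2 * (c / V)) * c + V * (c / V) ^ 2) = - c ^ 2 := by field_simp; ring
    have := mul_nonneg hV0 h1
    rw [mul_add, e] at this
    linarith

lemma bern {N : ℝ} (hN : 0 < N) {U : ℝ → E2 → ℂ} (hU : Continuous (Function.uncurry U)) (t : ℝ) :
    (⨆ x, ‖pn N U t x‖ₑ) ^ 2 ≤ ENNReal.ofReal (4 * Real.pi * N ^ 2 * ∫ ξ in ann N, ‖U t ξ‖ ^ 2) := by
  have hUt : Continuous (U t) := hU.comp (by fun_prop : Continuous fun ξ : E2 => (t, ξ))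
  set A := 4 * Real.pi * N ^ 2 * ∫ ξ in ann N, ‖U t ξ‖ ^ 2 with hA
  have hA0 : 0 ≤ A := by positivity
  have h1 : ∀ x, ‖pn N U t x‖ ^ 2 ≤ A := by
    intro x
    have h2 : ‖pn N U t x‖ ≤ ∫ ξ in ann N, ‖U t ξ‖ := by
      refine (norm_integral_le_integral_norm _).trans_eq ?_
      congr 1; funext ξ
      rw [norm_mul, norm_exp_I_mul, one_mul]
    have i1 : IntegrableOn (fun ξ => ‖U t ξ‖) (ann N) :=
      (hUt.norm.continuousOn.integrableOn_compact (isCompact_closedBall 0 (2 * N))).mono_set (ann_sub N)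
    have i2 : IntegrableOn (fun ξ => ‖U t ξ‖ ^ 2) (ann N) :=
      ((hUt.norm.pow 2).continuousOn.integrableOn_compact (isCompact_closedBall 0 (2 * N))).mono_set (ann_sub N)
    have : IsFiniteMeasure (volume.restrict (ann N)) := ⟨by simpa using ann_volume_lt_top N⟩
    have h3 := cs_fin i1 i2
    have h4 : (volume.restrict (ann N)).real Set.univ ≤ 4 * Real.pi * N ^ 2 := by
      simpa using ann_volume hN
    calc ‖pn N U t x‖ ^ 2 ≤ (∫ ξ in ann N, ‖U t ξ‖) ^ 2 := by gcongr
      _ ≤ _ := h3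
      _ ≤ A := by rw [hA]; gcongr
  have h2 : (⨆ x, ‖pn N U t x‖ₑ) ≤ ENNReal.ofReal (Real.sqrt A) := by
    refine iSup_le fun x => ?_
    rw [← ofReal_norm_eq_enorm]
    exact ENNReal.ofReal_le_ofReal (Real.le_sqrt_of_sq_le (h1 x))
  calc (⨆ x, ‖pn N U t x‖ₑ) ^ 2 ≤ (ENNReal.ofReal (Real.sqrt A)) ^ 2 := by gcongr
    _ = ENNReal.ofReal A := by rw [← ENNReal.ofReal_pow (Real.sqrt_nonneg _), Real.sq_sqrt hA0]

lemma pn_sup_meas (N : ℝ) {U : ℝ → E2 → ℂ} (hU : Continuous (Function.uncurry U)) :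
    Measurable (fun t => ⨆ x, ‖pn N U t x‖ₑ) :=
  (sup_bound (pn_meas N hU) (pn_cont N hU) volume (B := ⊤) (fun _ _ => le_top)).2

def Dex (θ n m τ : ℝ) : ℝ :=
  -(2 * θ / 3) * |n| + (1 / 6 + θ / 36) * m + (-2 / 3 + θ / 18) * τ + (1 - 5 * θ / 3) * n + 4 * θ * max 0 n

lemma alg_low {θ n m τ : ℝ} (h0 : 0 < θ) (h1 : θ < 1 / 2) (hD : τ + Dex θ n m τ < 0) :
    τ + 2 * n - 2 * θ * max 0 n ≤ -(2 * θ / 3) * |n| + ((-1 / 3 + 5 * θ / 18) * m + (1 / 3 + 5 * θ / 9) * τ) := by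
  unfold Dex at hD
  set L := m + 2 * τ with hL
  have hm : m = L - 2 * τ := by rw [hL]; ring
  rw [hm] at hD ⊢
  have hq : 0 < 1 / 3 - 5 * θ / 18 := by linarith
  have hp : 0 < 1 / 6 + θ / 36 := by linarith
  rcases le_total 0 n with hn | hn
  · rw [abs_of_nonneg hn, max_eq_right hn] at hD ⊢
    have hD' : (1 / 6 + θ / 36) * L + (1 + 5 * θ / 3) * n < 0 := by linarith
    have k := mul_lt_mul_of_pos_left hD' hq
    suffices h : (2 - 4 * θ / 3) * n + (1 / 3 - 5 * θ / 18) * L ≤ 0 by linarith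
    by_contra hc
    push Not at hc
    have k2 := mul_lt_mul_of_pos_left hc hp
    have k3 : 0 ≤ ((1 / 3 - 5 * θ / 18) * (1 + 5 * θ / 3) - (1 / 6 + θ / 36) * (2 - 4 * θ / 3)) * n := by
      refine mul_nonneg ?_ hn
      nlinarith
    nlinarith
  · rw [abs_of_nonpos hn, max_eq_left hn] at hD ⊢
    have hD' : (1 / 6 + θ / 36) * L + (1 - θ) * n < 0 := by linarith
    have k := mul_lt_mul_of_pos_left hD' hq
    suffices h : (2 - 2 * θ / 3) * n + (1 / 3 - 5 * θ / 18) * L ≤ 0 by linarith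
    by_contra hc
    push Not at hc
    have k2 := mul_lt_mul_of_pos_left hc hp
    have k3 : 0 ≤ ((1 / 6 + θ / 36) * (2 - 2 * θ / 3) - (1 / 3 - 5 * θ / 18) * (1 - θ)) * (-n) := by
      refine mul_nonneg ?_ (by linarith)
      nlinarith
    nlinarith

lemma alg_two {θ n : ℝ} (h0 : 0 < θ) : 10 * θ / 3 * n - 6 * θ * max 0 n ≤ -(4 * θ / 3) * |n| := by
  rcases le_total 0 n with hn | hn
  · rw [abs_of_nonneg hn, max_eq_right hn]; nlinarith [mul_nonneg h0.le hn]
  · rw [abs_of_nonpos hn, max_eq_left hn]; nlinarith [mul_nonneg h0.le (neg_nonneg.2 hn)]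

lemma kap_le {θ n m τ l J : ℝ} (h0 : 0 < θ) (h1 : θ < 1 / 2) (hl : 0 ≤ l) (hJ : 1 ≤ J) :
    Real.exp n ^ (2 * (θ / 2)) * (Real.exp (l / 2) ^ 3 / Real.exp (m / 2)) ^ (1 - θ / 2) * (Real.exp τ / J) ^ (θ / 2)
      ≤ Real.exp (θ * n + 3 / 2 * l - (1 / 2 - θ / 4) * m + θ / 2 * τ) := by
  have e1 : Real.exp (l / 2) ^ 3 / Real.exp (m / 2) = Real.exp (3 / 2 * l - m / 2) := by
    rw [← Real.exp_nat_mul, ← Real.exp_sub]; congr 1; push_cast; ring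
  rw [e1, ← Real.exp_mul, ← Real.exp_mul]
  have e2 : (Real.exp τ / J) ^ (θ / 2) ≤ Real.exp (τ * (θ / 2)) := by
    rw [Real.exp_mul]
    refine Real.rpow_le_rpow (by positivity) ?_ (by linarith)
    exact div_le_self (Real.exp_pos _).le hJ
  refine (mul_le_mul_of_nonneg_left e2 (by positivity)).trans ?_
  rw [← Real.exp_add, ← Real.exp_add, Real.exp_le_exp]
  nlinarith [mul_nonneg h0.le hl]

lemma per_ann {θ : ℝ} (h0 : 0 < θ) (h1 : θ < 1 / 2) : ∃ K : ℝ, 0 < K ∧ ∀ n m τ : ℝ, ∀ U F : ℝ → E2 → ℂ,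
    Continuous (Function.uncurry U) → Continuous (Function.uncurry F) → ∀ G : ℝ,
    (∀ t ∈ Set.Icc 0 (Real.exp τ), ∀ ξ, ‖U t ξ‖ ≤ G) → (∀ t ∈ Set.Icc 0 (Real.exp τ), ∀ ξ, ‖F t ξ‖ ≤ G) →
    (∀ a t, 0 ≤ a → a ≤ t → t ≤ Real.exp τ → ∀ ξ : E2,
      U t ξ = Complex.exp (-(Complex.I * (((t - a) * hh (Real.exp (m / 2)) ‖ξ‖ : ℝ) : ℂ))) * (U a ξ -
        Complex.I * ∫ σ in a..t, Complex.exp (Complex.I * (((σ - a) * hh (Real.exp (m / 2)) ‖ξ‖ : ℝ) : ℂ)) * F σ ξ)) →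
    ∀ A1 A2 A3 : ℝ, 0 ≤ A1 → 0 ≤ A2 → 0 ≤ A3 →
    (∀ t ∈ Set.Icc 0 (Real.exp τ), Real.exp (2 * θ * max 0 n) * ∫ ξ in ann (Real.exp n), ‖U t ξ‖ ^ 2 ≤ 4 * A1) →
    (∀ t ∈ Set.Icc 0 (Real.exp τ), Real.exp ((1 - 2 * θ / 3) * n + 4 * θ * max 0 n + 3 / 2 * max 0 (m / 2 + n)) *
      ∫ ξ in ann (Real.exp n), ‖U t ξ‖ ^ 2 ≤ 4 * A2) →
    (Real.exp ((-1 - 2 * θ / 3) * n + 2 * θ * max 0 n + 3 / 2 * max 0 (m / 2 + n)) *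
      ∫ t in Set.Ioc 0 (Real.exp τ), ∫ ξ in ann (Real.exp n), ‖F t ξ‖ ^ 2 ≤ 4 * A3) →
    ∫⁻ t in Set.Ioc 0 (Real.exp τ), (⨆ x, ‖pn (Real.exp n) U t x‖ₑ) ^ 2 ≤
      ENNReal.ofReal (K * Real.exp (-(2 * θ / 3) * |n|) *
        (Real.exp ((-1 / 3 + 5 * θ / 18) * m + (1 / 3 + 5 * θ / 9) * τ) * (A1 + A2) +
          Real.exp ((-2 / 3 + 2 * θ / 9) * m + (2 / 3 + 4 * θ / 9) * τ) * A3)) := by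
  obtain ⟨C0, hC0, hstr⟩ := str_part (s := θ / 2) (by linarith) (by linarith)
  refine ⟨8 * C0 + 16 * Real.pi, by positivity, ?_⟩
  intro n m τ U F hU hF G hGU hGF hduh A1 A2 A3 hA1 hA2 hA3 hX1 hX2 hY
  set l := max 0 n with hl
  set lQ := max 0 (m / 2 + n) with hlQ
  have hlQ0 : 0 ≤ lQ := le_max_left _ _
  set P1 := Real.exp ((-1 / 3 + 5 * θ / 18) * m + (1 / 3 + 5 * θ / 9) * τ) with hP1
  set P2 := Real.exp ((-2 / 3 + 2 * θ / 9) * m + (2 / 3 + 4 * θ / 9) * τ) with hP2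
  set W := Real.exp (-(2 * θ / 3) * |n|) with hW
  have hP1p : 0 < P1 := Real.exp_pos _
  have hP2p : 0 < P2 := Real.exp_pos _
  have hWp : 0 < W := Real.exp_pos _
  have hpi := Real.pi_pos
  rcases lt_or_ge (τ + Dex θ n m τ) 0 with hD | hD
  · -- low frequencies
    have hX : ∀ t ∈ Set.Icc 0 (Real.exp τ), ∫ ξ in ann (Real.exp n), ‖U t ξ‖ ^ 2 ≤ 4 * A1 * Real.exp (-(2 * θ * l)) := by
      intro t ht
      rw [Real.exp_neg, ← div_eq_mul_inv, le_div_iff₀ (Real.exp_pos _), mul_comm]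
      exact hX1 t ht
    have hal := alg_low h0 h1 hD
    have hb : ∀ t ∈ Set.Ioc 0 (Real.exp τ), (⨆ x, ‖pn (Real.exp n) U t x‖ₑ) ^ 2 ≤
        ENNReal.ofReal (4 * Real.pi * Real.exp n ^ 2 * (4 * A1 * Real.exp (-(2 * θ * l)))) := by
      intro t ht
      refine (bern (Real.exp_pos n) hU t).trans (ENNReal.ofReal_le_ofReal ?_)
      have := hX t ⟨ht.1.le, ht.2⟩
      gcongr
    refine (setLIntegral_mono' measurableSet_Ioc hb).trans ?_
    rw [setLIntegral_const, Real.volume_Ioc, sub_zero, ← ENNReal.ofReal_mul (by positivity)]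
    refine ENNReal.ofReal_le_ofReal ?_
    have e : 4 * Real.pi * Real.exp n ^ 2 * (4 * A1 * Real.exp (-(2 * θ * l))) * Real.exp τ
        = 16 * Real.pi * A1 * Real.exp (τ + 2 * n - 2 * θ * l) := by
      have : Real.exp (τ + 2 * n - 2 * θ * l) = Real.exp τ * Real.exp n ^ 2 * Real.exp (-(2 * θ * l)) := by
        rw [← Real.exp_nat_mul, ← Real.exp_add, ← Real.exp_add]; push_cast; congr 1
      rw [this]; ring
    rw [e]
    have h3 : Real.exp (τ + 2 * n - 2 * θ * l) ≤ W * P1 := by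
      rw [hW, hP1, ← Real.exp_add, Real.exp_le_exp]; exact hal
    calc 16 * Real.pi * A1 * Real.exp (τ + 2 * n - 2 * θ * l) ≤ 16 * Real.pi * A1 * (W * P1) := by gcongr
      _ = 16 * Real.pi * W * (P1 * A1) := by ring
      _ ≤ (8 * C0 + 16 * Real.pi) * W * (P1 * (A1 + A2) + P2 * A3) := by
        have : 0 ≤ P1 * A2 := by positivity
        have : 0 ≤ P2 * A3 := by positivity
        gcongr
        · linarith
        · linarith
  · -- high frequencies
    set D := Dex θ n m τ with hDd
    set J : ℕ := ⌈Real.exp (τ + D)⌉₊ with hJd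
    have hE1 : 1 ≤ Real.exp (τ + D) := Real.one_le_exp hD
    have hJ1 : Real.exp (τ + D) ≤ J := Nat.le_ceil _
    have hJ1' : (1:ℝ) ≤ J := hE1.trans hJ1
    have hJ0 : 0 < J := by exact_mod_cast (lt_of_lt_of_le one_pos hJ1')
    have hJ2 : (J:ℝ) ≤ 2 * Real.exp (τ + D) := by
      have := Nat.ceil_lt_add_one (Real.exp_pos (τ + D)).le
      rw [← hJd] at this; linarith
    have hTJ : Real.exp τ / J ≤ Real.exp (-D) := by
      rw [div_le_iff₀ (by positivity)]
      calc Real.exp τ = Real.exp (-D) * Real.exp (τ + D) := by rw [← Real.exp_add]; congr 1; ring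
        _ ≤ _ := by gcongr
    have hνN : Real.exp (m / 2) * Real.exp n ≤ Real.exp (lQ / 2) ^ 2 := by
      rw [← Real.exp_add, ← Real.exp_nat_mul, Real.exp_le_exp]
      have : m / 2 + n ≤ lQ := le_max_right _ _
      push_cast; linarith
    set Su := 4 * A2 * Real.exp (-((1 - 2 * θ / 3) * n + 4 * θ * l + 3 / 2 * lQ)) with hSu
    have hX : ∀ t ∈ Set.Icc 0 (Real.exp τ), ∫ ξ in ann (Real.exp n), ‖U t ξ‖ ^ 2 ≤ Su := by
      intro t ht
      rw [hSu, Real.exp_neg, ← div_eq_mul_inv, le_div_iff₀ (Real.exp_pos _), mul_comm]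
      exact hX2 t ht
    set Y := ∫ t in Set.Ioc 0 (Real.exp τ), ∫ ξ in ann (Real.exp n), ‖F t ξ‖ ^ 2 with hYd
    have hY' : Y ≤ 4 * A3 * Real.exp (-((-1 - 2 * θ / 3) * n + 2 * θ * l + 3 / 2 * lQ)) := by
      rw [Real.exp_neg, ← div_eq_mul_inv, le_div_iff₀ (Real.exp_pos _), mul_comm]
      exact hY
    have hY0 : 0 ≤ Y := integral_nonneg fun t => integral_nonneg fun ξ => by positivity
    refine (hstr (Real.exp (m / 2)) (Real.exp n) (Real.exp (lQ / 2)) (Real.exp τ) (Real.exp_pos _) (Real.exp_pos _)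
      (Real.one_le_exp (by positivity)) hνN (Real.exp_pos _) U F hU hF G hGU hGF hduh Su hX J hJ0).trans
      (ENNReal.ofReal_le_ofReal ?_)
    have hk := kap_le (n := n) (m := m) (τ := τ) h0 h1 hlQ0 hJ1'
    set κ := Real.exp n ^ (2 * (θ / 2)) * (Real.exp (lQ / 2) ^ 3 / Real.exp (m / 2)) ^ (1 - θ / 2) * (Real.exp τ / J) ^ (θ / 2) with hκ
    set κ' := θ * n + 3 / 2 * lQ - (1 / 2 - θ / 4) * m + θ / 2 * τ with hκ'
    have hS1 : Real.exp κ' * (J * Su) ≤ 8 * (W * (P1 * A2)) := by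
      calc Real.exp κ' * (J * Su) ≤ Real.exp κ' * (2 * Real.exp (τ + D) * Su) := by
            have : 0 ≤ Su := by positivity
            gcongr
        _ = 8 * A2 * (Real.exp κ' * Real.exp (τ + D) * Real.exp (-((1 - 2 * θ / 3) * n + 4 * θ * l + 3 / 2 * lQ))) := by
            rw [hSu]; ring
        _ = 8 * A2 * (W * P1) := by
            congr 1
            rw [hW, hP1, ← Real.exp_add, ← Real.exp_add, ← Real.exp_add, hDd, hκ']
            congr 1
            unfold Dex
            rw [← hl]
            ring
        _ = _ := by ring
    have hS2 : Real.exp κ' * (Real.exp τ / J * Y) ≤ 4 * (W * (P2 * A3)) := by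
      calc Real.exp κ' * (Real.exp τ / J * Y)
          ≤ Real.exp κ' * (Real.exp (-D) * (4 * A3 * Real.exp (-((-1 - 2 * θ / 3) * n + 2 * θ * l + 3 / 2 * lQ)))) := by
            gcongr
        _ = 4 * A3 * (Real.exp κ' * Real.exp (-D) * Real.exp (-((-1 - 2 * θ / 3) * n + 2 * θ * l + 3 / 2 * lQ))) := by
            ring
        _ ≤ 4 * A3 * (W * P2) := by
            refine mul_le_mul_of_nonneg_left ?_ (by positivity)
            rw [hW, hP2, ← Real.exp_add, ← Real.exp_add, ← Real.exp_add, hDd, hκ', Real.exp_le_exp]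
            unfold Dex
            have := alg_two (n := n) h0
            rw [← hl] at this ⊢
            linarith
        _ = _ := by ring
    have hsum : 0 ≤ (J:ℝ) * Su + Real.exp τ / J * Y := by positivity
    calc C0 * Real.exp n ^ (2 * (θ / 2)) * (Real.exp (lQ / 2) ^ 3 / Real.exp (m / 2)) ^ (1 - θ / 2) * (Real.exp τ / J) ^ (θ / 2)
          * ((J:ℝ) * Su + Real.exp τ / J * Y)
        = C0 * (κ * ((J:ℝ) * Su + Real.exp τ / J * Y)) := by rw [hκ]; ring
      _ ≤ C0 * (Real.exp κ' * ((J:ℝ) * Su + Real.exp τ / J * Y)) := by gcongr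
      _ = C0 * (Real.exp κ' * (J * Su) + Real.exp κ' * (Real.exp τ / J * Y)) := by ring
      _ ≤ C0 * (8 * (W * (P1 * A2)) + 4 * (W * (P2 * A3))) := by gcongr
      _ ≤ 8 * C0 * W * (P1 * (A1 + A2) + P2 * A3) := by
        have a1 : 0 ≤ C0 * W * (P1 * A1) := by positivity
        have a2 : 0 ≤ C0 * W * (P2 * A3) := by positivity
        nlinarith
      _ ≤ _ := by
        have a3 : 0 ≤ P1 * (A1 + A2) + P2 * A3 := by positivity
        gcongr
        linarith

def dy (k : ℤ) : ℝ := k * Real.log 2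

lemma exp_dy (k : ℤ) : Real.exp (dy k) = (2:ℝ) ^ k := by
  unfold dy
  rw [mul_comm, Real.exp_mul, Real.exp_log (by norm_num), Real.rpow_intCast]

lemma ann_disj : Pairwise (Function.onFun Disjoint (fun k : ℤ => ann ((2:ℝ) ^ k))) := by
  have key : ∀ i j : ℤ, i < j → Disjoint (ann ((2:ℝ) ^ i)) (ann ((2:ℝ) ^ j)) := by
    intro i j hij
    rw [Set.disjoint_left]
    rintro ξ ⟨_, h1⟩ ⟨h2, _⟩
    have : (2:ℝ) * 2 ^ i ≤ 2 ^ j := by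
      rw [mul_comm, ← zpow_add_one₀ (by norm_num)]
      exact zpow_le_zpow_right₀ (by norm_num) hij
    linarith
  intro i j hij
  rcases lt_or_gt_of_ne hij with h | h
  · exact key i j h
  · exact (key j i h).symm

lemma ann_cover : (⋃ k : ℤ, ann ((2:ℝ) ^ k)) = {0}ᶜ := by
  ext ξ
  simp only [Set.mem_iUnion, Set.mem_compl_iff, Set.mem_singleton_iff]
  constructor
  · rintro ⟨k, h1, _⟩ h
    rw [h, norm_zero] at h1
    have : (0:ℝ) < 2 ^ k := by positivity
    linarith
  · intro h
    obtain ⟨k, hk1, hk2⟩ := exists_mem_Ico_zpow (norm_pos_iff.2 h) (by norm_num : (1:ℝ) < 2)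
    refine ⟨k, hk1, ?_⟩
    rwa [mul_comm, ← zpow_add_one₀ (by norm_num)]

lemma lp_sum (v : ℝ → 𝓢(E2, ℂ)) (t : ℝ) (x : E2) :
    ‖v t x‖ₑ ≤ ∑' k : ℤ, ‖pn (Real.exp (dy k)) (fun t ξ => (𝓕 (v t) : 𝓢(E2, ℂ)) ξ) t x‖ₑ := by
  have hi := chr_int ((𝓕 (v t) : 𝓢(E2, ℂ)).integrable (μ := volume)) x
  have h1 := hasSum_integral_iUnion (fun k : ℤ => measurableSet_ann ((2:ℝ) ^ k)) ann_disj hi.integrableOn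
  have e1 : ∫ ξ in (⋃ k : ℤ, ann ((2:ℝ) ^ k)), chr x ξ * (𝓕 (v t) : 𝓢(E2, ℂ)) ξ = v t x := by
    rw [ann_cover, ← sch_inv (v t) x, finv_eq]
    rw [setIntegral_congr_set (t := Set.univ), Measure.restrict_univ]
    rw [ae_eq_univ, compl_compl]
    exact measure_singleton _
  rw [e1] at h1
  have e2 : ∀ k : ℤ, pn (Real.exp (dy k)) (fun t ξ => (𝓕 (v t) : 𝓢(E2, ℂ)) ξ) t x =
      ∫ ξ in ann ((2:ℝ) ^ k), chr x ξ * (𝓕 (v t) : 𝓢(E2, ℂ)) ξ := by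
    intro k
    unfold pn chr
    rw [exp_dy]
    congr 1; funext ξ
    rw [mul_comm Complex.I]
  simp only [e2]
  rw [← h1.tsum_eq]
  exact enorm_tsum_le_tsum_enorm

lemma linf_sum (v : ℝ → 𝓢(E2, ℂ)) (t : ℝ) :
    eLpNorm (⇑(v t)) ⊤ volume ≤ ∑' k : ℤ, ⨆ x, ‖pn (Real.exp (dy k)) (fun t ξ => (𝓕 (v t) : 𝓢(E2, ℂ)) ξ) t x‖ₑ := by
  rw [eLpNorm_exponent_top]
  refine essSup_le_of_ae_le _ (Filter.Eventually.of_forall fun x => ?_)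
  exact (lp_sum v t x).trans (ENNReal.tsum_le_tsum fun k => le_iSup (fun x => ‖pn (Real.exp (dy k)) (fun t ξ => (𝓕 (v t) : 𝓢(E2, ℂ)) ξ) t x‖ₑ) x)

def wt (θ : ℝ) (k : ℤ) : ℝ := Real.exp (-(θ / 3) * |dy k|)

lemma wt_pos (θ : ℝ) (k : ℤ) : 0 < wt θ k := Real.exp_pos _

lemma wt_summable {θ : ℝ} (h : 0 < θ) : Summable (wt θ) := by
  set r := Real.exp (-(θ / 3) * Real.log 2) with hr
  have hl : 0 < Real.log 2 := Real.log_pos (by norm_num)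
  have hr1 : r < 1 := by rw [hr, Real.exp_lt_one_iff]; nlinarith [mul_pos h hl]
  have hg : Summable (fun n : ℕ => r ^ n) := summable_geometric_of_lt_one (Real.exp_pos _).le hr1
  have e : ∀ n : ℕ, wt θ (n : ℤ) = r ^ n := by
    intro n
    unfold wt dy
    rw [hr, ← Real.exp_nat_mul, abs_of_nonneg (by positivity)]
    congr 1; push_cast; ring
  have e2 : ∀ n : ℕ, wt θ (-(n : ℤ)) = r ^ n := by
    intro n
    rw [← e n]; unfold wt dy; push_cast; rw [show -(n:ℝ) * Real.log 2 = -((n:ℝ) * Real.log 2) by ring, abs_neg]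
  refine Summable.of_nat_of_neg ?_ ?_
  · simpa only [e] using hg
  · simpa only [e2] using hg

lemma cs_tsum (a w : ℤ → ℝ≥0∞) (hw : ∀ k, w k ≠ 0) (hw' : ∀ k, w k ≠ ⊤) :
    (∑' k, a k) ^ 2 ≤ (∑' k, w k) * ∑' k, (w k)⁻¹ * a k ^ 2 := by
  have hrt : ∀ x : ℝ≥0∞, (x ^ ((1:ℝ) / 2)) ^ (2:ℝ) = x := fun x => by
    rw [← ENNReal.rpow_mul]; norm_num
  have key : ∑' k, a k ≤ (∑' k, w k) ^ ((1:ℝ) / 2) * (∑' k, (w k)⁻¹ * a k ^ 2) ^ ((1:ℝ) / 2) := by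
    rw [ENNReal.tsum_eq_iSup_sum]
    refine iSup_le fun s => ?_
    have h := ENNReal.inner_le_Lp_mul_Lq s (fun k => (w k) ^ ((1:ℝ) / 2)) (fun k => (w k)⁻¹ ^ ((1:ℝ) / 2) * a k)
      (p := 2) (q := 2) (by constructor <;> norm_num)
    have e1 : ∀ k, (w k) ^ ((1:ℝ) / 2) * ((w k)⁻¹ ^ ((1:ℝ) / 2) * a k) = a k := by
      intro k
      rw [← mul_assoc, ← ENNReal.mul_rpow_of_nonneg _ _ (by norm_num), ENNReal.mul_inv_cancel (hw k) (hw' k),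
        ENNReal.one_rpow, one_mul]
    have e2 : ∀ k, ((w k)⁻¹ ^ ((1:ℝ) / 2) * a k) ^ (2:ℝ) = (w k)⁻¹ * a k ^ 2 := by
      intro k
      rw [ENNReal.mul_rpow_of_nonneg _ _ (by norm_num), hrt, ENNReal.rpow_two]
    simp only [e1, e2, hrt] at h
    refine h.trans ?_
    gcongr <;> exact ENNReal.sum_le_tsum _
  calc (∑' k, a k) ^ 2 ≤ ((∑' k, w k) ^ ((1:ℝ) / 2) * (∑' k, (w k)⁻¹ * a k ^ 2) ^ ((1:ℝ) / 2)) ^ 2 := by gcongr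
    _ = _ := by rw [← ENNReal.rpow_two, ENNReal.mul_rpow_of_nonneg _ _ (by norm_num), hrt, hrt]

lemma sum_bound {θ : ℝ} (h : 0 < θ) (a : ℤ → ℝ → ℝ≥0∞) (ha : ∀ k, Measurable (a k)) (S : Set ℝ) (B : ℝ) (hB0 : 0 ≤ B)
    (hB : ∀ k, ∫⁻ t in S, a k t ^ 2 ≤ ENNReal.ofReal (wt θ k ^ 2 * B)) :
    ∫⁻ t in S, (∑' k, a k t) ^ 2 ≤ ENNReal.ofReal ((∑' k, wt θ k) ^ 2 * B) := by
  set w : ℤ → ℝ≥0∞ := fun k => ENNReal.ofReal (wt θ k) with hw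
  have hW : ∑' k, w k = ENNReal.ofReal (∑' k, wt θ k) :=
    (ENNReal.ofReal_tsum_of_nonneg (fun k => (wt_pos θ k).le) (wt_summable h)).symm
  have h0 : ∀ k, w k ≠ 0 := fun k => by simpa [hw] using wt_pos θ k
  have h1 : ∀ k, w k ≠ ⊤ := fun k => ENNReal.ofReal_ne_top
  calc ∫⁻ t in S, (∑' k, a k t) ^ 2 ≤ ∫⁻ t in S, (∑' k, w k) * ∑' k, (w k)⁻¹ * a k t ^ 2 :=
        lintegral_mono fun t => cs_tsum (fun k => a k t) w h0 h1
    _ = (∑' k, w k) * ∑' k, (w k)⁻¹ * ∫⁻ t in S, a k t ^ 2 := by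
        rw [lintegral_const_mul _ (by fun_prop), lintegral_tsum (fun k => by fun_prop)]
        congr 2; funext k
        rw [lintegral_const_mul _ (by fun_prop)]
    _ ≤ (∑' k, w k) * ∑' k, w k * ENNReal.ofReal B := by
        refine mul_le_mul' le_rfl (ENNReal.tsum_le_tsum fun k => ?_)
        calc (w k)⁻¹ * ∫⁻ t in S, a k t ^ 2 ≤ (w k)⁻¹ * (w k * (w k * ENNReal.ofReal B)) := by
              gcongr
              refine (hB k).trans_eq ?_
              rw [hw, ← ENNReal.ofReal_mul (wt_pos θ k).le, ← ENNReal.ofReal_mul (wt_pos θ k).le]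
              congr 1; ring
          _ = _ := by rw [← mul_assoc, ENNReal.inv_mul_cancel (h0 k) (h1 k), one_mul]
    _ = _ := by
        have : 0 ≤ ∑' k, wt θ k := tsum_nonneg fun k => (wt_pos θ k).le
        rw [ENNReal.tsum_mul_right, hW, ← mul_assoc, ← ENNReal.ofReal_mul this, ← ENNReal.ofReal_mul (by positivity)]
        congr 1; ring

lemma max_one_exp (x : ℝ) : max 1 (Real.exp x) = Real.exp (max 0 x) := by
  rw [Real.exp_monotone.map_max, Real.exp_zero]

lemma ann_exp (v : 𝓢(E2, ℂ)) {α β γ : ℝ} (m n : ℝ) (ha : -1 ≤ α) (ha1 : α ≤ 1) (hb : 0 ≤ β) (hb1 : β ≤ 1)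
    (hg : 0 ≤ γ) (hg1 : γ ≤ 1) :
    ENNReal.ofReal (1 / 4 * (Real.exp (2 * α * n + 2 * β * max 0 n + 2 * γ * max 0 (m / 2 + n)) *
      ∫ ξ in ann (Real.exp n), ‖(𝓕 v : 𝓢(E2, ℂ)) ξ‖ ^ 2)) ≤
      eLpNorm (fmul2 (sy (Real.exp (m / 2)) α β γ) ⇑v) 2 volume ^ 2 := by
  have h := sy_low (ν := Real.exp (m / 2)) (N := Real.exp n) (α := α) (β := β) (γ := γ) (Real.exp_pos _) (Real.exp_pos _) ha hb hg
  have h2 := ann_low v (Real.exp_pos (m / 2)).le ha ha1 hb hb1 hg hg1 (by positivity) h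
  refine le_trans (le_of_eq ?_) h2
  congr 1
  rw [← Real.exp_add, max_one_exp, max_one_exp, ← Real.exp_mul, ← Real.exp_mul, ← Real.exp_mul, ← Real.exp_add,
    ← Real.exp_add, mul_pow, ← Real.exp_nat_mul]
  rw [← mul_assoc]
  congr 2
  · norm_num
  · congr 1; push_cast; ring

lemma bound_of {c A : ℝ} {x S : ℝ≥0∞} (hS : S ≠ ⊤) (hA : A = S.toReal ^ 2) (h1 : ENNReal.ofReal (1 / 4 * c) ≤ x ^ 2) (h2 : x ≤ S) :
    c ≤ 4 * A := by
  have h : ENNReal.ofReal (1 / 4 * c) ≤ ENNReal.ofReal A := by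
    refine h1.trans ((pow_le_pow_left' h2 2).trans_eq ?_)
    rw [hA, ENNReal.ofReal_pow ENNReal.toReal_nonneg, ENNReal.ofReal_toReal hS]
  have := (ENNReal.ofReal_le_ofReal_iff (by rw [hA]; positivity)).1 h
  linarith

lemma bound_int {c : ℝ} (hc : 0 ≤ c) (φ : ℝ → ℝ) (hφ : ∀ t, 0 ≤ φ t) (x : ℝ → ℝ≥0∞) (S : Set ℝ)
    (h : ∀ t, ENNReal.ofReal (1 / 4 * (c * φ t)) ≤ x t ^ 2) (hZ : ∫⁻ t in S, x t ^ 2 ≠ ⊤) :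
    c * ∫ t in S, φ t ≤ 4 * (∫⁻ t in S, x t ^ 2).toReal := by
  by_cases hi : Integrable φ (volume.restrict S)
  · have h1 : ENNReal.ofReal (∫ t in S, 1 / 4 * (c * φ t)) ≤ ∫⁻ t in S, x t ^ 2 := by
      rw [ofReal_integral_eq_lintegral_ofReal ((hi.const_mul c).const_mul _)
        (Filter.Eventually.of_forall fun t => mul_nonneg (by norm_num) (mul_nonneg hc (hφ t)))]
      exact lintegral_mono h
    rw [integral_const_mul, integral_const_mul] at h1
    have h2 := (ENNReal.ofReal_le_iff_le_toReal hZ).1 h1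
    linarith
  · rw [integral_undef hi, mul_zero]; positivity

lemma final_alg {W K P1 P2 : ℝ} (hW : 0 ≤ W) (hK : 0 ≤ K) (hP1 : 0 ≤ P1) (hP2 : 0 ≤ P2) {S1 S2 Z x : ℝ≥0∞} (h1 : S1 ≠ ⊤) (h2 : S2 ≠ ⊤) (h3 : Z ≠ ⊤)
    (h : x ≤ ENNReal.ofReal (W ^ 2 * (K * (P1 ^ 2 * (S1.toReal ^ 2 + S2.toReal ^ 2) + P2 ^ 2 * Z.toReal)))) :
    x ^ ((1:ℝ) / 2) ≤ ENNReal.ofReal (W * Real.sqrt K + 1) *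
      (ENNReal.ofReal P1 * (S1 + S2) + ENNReal.ofReal P2 * Z ^ ((1:ℝ) / 2)) := by
  obtain ⟨a, ha, rfl⟩ : ∃ a : ℝ, 0 ≤ a ∧ ENNReal.ofReal a = S1 := ⟨_, ENNReal.toReal_nonneg, ENNReal.ofReal_toReal h1⟩
  obtain ⟨b, hb, rfl⟩ : ∃ a : ℝ, 0 ≤ a ∧ ENNReal.ofReal a = S2 := ⟨_, ENNReal.toReal_nonneg, ENNReal.ofReal_toReal h2⟩
  obtain ⟨c, hc, rfl⟩ : ∃ a : ℝ, 0 ≤ a ∧ ENNReal.ofReal a = Z := ⟨_, ENNReal.toReal_nonneg, ENNReal.ofReal_toReal h3⟩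
  rw [ENNReal.toReal_ofReal ha, ENNReal.toReal_ofReal hb, ENNReal.toReal_ofReal hc] at h
  rw [ENNReal.ofReal_rpow_of_nonneg hc (by norm_num), ← ENNReal.ofReal_add ha hb, ← ENNReal.ofReal_mul hP1,
    ← ENNReal.ofReal_mul hP2, ← ENNReal.ofReal_add (by positivity) (by positivity), ← ENNReal.ofReal_mul (by positivity)]
  refine (ENNReal.rpow_le_rpow h (by norm_num)).trans ?_
  rw [ENNReal.ofReal_rpow_of_nonneg (by positivity) (by norm_num)]
  refine ENNReal.ofReal_le_ofReal ?_
  rw [← Real.sqrt_eq_rpow, ← Real.sqrt_eq_rpow]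
  obtain ⟨s, hs, rfl⟩ : ∃ s : ℝ, 0 ≤ s ∧ s ^ 2 = c := ⟨_, Real.sqrt_nonneg _, Real.sq_sqrt hc⟩
  obtain ⟨k, hk, rfl⟩ : ∃ s : ℝ, 0 ≤ s ∧ s ^ 2 = K := ⟨_, Real.sqrt_nonneg _, Real.sq_sqrt hK⟩
  rw [Real.sqrt_sq hs, Real.sqrt_sq hk]
  have q : 0 ≤ P1 * (a + b) + P2 * s := by positivity
  refine le_trans ?_ (mul_le_mul_of_nonneg_right (by linarith : W * k ≤ W * k + 1) q)
  refine Real.sqrt_le_iff.2 ⟨by positivity, ?_⟩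
  have : P1 ^ 2 * (a ^ 2 + b ^ 2) + P2 ^ 2 * s ^ 2 ≤ (P1 * (a + b) + P2 * s) ^ 2 := by
    have := mul_nonneg (mul_nonneg hP1 hP1) (mul_nonneg ha hb)
    have := mul_nonneg (mul_nonneg hP1 (add_nonneg ha hb)) (mul_nonneg hP2 hs)
    nlinarith
  calc _ = (W * k) ^ 2 * (P1 ^ 2 * (a ^ 2 + b ^ 2) + P2 ^ 2 * s ^ 2) := by ring
    _ ≤ (W * k) ^ 2 * (P1 * (a + b) + P2 * s) ^ 2 := by gcongr
    _ = _ := by ring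

lemma top_alg {C P1 P2 : ℝ} (hC : 0 < C) (hP1 : 0 < P1) (hP2 : 0 < P2) {S1 S2 Z : ℝ≥0∞} (h : S1 = ⊤ ∨ S2 = ⊤ ∨ Z = ⊤) :
    ENNReal.ofReal C * (ENNReal.ofReal P1 * (S1 + S2) + ENNReal.ofReal P2 * Z ^ ((1:ℝ) / 2)) = ⊤ := by
  have c0 : ENNReal.ofReal C ≠ 0 := by simpa using hC
  have p0 : ENNReal.ofReal P1 ≠ 0 := by simpa using hP1
  have q0 : ENNReal.ofReal P2 ≠ 0 := by simpa using hP2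
  rcases h with rfl | rfl | rfl
  · rw [top_add, ENNReal.mul_top p0, top_add, ENNReal.mul_top c0]
  · rw [add_top, ENNReal.mul_top p0, top_add, ENNReal.mul_top c0]
  · rw [ENNReal.top_rpow_of_pos (by norm_num), ENNReal.mul_top q0, add_top, ENNReal.mul_top c0]

theorem refined_core {θ : ℝ} (h0 : 0 < θ) (h1 : θ < 1 / 2) : ∃ C : ℝ, 0 < C ∧ ∀ m τ : ℝ, ∀ u F : ℝ → 𝓢(E2, ℂ), Continuous u → Continuous F →
      (∀ t ∈ Set.Icc (0 : ℝ) (Real.exp τ), ∀ x : E2, HasDerivAt (fun σ => (u σ) x)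
        (-Complex.I * (whithamOp2 (Real.exp m) (⇑(u t)) x + (F t) x)) t) →
      (∫⁻ t in Set.Ioc (0 : ℝ) (Real.exp τ), eLpNorm (⇑(u t)) ⊤ volume ^ 2) ^ ((1 : ℝ) / 2)
        ≤ ENNReal.ofReal C *
          (ENNReal.ofReal (Real.exp m ^ (-(1 : ℝ) / 6 + 5 * θ / 36) * Real.exp τ ^ ((1 : ℝ) / 6 + 5 * θ / 18)) *
            ((⨆ t ∈ Set.Icc (0 : ℝ) (Real.exp τ), eLpNorm (fmul2 (sy (Real.exp (m / 2)) 0 θ 0) (⇑(u t))) 2 volume) +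
              (⨆ t ∈ Set.Icc (0 : ℝ) (Real.exp τ), eLpNorm (fmul2 (sy (Real.exp (m / 2)) ((1 : ℝ) / 2 - θ / 3) (2 * θ) ((3 : ℝ) / 4)) (⇑(u t))) 2 volume))
          + ENNReal.ofReal (Real.exp m ^ (-(1 : ℝ) / 3 + θ / 9) * Real.exp τ ^ ((1 : ℝ) / 3 + 2 * θ / 9)) *
            (∫⁻ t in Set.Ioc (0 : ℝ) (Real.exp τ),
              eLpNorm (fmul2 (sy (Real.exp (m / 2)) (-(1 : ℝ) / 2 - θ / 3) θ ((3 : ℝ) / 4)) (⇑(F t))) 2 volume ^ 2) ^ ((1 : ℝ) / 2)) := by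
  obtain ⟨K, hK, hper⟩ := per_ann h0 h1
  set W := ∑' k, wt θ k with hWd
  have hW : 0 ≤ W := tsum_nonneg fun k => (wt_pos θ k).le
  refine ⟨W * Real.sqrt K + 1, by positivity, ?_⟩
  intro m τ u F hu hF heq
  set S1 := ⨆ t ∈ Set.Icc (0 : ℝ) (Real.exp τ), eLpNorm (fmul2 (sy (Real.exp (m / 2)) 0 θ 0) (⇑(u t))) 2 volume with hS1
  set S2 := ⨆ t ∈ Set.Icc (0 : ℝ) (Real.exp τ), eLpNorm (fmul2 (sy (Real.exp (m / 2)) ((1 : ℝ) / 2 - θ / 3) (2 * θ) ((3 : ℝ) / 4)) (⇑(u t))) 2 volume with hS2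
  set Z := ∫⁻ t in Set.Ioc (0 : ℝ) (Real.exp τ),
      eLpNorm (fmul2 (sy (Real.exp (m / 2)) (-(1 : ℝ) / 2 - θ / 3) θ ((3 : ℝ) / 4)) (⇑(F t))) 2 volume ^ 2 with hZd
  by_cases htop : S1 = ⊤ ∨ S2 = ⊤ ∨ Z = ⊤
  · rw [top_alg (by positivity) (by positivity) (by positivity) htop]; exact le_top
  push Not at htop
  obtain ⟨t1, t2, t3⟩ := htop
  refine final_alg hW hK.le (by positivity) (by positivity) t1 t2 t3 ?_
  obtain ⟨G1, hG1, hb1⟩ := sch_bound (four_cont hu) 0 (Real.exp τ)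
  obtain ⟨G2, hG2, hb2⟩ := sch_bound (four_cont hF) 0 (Real.exp τ)
  have hUc := sch_cont (four_cont hu)
  have hFc := sch_cont (four_cont hF)
  refine (lintegral_mono fun t => pow_le_pow_left' (linf_sum u t) 2).trans ?_
  refine sum_bound h0 (fun k t => ⨆ x, ‖pn (Real.exp (dy k)) (fun t ξ => (𝓕 (u t) : 𝓢(E2, ℂ)) ξ) t x‖ₑ)
    (fun k => pn_sup_meas _ hUc) _ _ (by positivity) fun k => ?_
  refine (hper (dy k) m τ (fun t ξ => (𝓕 (u t) : 𝓢(E2, ℂ)) ξ) (fun t ξ => (𝓕 (F t) : 𝓢(E2, ℂ)) ξ) hUc hFc (G1 + G2)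
    ?_ ?_ ?_ (S1.toReal ^ 2) (S2.toReal ^ 2) Z.toReal (by positivity) (by positivity) (by positivity) ?_ ?_ ?_).trans_eq ?_
  · intro t ht ξ
    have := hb1 t ht ξ
    rw [pow_zero, one_mul] at this; linarith
  · intro t ht ξ
    have := hb2 t ht ξ
    rw [pow_zero, one_mul] at this; linarith
  · intro a t ha hat ht ξ
    rw [Real.exp_half]
    exact duhamel (Real.exp_pos m) hu hF heq a t ha hat ht ξ
  · intro t ht
    refine bound_of t1 rfl ?_ (le_iSup₂ (f := fun t (_ : t ∈ Set.Icc (0 : ℝ) (Real.exp τ)) => eLpNorm (fmul2 (sy (Real.exp (m / 2)) 0 θ 0) (⇑(u t))) 2 volume) t ht)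
    have := ann_exp (u t) (α := 0) (β := θ) (γ := 0) m (dy k) (by norm_num) (by norm_num) h0.le (by linarith) le_rfl (by norm_num)
    refine le_trans (le_of_eq ?_) this
    congr 4; ring
  · intro t ht
    refine bound_of t2 rfl ?_ (le_iSup₂ (f := fun t (_ : t ∈ Set.Icc (0 : ℝ) (Real.exp τ)) => eLpNorm (fmul2 (sy (Real.exp (m / 2)) ((1 : ℝ) / 2 - θ / 3) (2 * θ) ((3 : ℝ) / 4)) (⇑(u t))) 2 volume) t ht)
    have := ann_exp (u t) (α := (1 : ℝ) / 2 - θ / 3) (β := 2 * θ) (γ := (3 : ℝ) / 4) m (dy k) (by linarith) (by linarith) (by linarith) (by linarith) (by norm_num) (by norm_num)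
    refine le_trans (le_of_eq ?_) this
    congr 4; ring
  · refine bound_int (Real.exp_pos _).le _ (fun t => integral_nonneg fun ξ => by positivity) _ _ (fun t => ?_) t3
    have := ann_exp (F t) (α := -(1 : ℝ) / 2 - θ / 3) (β := θ) (γ := (3 : ℝ) / 4) m (dy k) (by linarith) (by linarith) (by linarith) (by linarith) (by norm_num) (by norm_num)
    refine le_trans (le_of_eq ?_) this
    congr 4; ring
  · congr 1
    have e1 : Real.exp ((-1 / 3 + 5 * θ / 18) * m + (1 / 3 + 5 * θ / 9) * τ) =
        (Real.exp m ^ (-(1 : ℝ) / 6 + 5 * θ / 36) * Real.exp τ ^ ((1 : ℝ) / 6 + 5 * θ / 18)) ^ 2 := by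
      rw [← Real.exp_mul, ← Real.exp_mul, ← Real.exp_add, ← Real.exp_nat_mul]; congr 1; push_cast; ring
    have e2 : Real.exp ((-2 / 3 + 2 * θ / 9) * m + (2 / 3 + 4 * θ / 9) * τ) =
        (Real.exp m ^ (-(1 : ℝ) / 3 + θ / 9) * Real.exp τ ^ ((1 : ℝ) / 3 + 2 * θ / 9)) ^ 2 := by
      rw [← Real.exp_mul, ← Real.exp_mul, ← Real.exp_add, ← Real.exp_nat_mul]; congr 1; push_cast; ring
    have e3 : Real.exp (-(2 * θ / 3) * |dy k|) = wt θ k ^ 2 := by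
      unfold wt
      rw [← Real.exp_nat_mul]; congr 1; push_cast; ring
    rw [e1, e2, e3]; ring

/-- Refined Strichartz estimate for the linear Whitham-type equation
`i∂_t u − (1/√μ) m₂(√μ D) u = F` in dimension two (Corollary 3.3, `d = 2`). -/
theorem refined_strichartz_whitham_2d :
    ∃ θ₀ : ℝ, 0 < θ₀ ∧
      ∀ θ : ℝ, 0 < θ → θ < θ₀ →
        ∃ C : ℝ, 0 < C ∧
          ∀ μ : ℝ, 0 < μ → μ ≤ 1 → ∀ T : ℝ, 0 < T →
            ∀ u F : ℝ → 𝓢(E2, ℂ), Continuous u → Continuous F →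
              -- the equation `i ∂_t u − (1/√μ) m₂(√μ D) u = F`, i.e.
              -- `∂_t u = −i((1/√μ) m₂(√μ D) u + F)`, holds on `[0,T]`
              (∀ t ∈ Set.Icc (0 : ℝ) T, ∀ x : E2,
                HasDerivAt (fun τ => (u τ) x)
                  (-Complex.I * (whithamOp2 μ (⇑(u t)) x + (F t) x)) t) →
              (∫⁻ t in Set.Ioc (0 : ℝ) T, eLpNorm (⇑(u t)) ⊤ volume ^ 2) ^ ((1 : ℝ) / 2)
                ≤ ENNReal.ofReal C *
                  (ENNReal.ofReal
                      (μ ^ (-(1 : ℝ) / 6 + 5 * θ / 36) * T ^ ((1 : ℝ) / 6 + 5 * θ / 18)) *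
                    ((⨆ t ∈ Set.Icc (0 : ℝ) T,
                        eLpNorm (fmul2 (fun ξ => jap ‖ξ‖ ^ θ) (⇑(u t))) 2 volume) +
                      (⨆ t ∈ Set.Icc (0 : ℝ) T,
                        eLpNorm
                          (fmul2 (fun ξ => ‖ξ‖ ^ ((1 : ℝ) / 2 - θ / 3) *
                              jap ‖ξ‖ ^ (2 * θ) * jap (Real.sqrt μ * ‖ξ‖) ^ ((3 : ℝ) / 4))
                            (⇑(u t))) 2 volume))
                  + ENNReal.ofReal
                      (μ ^ (-(1 : ℝ) / 3 + θ / 9) * T ^ ((1 : ℝ) / 3 + 2 * θ / 9)) *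
                    (∫⁻ t in Set.Ioc (0 : ℝ) T,
                      eLpNorm
                        (fmul2 (fun ξ => ‖ξ‖ ^ (-(1 : ℝ) / 2 - θ / 3) * jap ‖ξ‖ ^ θ *
                            jap (Real.sqrt μ * ‖ξ‖) ^ ((3 : ℝ) / 4)) (⇑(F t))) 2 volume ^ 2) ^
                      ((1 : ℝ) / 2)) := by
  refine ⟨1 / 2, by norm_num, fun θ h0 h1 => ?_⟩
  obtain ⟨C, hC, h⟩ := refined_core h0 h1
  refine ⟨C, hC, ?_⟩
  intro μ hμ _ T hT u F hu hF heq
  obtain ⟨m, rfl⟩ : ∃ m, Real.exp m = μ := ⟨_, Real.exp_log hμ⟩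
  obtain ⟨τ, rfl⟩ : ∃ m, Real.exp m = T := ⟨_, Real.exp_log hT⟩
  have key := h m τ u F hu hF heq
  have e : sy (Real.exp (m / 2)) 0 θ 0 = fun ξ => jap ‖ξ‖ ^ θ := by
    funext ξ
    simp only [sy, Real.rpow_zero, one_mul, mul_one]
  rw [e] at key
  rw [← Real.exp_half]
  exact key
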